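/- arXiv:2008.12944 — 4 statements merged into one kernel-verified Lean document; each statement's English description precedes it below -/
import Mathlib

section
/- Let k be an algebraically closed field and S = k[x_1,...,x_r]. Suppose D = (p_{ij}) is an 8×8 matrix with entries in S satisfying the standard conditions, and suppose moreover that either: (A) p_{ij} = 0 unless (i = 1 and 2 ≤ j ≤ 8) or (2 ≤ i ≤ 3 and 4 ≤ j ≤ 8) or (4 ≤ i ≤ 6 and 7 ≤ j ≤ 8); or (B) p_{ij} = 0 unless (1 ≤ i ≤ 2 and 3 ≤ j ≤ 8) or (3 ≤ i ≤ 5 and 6 ≤ j ≤ 8) or (6 ≤ i ≤ 7 and j = 8). Then r < 3, i.e., r ≤ 2. -/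
open MvPolynomial

/-- The "standard conditions" on an `8 × 8` matrix `D = (p_{ij})` with entries in
`S = k[x_1, ..., x_r]`:
(1) `D` is strictly upper triangular;
(2) `D² = 0`;
(3) every entry vanishes at the origin;
(4) for every nonzero point `a ∈ k^r` the evaluated matrix `D(a)` has rank `4`;
(5) there is a nonincreasing `8`-tuple of integers `(d_1, ..., d_8)` such that each `p_{ij}`
is homogeneous of degree `d_i - d_j + 1` (the zero polynomial being homogeneous of
any degree). -/
def StandardConditions {k : Type*} [Field k] {r : ℕ}
    (D : Matrix (Fin 8) (Fin 8) (MvPolynomial (Fin r) k)) : Prop :=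
  (∀ i j : Fin 8, j ≤ i → D i j = 0) ∧
  D * D = 0 ∧
  (∀ i j : Fin 8, eval (0 : Fin r → k) (D i j) = 0) ∧
  (∀ a : Fin r → k, a ≠ 0 → (D.map (eval a)).rank = 4) ∧
  (∃ d : Fin 8 → ℤ, Antitone d ∧
    ∀ i j : Fin 8, D i j = 0 ∨
      (0 ≤ d i - d j + 1 ∧ (D i j).IsHomogeneous (d i - d j + 1).toNat))

/-!
Let `S = k[x₁, …, x_r]` with `r ≥ 3`. A complex `S^Q → S^R → S^P` with `|R| = |P| + |Q|` that is
injective on the left and surjective on the right at every point other than the origin is exact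
off the origin as a complex of free sheaves. The obstruction to the right-hand map being onto over
`S` lies in `H¹` of the punctured affine space, which vanishes because `r ≥ 3`; this is a Čech
computation with powers of three variables. So the right-hand map is onto, which is absurd when its
entries vanish at the origin. The same principle applied to `S → S² → S` shows that two polynomials
without common zeros off the origin generate the unit ideal.

Hence a differential which is strictly block triangular with three levels, the middle one of half
the total size, cannot exist. A differential with levels of sizes `1, 2, 3, 2` is brought to this
shape by a change of basis in a level of size 2. Let `a` be its block from level 0 to level 1, `E`
the one from level 1 to level 2 and `G` the one from level 2 to level 3. If `a ≠ 0`, then `aE = 0`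
makes `E` of rank one, and an element of `SL₂(S)` clears one row of `E` and one entry of `a`. If
`a = 0`, then `G` has rank one, and an element of `SL₂(S)` clears one of its columns. Sizes
`2, 3, 2, 1` follow by transposing.
-/

section

open Matrix

section Rank

variable {K m n : Type*} [Field K] [Fintype n]

theorem one_le_rank_of_ne_zero {A : Matrix m n K} (hA : A ≠ 0) : 1 ≤ A.rank := by
  classical
  refine Submodule.one_le_finrank_iff.2 fun h => hA ?_
  rwa [LinearMap.range_eq_bot, ← toLin'_apply', LinearEquiv.map_eq_zero_iff] at h

theorem mul_eq_mul_of_rank_le_one {A : Matrix m n K}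
    (hA : A.rank ≤ 1) (i i' : m) (j j' : n) : A i j * A i' j' = A i j' * A i' j := by
  by_contra h
  have hunit : IsUnit (A.submatrix ![i, i'] ![j, j']) := by
    rw [isUnit_iff_isUnit_det, isUnit_iff_ne_zero, det_fin_two]
    exact sub_ne_zero.2 h
  have hle := (rank_submatrix_le A ![i, i'] ![j, j']).trans hA
  rw [rank_of_isUnit _ hunit, Fintype.card_fin] at hle
  omega

variable [Finite m]

theorem rank_le_rank_restrict_cols_add_card (A : Matrix m n K) (q : n → Prop) [DecidablePred q]
    (t : Finset n) (h : ∀ i, ∀ j ∉ t, ¬ q j → A i j = 0) :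
    A.rank ≤ (A.submatrix id ((↑) : Subtype q → n)).rank + t.card := by
  classical
  have hle : Submodule.span K (Set.range A.col) ≤
      Submodule.span K (Set.range (A.submatrix id ((↑) : Subtype q → n)).col) ⊔
        Submodule.span K (t.image A.col : Set (m → K)) := by
    rw [Submodule.span_le, Set.range_subset_iff]
    intro j
    by_cases hjt : j ∈ t
    · exact Submodule.mem_sup_right <| Submodule.subset_span <|
        Finset.mem_coe.2 (Finset.mem_image_of_mem A.col hjt)
    by_cases hjq : q j
    · exact Submodule.mem_sup_left <| Submodule.subset_span ⟨⟨j, hjq⟩, rfl⟩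
    · have hj : A.col j = 0 := funext fun i => h i j hjt hjq
      exact hj ▸ Submodule.zero_mem _
  rw [rank_eq_finrank_span_cols, rank_eq_finrank_span_cols]
  calc _ ≤ _ := Submodule.finrank_mono hle
    _ ≤ _ := Submodule.finrank_add_le_finrank_add_finrank _ _
    _ ≤ _ := Nat.add_le_add_left
      ((finrank_span_finset_le_card _).trans Finset.card_image_le) _

theorem rank_le_rank_restrict_rows_add_card (A : Matrix m n K) (p : m → Prop) (s : Finset m)
    (h : ∀ i ∉ s, ¬ p i → ∀ j, A i j = 0) :
    A.rank ≤ (A.submatrix ((↑) : Subtype p → m) id).rank + s.card := by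
  classical
  have := Fintype.ofFinite m
  simpa only [rank_transpose, ← transpose_submatrix] using
    rank_le_rank_restrict_cols_add_card Aᵀ p s fun j i hi hip => h i hi hip j

theorem rank_le_card_add_card_of_eq_zero (A : Matrix m n K) (s : Finset m) (t : Finset n)
    (h : ∀ i ∉ s, ∀ j ∉ t, A i j = 0) : A.rank ≤ s.card + t.card := by
  classical
  have := Fintype.ofFinite m
  have hrows := rank_le_rank_restrict_cols_add_card A (· ∉ t) t fun i j hj hjt => (hjt hj).elim
  have hcols := rank_le_rank_restrict_rows_add_card
    (A.submatrix id ((↑) : {j // j ∉ t} → n)) (fun _ => False) s fun i hi _ j => h i hi j j.2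
  have hempty := rank_le_card_height ((A.submatrix id ((↑) : {j // j ∉ t} → n)).submatrix
    ((↑) : {_i : m // False} → m) id)
  rw [Fintype.card_eq_zero] at hempty
  omega

end Rank

theorem submatrix_mul_submatrix_of_injective {R ι l m n o s : Type*} [NonUnitalNonAssocSemiring R]
    [Fintype ι] [Fintype m] {A : Matrix l ι R} {B : Matrix ι o R} {p : m → ι}
    (hp : Function.Injective p) (r : n → l) (q : s → o)
    (h : ∀ i, ∀ x ∉ Set.range p, ∀ j, A (r i) x = 0 ∨ B x (q j) = 0) :
    A.submatrix r p * B.submatrix p q = (A * B).submatrix r q :=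
  Matrix.ext fun i j => Fintype.sum_of_injective p hp _ _
    (fun x hx => (h i x hx j).elim (mul_eq_zero_of_left · _) (mul_eq_zero_of_right _))
    fun _ => rfl

/-- A square matrix is strictly block triangular for the level function `b` if its nonzero entries
lie in positions where the column has strictly larger level than the row. -/
def IsStrictlyBlockTriangular {ι R α : Type*} [Zero R] [LE α] (D : Matrix ι ι R) (b : ι → α) :
    Prop :=
  ∀ i j, b j ≤ b i → D i j = 0

theorem IsStrictlyBlockTriangular.map {F ι R S α : Type*} [Zero R] [Zero S] [FunLike F R S]
    [ZeroHomClass F R S] [LE α] {D : Matrix ι ι R} {b : ι → α}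
    (hD : IsStrictlyBlockTriangular D b) (f : F) : IsStrictlyBlockTriangular (D.map f) b :=
  fun i j hij => by rw [map_apply, hD i j hij, map_zero]

theorem IsStrictlyBlockTriangular.fromBlocks {m n S α : Type*} [Zero S] [LE α]
    {A : Matrix m m S} {B : Matrix m n S} {C : Matrix n m S} {E : Matrix n n S} {b : m → α}
    {c : n → α} (hA : IsStrictlyBlockTriangular A b) (hB : ∀ i j, c j ≤ b i → B i j = 0)
    (hC : ∀ i j, b j ≤ c i → C i j = 0) (hE : IsStrictlyBlockTriangular E c) :
    IsStrictlyBlockTriangular (Matrix.fromBlocks A B C E) (Sum.elim b c)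
  | .inl i, .inl j => hA i j
  | .inl i, .inr j => hB i j
  | .inr i, .inl j => hC i j
  | .inr i, .inr j => hE i j

theorem IsStrictlyBlockTriangular.toBlock_mul_toBlock {ι R α : Type*} [CommRing R] [LinearOrder α]
    [Fintype ι] {D : Matrix ι ι R} {b : ι → α} (hD : IsStrictlyBlockTriangular D b)
    (hDD : D * D = 0) {a m c : α} (ham : a ⋖ m) (hmc : m ⋖ c) :
    D.toBlock (b · = a) (b · = m) * D.toBlock (b · = m) (b · = c) = 0 := by
  have hout (i : {i // b i = a}) (x : ι) (hx : x ∉ Set.range ((↑) : {x // b x = m} → ι))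
      (j : {j // b j = c}) : D i x = 0 ∨ D x j = 0 := by
    refine (le_or_gt (b x) a).imp (fun h => hD i x (h.trans_eq i.2.symm)) fun h => hD x j ?_
    have hxm : b x ≠ m := fun hxm => hx ⟨⟨x, hxm⟩, rfl⟩
    exact j.2.trans_le <| hmc.ge_of_gt <| (ham.ge_of_gt h).lt_of_ne' hxm
  exact (submatrix_mul_submatrix_of_injective Subtype.val_injective _ _ hout).trans
    (congrArg (Matrix.submatrix · _ _) hDD)

section ThreeLevels

variable {ι K : Type*} [Field K] [Fintype ι] {b : ι → Fin 3}

theorem IsStrictlyBlockTriangular.rank_le_rank_toBlock_zero_one_add {D : Matrix ι ι K}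
    (hD : IsStrictlyBlockTriangular D b) :
    D.rank ≤ (D.toBlock (b · = 0) (b · = 1)).rank + Fintype.card {i // b i = 2} := by
  have hcols := rank_le_rank_restrict_cols_add_card D (b · = 1) (Finset.univ.filter (b · = 2))
    fun i j hj hj' => hD i j <| by rw [Finset.mem_filter_univ] at hj; omega
  have hrows := rank_le_rank_restrict_rows_add_card
    (D.submatrix id ((↑) : {j // b j = 1} → ι)) (b · = 0) ∅
    fun i _ hi j => hD i j <| by have := j.2; omega
  rw [Finset.card_empty, add_zero] at hrows
  rw [Fintype.card_subtype]
  exact hcols.trans (Nat.add_le_add_right hrows _)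

theorem IsStrictlyBlockTriangular.rank_le_rank_toBlock_one_two_add {D : Matrix ι ι K}
    (hD : IsStrictlyBlockTriangular D b) :
    D.rank ≤ (D.toBlock (b · = 1) (b · = 2)).rank + Fintype.card {i // b i = 0} := by
  have hrows := rank_le_rank_restrict_rows_add_card D (b · = 1) (Finset.univ.filter (b · = 0))
    fun i hi hi' j => hD i j <| by rw [Finset.mem_filter_univ] at hi; omega
  have hcols := rank_le_rank_restrict_cols_add_card
    (D.submatrix ((↑) : {i // b i = 1} → ι) id) (b · = 2) ∅
    fun i j _ hj => hD i j <| by have := i.2; omega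
  rw [Finset.card_empty, add_zero] at hcols
  rw [Fintype.card_subtype]
  exact hrows.trans (Nat.add_le_add_right hcols _)

end ThreeLevels

section Cech

variable {R A B C : Type*} [CommRing R] [AddCommGroup A] [Module R A] [AddCommGroup B] [Module R B]
  [AddCommGroup C] [Module R C] {f : B →ₗ[R] A} {g : C →ₗ[R] B} {s t u : R}

theorem mem_range_of_two_smul_mem_range (hg : Function.Injective g) (hs : IsSMulRegular B s)
    (hst : ∀ c d : C, t • c = s • d → ∃ e, c = s • e) {b : B}
    (hsb : s • b ∈ LinearMap.range g) (htb : t • b ∈ LinearMap.range g) :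
    b ∈ LinearMap.range g := by
  obtain ⟨c, hc⟩ := hsb
  obtain ⟨d, hd⟩ := htb
  obtain ⟨e, rfl⟩ : ∃ e, c = s • e := hst c d <| hg <| by
    rw [map_smul, map_smul, hc, hd, smul_comm]
  exact ⟨e, hs <| by simpa only [map_smul] using hc⟩

-- The Čech argument for `H¹ = 0`: differences of local preimages of `a` form a 1-cocycle in `C`.
theorem mem_range_of_three_smul_mem_range (hfg : Function.Exact g f) (hg : Function.Injective g)
    (hs : IsSMulRegular A s) (hst : ∀ b d : B, t • b = s • d → ∃ e, b = s • e)
    (hstu : ∀ c d e : C, u • c = s • d + t • e → ∃ d' e', c = s • d' + t • e') {a : A}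
    (hsa : s • a ∈ LinearMap.range f) (hta : t • a ∈ LinearMap.range f)
    (hua : u • a ∈ LinearMap.range f) : a ∈ LinearMap.range f := by
  obtain ⟨bs, hbs⟩ := hsa
  obtain ⟨bt, hbt⟩ := hta
  obtain ⟨bu, hbu⟩ := hua
  obtain ⟨cst, hcst⟩ : ∃ c, g c = t • bs - s • bt := (hfg _).1 <| by
    rw [map_sub, map_smul, map_smul, hbs, hbt, smul_comm, sub_self]
  obtain ⟨csu, hcsu⟩ : ∃ c, g c = u • bs - s • bu := (hfg _).1 <| by
    rw [map_sub, map_smul, map_smul, hbs, hbu, smul_comm, sub_self]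
  obtain ⟨ctu, hctu⟩ : ∃ c, g c = u • bt - t • bu := (hfg _).1 <| by
    rw [map_sub, map_smul, map_smul, hbt, hbu, smul_comm, sub_self]
  have cocycle : u • cst = s • -ctu + t • csu := hg <| by
    simp only [map_add, map_smul, map_neg, hcst, hcsu, hctu]
    module
  obtain ⟨d, e, rfl⟩ := hstu _ _ _ cocycle
  have glue : t • (bs - g e) = s • (bt + g d) := by
    have h : t • bs - s • bt = s • g d + t • g e := by rw [← hcst, map_add, map_smul, map_smul]
    rw [smul_sub, smul_add, sub_eq_iff_eq_add]
    rw [sub_eq_iff_eq_add] at h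
    rw [h]
    abel
  obtain ⟨b, hb⟩ := hst _ _ glue
  refine ⟨b, hs ?_⟩
  change s • f b = s • a
  rw [← map_smul, ← hb, map_sub, hbs, hfg.apply_apply_eq_zero, sub_zero]

end Cech

section Variables

variable {σ k ι : Type*} [Field k] {x y z : σ}

theorem exists_eq_X_pow_smul_of_X_pow_smul_eq (hxy : x ≠ y) (n m : ℕ)
    (a b : ι → MvPolynomial σ k)
    (h : (X y ^ m : MvPolynomial σ k) • a = (X x ^ n : MvPolynomial σ k) • b) :
    ∃ c : ι → MvPolynomial σ k, a = (X x ^ n : MvPolynomial σ k) • c := by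
  have hxy' : ¬ (X x : MvPolynomial σ k) ∣ X y ^ m := fun hdvd =>
    hxy (X_dvd_X.1 (X_prime.dvd_of_dvd_pow hdvd))
  choose c hc using fun i =>
    (X_prime.pow_dvd_of_dvd_mul_left n hxy' ⟨b i, congrFun h i⟩ : X x ^ n ∣ a i)
  exact ⟨c, funext hc⟩

theorem mem_span_X_pow_pair_of_X_pow_mul_mem (hxz : x ≠ z) (hyz : y ≠ z) (n m l : ℕ)
    {w : MvPolynomial σ k}
    (h : X z ^ l * w ∈ Ideal.span {(X x : MvPolynomial σ k) ^ n, X y ^ m}) :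
    w ∈ Ideal.span {(X x : MvPolynomial σ k) ^ n, X y ^ m} := by
  simp only [X_pow_eq_monomial, ← Set.image_pair (fun s => monomial s (1 : k)),
    mem_ideal_span_monomial_image] at h ⊢
  intro d hd
  obtain ⟨e, he, hle⟩ := h (Finsupp.single z l + d) <| by
    rw [mem_support_iff, coeff_monomial_mul, one_mul]
    exact mem_support_iff.1 hd
  refine ⟨e, he, ?_⟩
  rcases he with rfl | rfl
  · simpa [Finsupp.single_le_iff, Finsupp.single_apply, hxz.symm] using hle
  · simpa [Finsupp.single_le_iff, Finsupp.single_apply, hyz.symm] using hle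

theorem exists_eq_X_pow_smul_add_of_X_pow_smul_eq (hxz : x ≠ z) (hyz : y ≠ z) (n m l : ℕ)
    (w a b : ι → MvPolynomial σ k)
    (h : (X z ^ l : MvPolynomial σ k) • w =
      (X x ^ n : MvPolynomial σ k) • a + (X y ^ m : MvPolynomial σ k) • b) :
    ∃ c d : ι → MvPolynomial σ k,
      w = (X x ^ n : MvPolynomial σ k) • c + (X y ^ m : MvPolynomial σ k) • d := by
  have hw (i : ι) : ∃ c d, c * X x ^ n + d * X y ^ m = w i :=
    Ideal.mem_span_pair.1 <| mem_span_X_pow_pair_of_X_pow_mul_mem hxz hyz n m l <|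
      Ideal.mem_span_pair.2 ⟨a i, b i, by
        simpa only [mul_comm, Pi.smul_apply, Pi.add_apply, smul_eq_mul] using! (congrFun h i).symm⟩
  choose c d hcd using hw
  exact ⟨c, d, funext fun i => by simp [← hcd i, mul_comm]⟩

end Variables

section FullRank

variable {σ k P Q R : Type*} [Finite σ] [Field k] [IsAlgClosed k] [Fintype P] [Fintype Q]
  [Fintype R] {M : Matrix P R (MvPolynomial σ k)} {N : Matrix R Q (MvPolynomial σ k)}

theorem det_mul_mem_colon_range_mulVecLin {S : Type*} [CommRing S] [DecidableEq P]
    (M : Matrix P R S) (L : Matrix R P S) :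
    (M * L).det ∈ (LinearMap.range M.mulVecLin).colon ⊤ := by
  refine Submodule.mem_colon.2 fun v _ => ⟨L *ᵥ (M * L).adjugate *ᵥ v, ?_⟩
  rw [mulVecLin_apply, mulVec_mulVec, mulVec_mulVec, mul_adjugate, smul_mulVec, one_mulVec]

theorem X_mem_radical_colon_range_mulVecLin
    (hM : ∀ a : σ → k, a ≠ 0 → Fintype.card P ≤ (M.map (eval a)).rank) (x : σ) :
    X x ∈ ((LinearMap.range M.mulVecLin).colon ⊤).radical := by
  classical
  rw [← vanishingIdeal_zeroLocus_eq_radical (K := k)]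
  intro a ha
  suffices a = 0 by simp [this]
  by_contra ha0
  have hrange : LinearMap.range (M.map (eval a)).mulVecLin = ⊤ :=
    Submodule.eq_top_of_finrank_eq <| by
      rw [Module.finrank_fintype_fun_eq_card]
      exact (rank_le_card_height _).antisymm (hM a ha0)
  obtain ⟨L, hL⟩ := mulVec_surjective_iff_exists_right_inverse.1 (LinearMap.range_eq_top.1 hrange)
  let L' : Matrix R P (MvPolynomial σ k) := L.map C
  have hL' : L'.map (eval a) = L := by ext; simp [L']
  have hdet : eval a (M * L').det = 0 := ha _ (det_mul_mem_colon_range_mulVecLin M L')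
  rw [RingHom.map_det, RingHom.mapMatrix_apply, Matrix.map_mul, hL', hL, det_one] at hdet
  exact one_ne_zero hdet

theorem exists_X_pow_smul_mem_range_mulVecLin
    (hM : ∀ a : σ → k, a ≠ 0 → Fintype.card P ≤ (M.map (eval a)).rank) (x : σ) :
    ∃ n : ℕ, ∀ v, (X x ^ n : MvPolynomial σ k) • v ∈ LinearMap.range M.mulVecLin := by
  obtain ⟨n, hn⟩ := X_mem_radical_colon_range_mulVecLin hM x
  exact ⟨n, fun v => Submodule.mem_colon.1 hn v trivial⟩

theorem exists_mul_eq_X_pow_smul_one [DecidableEq P]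
    (hM : ∀ a : σ → k, a ≠ 0 → Fintype.card P ≤ (M.map (eval a)).rank) (x : σ) :
    ∃ (n : ℕ) (L : Matrix R P (MvPolynomial σ k)), M * L = (X x ^ n : MvPolynomial σ k) • 1 := by
  obtain ⟨n, hn⟩ := exists_X_pow_smul_mem_range_mulVecLin hM x
  choose L hL using fun j => hn (Pi.single j 1)
  refine ⟨n, (of L)ᵀ, Matrix.ext fun i j => (congrFun (hL j) i).trans ?_⟩
  rw [Pi.smul_apply, Matrix.smul_apply, one_apply, Pi.single_apply]

theorem exists_left_mul_eq_X_pow_smul_one [DecidableEq Q]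
    (hN : ∀ a : σ → k, a ≠ 0 → Fintype.card Q ≤ (N.map (eval a)).rank) (x : σ) :
    ∃ (n : ℕ) (L : Matrix Q R (MvPolynomial σ k)), L * N = (X x ^ n : MvPolynomial σ k) • 1 := by
  obtain ⟨n, L, hL⟩ := exists_mul_eq_X_pow_smul_one (M := Nᵀ)
    (fun a ha => by simpa only [transpose_map, rank_transpose] using hN a ha) x
  exact ⟨n, Lᵀ, by simpa using congrArg transpose hL⟩

-- The square matrix with row blocks `M` and `L` is nonsingular, since multiplying it by the one
-- with column blocks `H` and `N` gives a block triangular matrix; both sides have equal images.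
theorem mulVec_mulVec_eq_smul_of_mulVec_eq_zero {S : Type*} [CommRing S] [IsDomain S]
    [DecidableEq P] [DecidableEq Q] {M : Matrix P R S} {N : Matrix R Q S} {H : Matrix R P S}
    {L : Matrix Q R S} {s t : S} (hcard : Fintype.card R = Fintype.card P + Fintype.card Q)
    (hMN : M * N = 0) (hMH : M * H = s • 1) (hLN : L * N = t • 1) (hs : s ≠ 0) (ht : t ≠ 0)
    {v : R → S} (hv : M *ᵥ v = 0) : N *ᵥ L *ᵥ v = t • v := by
  let e : P ⊕ Q ≃ R := Fintype.equivOfCardEq (by rw [Fintype.card_sum, hcard])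
  let F := (fromRows M L).submatrix id e
  have hF : F.det ≠ 0 := by
    have h : F * (fromCols H N).submatrix e id = fromBlocks (s • 1) 0 (L * H) (t • 1) := by
      rw [submatrix_mul_equiv, fromRows_mul_fromCols, hMN, hMH, hLN, submatrix_id_id]
    refine left_ne_zero_of_mul (b := ((fromCols H N).submatrix e id).det) ?_
    rw [← det_mul, h, det_fromBlocks_zero₁₂]
    simp [hs, ht]
  have hM0 : M *ᵥ (N *ᵥ L *ᵥ v - t • v) = 0 := by
    rw [mulVec_sub, mulVec_mulVec, hMN, zero_mulVec, mulVec_smul, hv, smul_zero, sub_zero]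
  have hL0 : L *ᵥ (N *ᵥ L *ᵥ v - t • v) = 0 := by
    rw [mulVec_sub, mulVec_mulVec, hLN, smul_mulVec, one_mulVec, mulVec_smul, sub_self]
  have hF0 : F *ᵥ ((N *ᵥ L *ᵥ v - t • v) ∘ e) = 0 := by
    rw [submatrix_mulVec_equiv, Function.comp_assoc, e.self_comp_symm, Function.comp_id,
      Function.comp_id, fromRows_mulVec, hM0, hL0, Sum.elim_zero_zero]
  exact sub_eq_zero.1 <| (e.surjective.injective_comp_right) <| eq_zero_of_mulVec_eq_zero hF hF0

end FullRank

theorem mulVecLin_injective_of_card_le_rank {σ k Q R : Type*} [Finite σ] [Nonempty σ] [Field k]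
    [IsAlgClosed k] [Fintype Q] [Finite R] {N : Matrix R Q (MvPolynomial σ k)}
    (hN : ∀ a : σ → k, a ≠ 0 → Fintype.card Q ≤ (N.map (eval a)).rank) :
    Function.Injective N.mulVecLin := by
  classical
  have := Fintype.ofFinite R
  obtain ⟨n, L, hL⟩ := exists_left_mul_eq_X_pow_smul_one hN (Classical.arbitrary σ)
  have hX : (X (Classical.arbitrary σ) ^ n : MvPolynomial σ k) ≠ 0 := pow_ne_zero n (X_ne_zero _)
  refine fun v w hvw => IsSMulRegular.of_ne_zero hX ?_
  simpa only [mulVecLin_apply, mulVec_mulVec, hL, smul_mulVec, one_mulVec] using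
    congrArg (L *ᵥ ·) hvw

section Exactness

variable {σ k P Q R : Type*} [Field k] [IsAlgClosed k] [Fintype P] [Fintype Q] [Fintype R]
  {M : Matrix P R (MvPolynomial σ k)} {N : Matrix R Q (MvPolynomial σ k)}

theorem exact_mulVecLin_of_card_le_rank [Finite σ] {x y : σ} (hxy : x ≠ y)
    (hcard : Fintype.card R = Fintype.card P + Fintype.card Q) (hMN : M * N = 0)
    (hM : ∀ a : σ → k, a ≠ 0 → Fintype.card P ≤ (M.map (eval a)).rank)
    (hN : ∀ a : σ → k, a ≠ 0 → Fintype.card Q ≤ (N.map (eval a)).rank) :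
    Function.Exact N.mulVecLin M.mulVecLin := by
  classical
  have : Nonempty σ := ⟨x⟩
  intro v
  refine ⟨fun hv => ?_, ?_⟩
  · obtain ⟨l, H, hH⟩ := exists_mul_eq_X_pow_smul_one hM x
    obtain ⟨n, L, hL⟩ := exists_left_mul_eq_X_pow_smul_one hN x
    obtain ⟨m, L', hL'⟩ := exists_left_mul_eq_X_pow_smul_one hN y
    have hX (z : σ) (i : ℕ) : (X z ^ i : MvPolynomial σ k) ≠ 0 := pow_ne_zero i (X_ne_zero z)
    exact mem_range_of_two_smul_mem_range (mulVecLin_injective_of_card_le_rank hN)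
      (IsSMulRegular.of_ne_zero (hX x n)) (exists_eq_X_pow_smul_of_X_pow_smul_eq hxy n m)
      ⟨_, mulVec_mulVec_eq_smul_of_mulVec_eq_zero hcard hMN hH hL (hX x l) (hX x n) hv⟩
      ⟨_, mulVec_mulVec_eq_smul_of_mulVec_eq_zero hcard hMN hH hL' (hX x l) (hX y m) hv⟩
  · rintro ⟨w, rfl⟩
    rw [mulVecLin_apply, mulVecLin_apply, mulVec_mulVec, hMN, zero_mulVec]

theorem mulVec_surjective_of_card_le_rank [Fintype σ] (hσ : 2 < Fintype.card σ)
    (hcard : Fintype.card R = Fintype.card P + Fintype.card Q) (hMN : M * N = 0)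
    (hM : ∀ a : σ → k, a ≠ 0 → Fintype.card P ≤ (M.map (eval a)).rank)
    (hN : ∀ a : σ → k, a ≠ 0 → Fintype.card Q ≤ (N.map (eval a)).rank) :
    Function.Surjective M.mulVec := by
  obtain ⟨x, y, z, hxy, hxz, hyz⟩ := Fintype.two_lt_card_iff.1 hσ
  have : Nonempty σ := ⟨x⟩
  obtain ⟨n, hn⟩ := exists_X_pow_smul_mem_range_mulVecLin hM x
  obtain ⟨m, hm⟩ := exists_X_pow_smul_mem_range_mulVecLin hM y
  obtain ⟨l, hl⟩ := exists_X_pow_smul_mem_range_mulVecLin hM z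
  exact fun v => mem_range_of_three_smul_mem_range
    (exact_mulVecLin_of_card_le_rank hxy hcard hMN hM hN) (mulVecLin_injective_of_card_le_rank hN)
    (IsSMulRegular.of_ne_zero (pow_ne_zero n (X_ne_zero x)))
    (exists_eq_X_pow_smul_of_X_pow_smul_eq hxy n m)
    (exists_eq_X_pow_smul_add_of_X_pow_smul_eq hxz hyz n m l) (hn v) (hm v) (hl v)

theorem isCoprime_of_forall_eval_ne_zero [Fintype σ] (hσ : 2 < Fintype.card σ)
    {p q : MvPolynomial σ k} (h : ∀ a : σ → k, a ≠ 0 → eval a p ≠ 0 ∨ eval a q ≠ 0) :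
    IsCoprime p q := by
  obtain ⟨w, hw⟩ := mulVec_surjective_of_card_le_rank hσ (M := !![p, q]) (N := !![-q; p]) rfl
    (by ext i j; simp [mul_comm])
    (fun a ha => one_le_rank_of_ne_zero fun h0 => (h a ha).elim
      (· (congrFun₂ h0 0 0)) (· (congrFun₂ h0 0 1)))
    (fun a ha => one_le_rank_of_ne_zero fun h0 => (h a ha).elim
      (· (congrFun₂ h0 1 0)) fun hq => hq <| by simpa using congrFun₂ h0 0 0) ![1]
  exact ⟨w 0, w 1, by
    simpa [mulVec, dotProduct, Fin.sum_univ_two, mul_comm] using congrFun hw 0⟩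

end Exactness

section RankOne

theorem exists_eq_mul_of_minors_eq_zero {S m : Type*} [CommRing S] [IsDomain S]
    [UniqueFactorizationMonoid S] {G : Matrix m (Fin 2) S}
    (hG : ∀ i j, G i 0 * G j 1 = G i 1 * G j 0) :
    ∃ (γ : m → S) (p q : S), ∀ i, G i 0 = γ i * p ∧ G i 1 = γ i * q := by
  by_cases hG0 : ∀ i, G i 0 = 0
  · exact ⟨fun i => G i 1, 0, 1, fun i => by simp [hG0 i]⟩
  obtain ⟨i₀, hi₀⟩ := not_forall.1 hG0
  obtain ⟨p, q, c, hpq, hp, hq⟩ :=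
    UniqueFactorizationMonoid.exists_reduced_factors (G i₀ 0) hi₀ (G i₀ 1)
  obtain ⟨hc, hp0⟩ : c ≠ 0 ∧ p ≠ 0 := mul_ne_zero_iff.1 (hp ▸ hi₀)
  have hprop (i : m) : p * G i 1 = q * G i 0 := mul_left_cancel₀ hc <| by
    rw [← mul_assoc, ← mul_assoc, hp, hq, hG i₀ i]
  choose γ hγ using fun i => hpq.dvd_of_dvd_mul_left ⟨G i 1, (hprop i).symm⟩
  refine ⟨γ, p, q, fun i => ⟨by rw [hγ, mul_comm], mul_left_cancel₀ hp0 ?_⟩⟩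
  rw [hprop, hγ]
  ring

variable {σ k m n : Type*} [Field k] [IsAlgClosed k] [Fintype σ]

theorem exists_SL2_mul_col_one_eq_zero (hσ : 2 < Fintype.card σ)
    {G : Matrix m (Fin 2) (MvPolynomial σ k)} (hG : ∀ i j, G i 0 * G j 1 = G i 1 * G j 0)
    (hG0 : ∀ x : σ → k, x ≠ 0 → G.map (eval x) ≠ 0) :
    ∃ W : SpecialLinearGroup (Fin 2) (MvPolynomial σ k), ∀ i, (G * W.1) i 1 = 0 := by
  obtain ⟨γ, p, q, h⟩ := exists_eq_mul_of_minors_eq_zero hG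
  have hpq : IsCoprime p q := isCoprime_of_forall_eval_ne_zero hσ fun x hx => by
    by_contra! hzero
    refine hG0 x hx (Matrix.ext fun i j => ?_)
    fin_cases j <;> simp [h, hzero]
  obtain ⟨W, hW0, hW1⟩ := hpq.symm.neg_left.exists_SL2_col 1
  refine ⟨W, fun i => ?_⟩
  change W.1 0 1 = -q at hW0
  change W.1 1 1 = p at hW1
  rw [mul_apply, Fin.sum_univ_two, hW0, hW1, (h i).1, (h i).2]
  ring

theorem exists_SL2_mul_row_one_eq_zero_and_vecMul (hσ : 2 < Fintype.card σ)
    {E : Matrix (Fin 2) n (MvPolynomial σ k)} {a : Fin 2 → MvPolynomial σ k} (ha : a ≠ 0)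
    (haE : a ᵥ* E = 0) (hE : ∀ x : σ → k, x ≠ 0 → E.map (eval x) ≠ 0) :
    ∃ W : SpecialLinearGroup (Fin 2) (MvPolynomial σ k),
      (∀ j, (W.1 * E) 1 j = 0) ∧ (a ᵥ* W⁻¹.1) 0 = 0 := by
  have hrel (j : n) : a 0 * E 0 j + a 1 * E 1 j = 0 := by
    rw [← Fin.sum_univ_two fun i => a i * E i j]
    exact congrFun haE j
  have hminor (i j : n) : E 0 i * E 1 j = E 1 i * E 0 j := by
    obtain h | h : a 0 ≠ 0 ∨ a 1 ≠ 0 := by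
      by_contra! h
      exact ha (funext (Fin.forall_fin_two.2 h))
    · exact mul_left_cancel₀ h (by linear_combination E 1 j * hrel i - E 1 i * hrel j)
    · exact mul_left_cancel₀ h (by linear_combination E 0 i * hrel j - E 0 j * hrel i)
  obtain ⟨W, hW⟩ := exists_SL2_mul_col_one_eq_zero hσ (G := Eᵀ) hminor fun x hx h =>
    hE x hx (transpose_injective h)
  let V : SpecialLinearGroup (Fin 2) (MvPolynomial σ k) := W.transpose
  have hVE (j : n) : (V.1 * E) 1 j = 0 := by
    rw [← hW j, ← transpose_apply (V.1 * E), transpose_mul]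
    rfl
  have hinv : V⁻¹.1 * V.1 = 1 := congrArg Subtype.val (inv_mul_cancel V)
  obtain ⟨j, hj⟩ : ∃ j, (V.1 * E) 0 j ≠ 0 := by
    by_contra! hVE0
    have : Nonempty σ := Fintype.card_pos_iff.1 (by omega)
    have hzero : V.1 * E = 0 := Matrix.ext (Fin.forall_fin_two.2 ⟨hVE0, hVE⟩)
    refine hE 1 one_ne_zero ?_
    rw [← Matrix.one_mul E, ← hinv, Matrix.mul_assoc, hzero, Matrix.mul_zero,
      Matrix.map_zero _ (map_zero _)]
  have hmul : (a ᵥ* V⁻¹.1) ᵥ* (V.1 * E) = 0 := by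
    rw [vecMul_vecMul, ← Matrix.mul_assoc, hinv, Matrix.one_mul, haE]
  refine ⟨V, hVE, ?_⟩
  have hmulj := congrFun hmul j
  rw [vecMul, dotProduct, Fin.sum_univ_two, hVE, mul_zero, add_zero] at hmulj
  exact (mul_eq_zero.1 hmulj).resolve_right hj

end RankOne

/-- A differential over a polynomial ring whose entries vanish at the origin and which has trivial
homology, that is rank at least half its size, at every other point. -/
structure IsMinimalDifferential {σ k ι : Type*} [Field k] [Fintype ι]
    (D : Matrix ι ι (MvPolynomial σ k)) : Prop where
  mul_self : D * D = 0
  map_eval_zero : D.map (eval 0) = 0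
  card_le : ∀ x : σ → k, x ≠ 0 → Fintype.card ι ≤ 2 * (D.map (eval x)).rank

section MinimalDifferential

variable {σ k ι κ : Type*} [Field k] [Fintype ι] [Fintype κ]
  {D : Matrix ι ι (MvPolynomial σ k)}

theorem IsMinimalDifferential.transpose (hD : IsMinimalDifferential D) :
    IsMinimalDifferential Dᵀ where
  mul_self := by rw [← transpose_mul, hD.mul_self, transpose_zero]
  map_eval_zero := by rw [transpose_map, hD.map_eval_zero, transpose_zero]
  card_le x hx := by simpa only [transpose_map, rank_transpose] using hD.card_le x hx

theorem IsMinimalDifferential.submatrix (hD : IsMinimalDifferential D) (e : κ ≃ ι) :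
    IsMinimalDifferential (D.submatrix e e) where
  mul_self := by rw [submatrix_mul_equiv, hD.mul_self]; rfl
  map_eval_zero := congrArg (Matrix.submatrix · e e) hD.map_eval_zero
  card_le x hx := by
    rw [← submatrix_map, rank_submatrix, Fintype.card_congr e]
    exact hD.card_le x hx

theorem IsMinimalDifferential.conj [DecidableEq ι] (hD : IsMinimalDifferential D)
    {V W : Matrix ι ι (MvPolynomial σ k)} (hVW : V * W = 1) :
    IsMinimalDifferential (V * D * W) where
  mul_self := by
    have hWV := mul_eq_one_comm.1 hVW
    calc V * D * W * (V * D * W) = V * D * (W * V) * D * W := by simp only [Matrix.mul_assoc]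
      _ = 0 := by
        rw [hWV, Matrix.mul_one, Matrix.mul_assoc V, hD.mul_self, Matrix.mul_zero,
          Matrix.zero_mul]
  map_eval_zero := by
    rw [Matrix.map_mul, Matrix.map_mul, hD.map_eval_zero, Matrix.mul_zero, Matrix.zero_mul]
  card_le x hx := by
    have hVWx : V.map (eval x) * W.map (eval x) = 1 := by
      rw [← Matrix.map_mul, hVW, Matrix.map_one _ (map_zero _) (map_one _)]
    rw [Matrix.map_mul, Matrix.map_mul,
      rank_mul_eq_left_of_isUnit_det _ _ (isUnit_det_of_left_inverse hVWx),
      rank_mul_eq_right_of_isUnit_det _ _ (isUnit_det_of_right_inverse hVWx)]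
    exact hD.card_le x hx

theorem card_eq_sum_card_fiber_fin_three (b : ι → Fin 3) :
    Fintype.card ι =
      Fintype.card {i // b i = 0} + Fintype.card {i // b i = 1} + Fintype.card {i // b i = 2} := by
  rw [← Fintype.card_congr (Equiv.sigmaFiberEquiv b), Fintype.card_sigma, Fin.sum_univ_three]

theorem IsMinimalDifferential.two_mul_rank_toBlock_add_card_le (hD : IsMinimalDifferential D)
    {b : ι → Fin 3} (hb : IsStrictlyBlockTriangular D b) {x : σ → k} (hx : x ≠ 0) :
    2 * ((D.map (eval x)).toBlock (b · = 1) (b · = 2)).rank + Fintype.card ι ≤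
      2 * (Fintype.card {i // b i = 1} + Fintype.card {i // b i = 2}) := by
  have hDD : D.map (eval x) * D.map (eval x) = 0 := by
    rw [← Matrix.map_mul, hD.mul_self, Matrix.map_zero _ (map_zero _)]
  have hrank := rank_add_rank_le_card_of_mul_eq_zero <|
    (hb.map (eval x)).toBlock_mul_toBlock hDD (a := 0) (m := 1) (c := 2)
      ⟨by decide, by decide⟩ ⟨by decide, by decide⟩
  have hfst := (hb.map (eval x)).rank_le_rank_toBlock_zero_one_add
  have hcard := hD.card_le x hx
  omega

theorem IsMinimalDifferential.mul_eq_mul_of_three_levels [Infinite k]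
    (hD : IsMinimalDifferential D) {b : ι → Fin 3} (hb : IsStrictlyBlockTriangular D b)
    (hcard : 2 * (Fintype.card {i // b i = 1} + Fintype.card {i // b i = 2}) <
      Fintype.card ι + 4) {i i' j j' : ι} (hi : b i = 1) (hi' : b i' = 1) (hj : b j = 2)
    (hj' : b j' = 2) : D i j * D i' j' = D i j' * D i' j := by
  refine MvPolynomial.funext fun x => ?_
  rw [map_mul, map_mul]
  obtain rfl | hx := eq_or_ne x 0
  · have h0 (l l') : eval 0 (D l l') = 0 := congrFun₂ hD.map_eval_zero l l'
    rw [h0 i j, h0 i j', zero_mul, zero_mul]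
  have hle : ((D.map (eval x)).toBlock (b · = 1) (b · = 2)).rank ≤ 1 := by
    have := hD.two_mul_rank_toBlock_add_card_le hb hx
    omega
  exact mul_eq_mul_of_rank_le_one hle ⟨i, hi⟩ ⟨i', hi'⟩ ⟨j, hj⟩ ⟨j', hj'⟩

theorem IsMinimalDifferential.card_le_two_of_three_levels [IsAlgClosed k] [Fintype σ]
    (hD : IsMinimalDifferential D) {b : ι → Fin 3} (hb : IsStrictlyBlockTriangular D b)
    (hcard : Fintype.card {i // b i = 1} =
      Fintype.card {i // b i = 0} + Fintype.card {i // b i = 2})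
    {i : ι} (hi : b i = 0) : Fintype.card σ ≤ 2 := by
  by_contra! hσ
  have htotal := card_eq_sum_card_fiber_fin_three b
  let M := D.toBlock (b · = 0) (b · = 1)
  let N := D.toBlock (b · = 1) (b · = 2)
  have hM (x : σ → k) (hx : x ≠ 0) : Fintype.card {i // b i = 0} ≤ (M.map (eval x)).rank := by
    have hrank : (D.map (eval x)).rank ≤ (M.map (eval x)).rank + _ :=
      (hb.map (eval x)).rank_le_rank_toBlock_zero_one_add
    have := hD.card_le x hx
    omega
  have hN (x : σ → k) (hx : x ≠ 0) : Fintype.card {i // b i = 2} ≤ (N.map (eval x)).rank := by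
    have hrank : (D.map (eval x)).rank ≤ (N.map (eval x)).rank + _ :=
      (hb.map (eval x)).rank_le_rank_toBlock_one_two_add
    have := hD.card_le x hx
    omega
  obtain ⟨v, hv⟩ :=
    mulVec_surjective_of_card_le_rank hσ hcard
      (hb.toBlock_mul_toBlock hD.mul_self ⟨by decide, by decide⟩ ⟨by decide, by decide⟩) hM hN 1
  have hM0 : M.map (eval 0) = 0 := Matrix.ext fun i j => congrFun₂ hD.map_eval_zero i j
  have h01 := congrArg (eval (0 : σ → k)) (congrFun hv ⟨i, hi⟩)
  rw [RingHom.map_mulVec, hM0, zero_mulVec, Pi.one_apply, map_one] at h01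
  exact zero_ne_one h01

theorem IsMinimalDifferential.fromBlocks_submatrix_conj {m n : Type*} [Fintype m] [Fintype n]
    [DecidableEq m] (hD : IsMinimalDifferential D) {f : m → ι} {g : n → ι}
    (hfg : Function.Bijective (Sum.elim f g)) {V W : Matrix m m (MvPolynomial σ k)}
    (hVW : V * W = 1) (hff : D.submatrix f f = 0) :
    IsMinimalDifferential (fromBlocks 0 (V * D.submatrix f g) (D.submatrix g f * W)
      (D.submatrix g g)) := by
  classical
  have hinv : fromBlocks V 0 0 (1 : Matrix n n (MvPolynomial σ k)) * fromBlocks W 0 0 1 = 1 := by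
    simp [fromBlocks_multiply, hVW]
  have hblocks : D.submatrix (Sum.elim f g) (Sum.elim f g) = fromBlocks 0
      (D.submatrix f g) (D.submatrix g f) (D.submatrix g g) := by
    rw [← hff]
    ext (_ | _) (_ | _) <;> rfl
  have h : IsMinimalDifferential (fromBlocks V 0 0 1 *
      D.submatrix (Sum.elim f g) (Sum.elim f g) * fromBlocks W 0 0 1) :=
    (hD.submatrix (Equiv.ofBijective _ hfg)).conj hinv
  simpa [fromBlocks_multiply, hblocks] using h

theorem IsMinimalDifferential.submatrix_map_eval_ne_zero {m n : Type*}
    (hD : IsMinimalDifferential D) {p : m → ι} {q : n → ι} {s t : Finset ι}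
    (hst : 2 * (s.card + t.card) < Fintype.card ι)
    (h : ∀ i ∉ s, ∀ j ∉ t, D i j = 0 ∨ i ∈ Set.range p ∧ j ∈ Set.range q) {x : σ → k}
    (hx : x ≠ 0) : (D.submatrix p q).map (eval x) ≠ 0 := by
  intro h0
  have hrank := rank_le_card_add_card_of_eq_zero (D.map (eval x)) s t fun i hi j hj => by
    obtain hij | ⟨⟨i, rfl⟩, ⟨j, rfl⟩⟩ := h i hi j hj
    · rw [map_apply, hij, map_zero]
    · exact congrFun₂ h0 i j
  have hcard := hD.card_le x hx
  omega

end MinimalDifferential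

section EightByEight

variable {σ k : Type*} [Field k] [IsAlgClosed k] [Fintype σ]
  {D : Matrix (Fin 8) (Fin 8) (MvPolynomial σ k)}

theorem IsMinimalDifferential.card_le_two_of_row_ne_zero (hD : IsMinimalDifferential D)
    (hb : IsStrictlyBlockTriangular D (![0, 1, 1, 2, 2, 2, 3, 3] : Fin 8 → Fin 4))
    (ha : D 0 ∘ ![1, 2] ≠ 0) : Fintype.card σ ≤ 2 := by
  by_contra! hσ
  let E : Matrix (Fin 2) (Fin 3) (MvPolynomial σ k) := D.submatrix ![1, 2] ![3, 4, 5]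
  have haE : (D 0 ∘ ![1, 2]) ᵥ* E = 0 := by
    have h := submatrix_mul_submatrix_of_injective (A := D) (B := D) (p := ![1, 2]) (by decide)
      (fun _ : Unit => 0) ![3, 4, 5] fun _ x hx j =>
        Or.imp (hb 0 x) (hb x (![3, 4, 5] j)) (by decide +revert)
    rw [hD.mul_self] at h
    exact funext (congrFun₂ h ())
  have hE (x : σ → k) (hx : x ≠ 0) : E.map (eval x) ≠ 0 := by
    refine hD.submatrix_map_eval_ne_zero (s := {0}) (t := {6, 7}) (by decide)
      (fun i hi j hj => Or.imp_left (hb i j) ?_) hx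
    decide +revert
  -- Conjugating by `W` moves to levels of sizes 2, 4, 2.
  obtain ⟨W, hWE, haW⟩ := exists_SL2_mul_row_one_eq_zero_and_vecMul hσ ha haE hE
  have hinv : W.1 * W⁻¹.1 = 1 := congrArg Subtype.val (mul_inv_cancel W)
  have hff : D.submatrix ![1, 2] ![1, 2] = 0 := Matrix.ext fun i j =>
    hb (![1, 2] i) (![1, 2] j) (by decide +revert)
  have hD' := hD.fromBlocks_submatrix_conj (f := ![1, 2])
    (g := Sum.elim ![3, 4, 5] ![0, 6, 7]) (by decide) hinv hff
  refine hσ.not_ge <| hD'.card_le_two_of_three_levels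
    (b := Sum.elim ![0, 1] (Sum.elim ![1, 1, 1] ![0, 2, 2]))
    (.fromBlocks (fun _ _ _ => rfl) ?_ ?_ ?_) (by decide) (i := .inl 0) rfl
  · rintro i (j | j) hij
    · obtain rfl : i = 1 := by decide +revert
      exact hWE j
    · obtain rfl : j = 0 := by decide +revert
      rw [mul_apply]
      exact Finset.sum_eq_zero fun l _ => mul_eq_zero_of_right _ (hb _ 0 (by decide +revert))
  · intro i j hij
    obtain ⟨rfl, rfl⟩ | hi :
        i = .inr 0 ∧ j = 0 ∨ 3 ≤ Sum.elim ![3, 4, 5] ![0, 6, 7] i := by decide +revert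
    · exact haW
    · rw [mul_apply]
      exact Finset.sum_eq_zero fun l _ => mul_eq_zero_of_left
        (hb (Sum.elim ![3, 4, 5] ![0, 6, 7] i) (![1, 2] l) (by decide +revert)) _
  · exact fun i j hij => hb (Sum.elim ![3, 4, 5] ![0, 6, 7] i) (Sum.elim ![3, 4, 5] ![0, 6, 7] j)
      (by decide +revert)

theorem IsMinimalDifferential.card_le_two_of_row_eq_zero (hD : IsMinimalDifferential D)
    (hb : IsStrictlyBlockTriangular D (![0, 1, 1, 2, 2, 2, 3, 3] : Fin 8 → Fin 4))
    (ha : D 0 ∘ ![1, 2] = 0) : Fintype.card σ ≤ 2 := by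
  by_contra! hσ
  have hb3 : IsStrictlyBlockTriangular D (![0, 0, 0, 1, 1, 1, 2, 2] : Fin 8 → Fin 3) := by
    intro i j hij
    obtain hij' | ⟨rfl, l, rfl⟩ :
        (![0, 1, 1, 2, 2, 2, 3, 3] : Fin 8 → Fin 4) j ≤ ![0, 1, 1, 2, 2, 2, 3, 3] i ∨
          i = 0 ∧ ∃ l, ![1, 2] l = j := by decide +revert
    · exact hb i j hij'
    · exact congrFun ha l
  let G : Matrix (Fin 3) (Fin 2) (MvPolynomial σ k) := D.submatrix ![3, 4, 5] ![6, 7]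
  have hminor (i j : Fin 3) : G i 0 * G j 1 = G i 1 * G j 0 :=
    hD.mul_eq_mul_of_three_levels hb3 (by decide) (by decide +revert) (by decide +revert) rfl rfl
  have hG (x : σ → k) (hx : x ≠ 0) : G.map (eval x) ≠ 0 := by
    refine hD.submatrix_map_eval_ne_zero (s := {0, 1, 2}) (t := ∅) (by decide)
      (fun i hi j hj => Or.imp_left (hb i j) ?_) hx
    decide +revert
  -- Conjugating by `W⁻¹` moves to levels of sizes 3, 4, 1.
  obtain ⟨W, hGW⟩ := exists_SL2_mul_col_one_eq_zero hσ hminor hG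
  have hinv : W⁻¹.1 * W.1 = 1 := congrArg Subtype.val (inv_mul_cancel W)
  have hff : D.submatrix ![6, 7] ![6, 7] = 0 := Matrix.ext fun i j =>
    hb (![6, 7] i) (![6, 7] j) (by decide +revert)
  have hD' := hD.fromBlocks_submatrix_conj (f := ![6, 7])
    (g := Sum.elim ![3, 4, 5] ![0, 1, 2]) (by decide) hinv hff
  refine hσ.not_ge <| hD'.card_le_two_of_three_levels
    (b := Sum.elim ![2, 1] (Sum.elim ![1, 1, 1] ![0, 0, 0]))
    (.fromBlocks (fun _ _ _ => rfl) ?_ ?_ ?_) (by decide) (i := .inr (.inr 0)) rfl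
  · intro i j hij
    rw [mul_apply]
    exact Finset.sum_eq_zero fun l _ => mul_eq_zero_of_right _
      (hb (![6, 7] l) (Sum.elim ![3, 4, 5] ![0, 1, 2] j) (by decide +revert))
  · rintro (i | i) j hij
    · obtain rfl : j = 1 := by decide +revert
      exact hGW i
    · exact absurd hij (by decide +revert)
  · exact fun i j hij => hb3 (Sum.elim ![3, 4, 5] ![0, 1, 2] i) (Sum.elim ![3, 4, 5] ![0, 1, 2] j)
      (by decide +revert)

theorem IsMinimalDifferential.card_le_two_of_levels_one_two_three_two
    (hD : IsMinimalDifferential D)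
    (hb : IsStrictlyBlockTriangular D (![0, 1, 1, 2, 2, 2, 3, 3] : Fin 8 → Fin 4)) :
    Fintype.card σ ≤ 2 := by
  by_cases ha : D 0 ∘ ![1, 2] = 0
  · exact hD.card_le_two_of_row_eq_zero hb ha
  · exact hD.card_le_two_of_row_ne_zero hb ha

theorem IsMinimalDifferential.card_le_two_of_levels_two_three_two_one
    (hD : IsMinimalDifferential D)
    (hb : IsStrictlyBlockTriangular D (![0, 0, 1, 1, 1, 2, 2, 3] : Fin 8 → Fin 4)) :
    Fintype.card σ ≤ 2 :=
  (hD.transpose.submatrix Fin.revPerm).card_le_two_of_levels_one_two_three_two fun i j hij =>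
    hb j.rev i.rev (by decide +revert)

end EightByEight

end

theorem statement_5_general {σ k : Type*} [Fintype σ] [Field k] [IsAlgClosed k]
    {D : Matrix (Fin 8) (Fin 8) (MvPolynomial σ k)} (hD : IsMinimalDifferential D)
    (hlevel : IsStrictlyBlockTriangular D (![0, 1, 1, 2, 2, 2, 3, 3] : Fin 8 → Fin 4) ∨
      IsStrictlyBlockTriangular D (![0, 0, 1, 1, 1, 2, 2, 3] : Fin 8 → Fin 4)) :
    Fintype.card σ < 3 :=
  Nat.lt_succ_of_le <| hlevel.elim hD.card_le_two_of_levels_one_two_three_two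
    hD.card_le_two_of_levels_two_three_two_one

theorem StandardConditions.isMinimalDifferential {k : Type*} [Field k] {r : ℕ}
    {D : Matrix (Fin 8) (Fin 8) (MvPolynomial (Fin r) k)} (hD : StandardConditions D) :
    IsMinimalDifferential D :=
  let ⟨_, hDD, hD0, hrank, _⟩ := hD
  ⟨hDD, Matrix.ext hD0, fun a ha => by rw [hrank a ha, Fintype.card_fin]⟩

theorem statement_5 {k : Type*} [Field k] [IsAlgClosed k] {r : ℕ}
    (D : Matrix (Fin 8) (Fin 8) (MvPolynomial (Fin r) k))
    (hstd : StandardConditions D)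
    (hzero : (∀ i j : Fin 8,
        ¬((1 ≤ (i : ℕ) + 1 ∧ (i : ℕ) + 1 ≤ 1 ∧ 2 ≤ (j : ℕ) + 1 ∧ (j : ℕ) + 1 ≤ 8) ∨
          (2 ≤ (i : ℕ) + 1 ∧ (i : ℕ) + 1 ≤ 3 ∧ 4 ≤ (j : ℕ) + 1 ∧ (j : ℕ) + 1 ≤ 8) ∨
          (4 ≤ (i : ℕ) + 1 ∧ (i : ℕ) + 1 ≤ 6 ∧ 7 ≤ (j : ℕ) + 1 ∧ (j : ℕ) + 1 ≤ 8)) →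
        D i j = 0) ∨
      (∀ i j : Fin 8,
        ¬((1 ≤ (i : ℕ) + 1 ∧ (i : ℕ) + 1 ≤ 2 ∧ 3 ≤ (j : ℕ) + 1 ∧ (j : ℕ) + 1 ≤ 8) ∨
          (3 ≤ (i : ℕ) + 1 ∧ (i : ℕ) + 1 ≤ 5 ∧ 6 ≤ (j : ℕ) + 1 ∧ (j : ℕ) + 1 ≤ 8) ∨
          (6 ≤ (i : ℕ) + 1 ∧ (i : ℕ) + 1 ≤ 7 ∧ 8 ≤ (j : ℕ) + 1 ∧ (j : ℕ) + 1 ≤ 8)) →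
        D i j = 0)) :
    r < 3 := by
  rw [← Fintype.card_fin r]
  exact statement_5_general hstd.isMinimalDifferential <|
    hzero.imp (fun h i j _ => h i j (by decide +revert)) fun h i j _ => h i j (by decide +revert)
end

section
/- Let k be an algebraically closed field and S = k[x_1,...,x_r]. Suppose D = (p_{ij}) is an 8×8 matrix with entries in S satisfying the standard conditions, and suppose moreover that p_{ij} = 0 unless 1 ≤ i ≤ 4 and 5 ≤ j ≤ 8. Then r < 2, i.e., r ≤ 1. -/
open MvPolynomial

/-!
The only block of `D` that can be nonzero is square, so by the rank condition its determinant `f`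
has no zero except possibly the origin. Suppose there are at least two variables. Over an
algebraically closed field, `f` is constant on every line that avoids the origin, as it has no zero
there; hence it takes the same value at any two linearly independent points. It is then constant
along a line through the origin, except perhaps at the origin itself, and so there as well. Thus
`f` is nonzero at the origin, although the entries of `D` vanish there.
-/

theorem exists_polynomial_eval_eq_eval_add_smul {R σ : Type*} [CommSemiring R]
    (f : MvPolynomial σ R) (a v : σ → R) :
    ∃ p : Polynomial R, ∀ t, p.eval t = eval (a + t • v) f := by
  refine ⟨eval₂ Polynomial.C (fun i ↦ Polynomial.C (a i) + Polynomial.C (v i) * Polynomial.X) f,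
    fun t ↦ ?_⟩
  have hC : (Polynomial.evalRingHom t).comp Polynomial.C = RingHom.id R :=
    RingHom.ext fun _ ↦ Polynomial.eval_C
  rw [polynomial_eval_eval₂, hC, eval₂_id]
  congr 2 with i
  simp [mul_comm (v i)]

section NonvanishingOffOrigin

variable {k σ : Type*} [Field k] [IsAlgClosed k] {f : MvPolynomial σ k}

theorem eval_add_smul_eq_of_forall_ne_zero {a v : σ → k} (h : ∀ t : k, eval (a + t • v) f ≠ 0)
    (s t : k) : eval (a + s • v) f = eval (a + t • v) f := by
  obtain ⟨p, hp⟩ := exists_polynomial_eval_eq_eval_add_smul f a v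
  simp only [← hp] at h ⊢
  have hdeg : p.natDegree = 0 := by
    by_contra hdeg
    obtain ⟨t, ht⟩ := IsAlgClosed.eval_surjective hdeg 0
    exact h t ht
  obtain ⟨c, rfl⟩ := Polynomial.natDegree_eq_zero.mp hdeg
  simp only [Polynomial.eval_C]

theorem eval_eq_eval_of_linearIndependent (hf : ∀ a ≠ 0, eval a f ≠ 0) {a b : σ → k}
    (hab : LinearIndependent k ![a, b]) : eval a f = eval b f := by
  have hline (t : k) : a + t • (b - a) ≠ 0 := by
    intro h
    have hcomb : (1 - t) • a + t • b = 0 := by rw [← h]; module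
    obtain ⟨h₁, h₂⟩ := LinearIndependent.pair_iff.mp hab _ _ hcomb
    simp [h₂] at h₁
  simpa using eval_add_smul_eq_of_forall_ne_zero (fun t ↦ hf _ (hline t)) 0 1

theorem eval_zero_ne_zero_of_forall_ne_zero [Nontrivial σ] (hf : ∀ a ≠ 0, eval a f ≠ 0) :
    eval 0 f ≠ 0 := by
  classical
  obtain ⟨i, j, hij⟩ := exists_pair_ne σ
  let v : σ → k := Pi.single i 1
  let w : σ → k := Pi.single j 1
  have hvw {t : k} (ht : t ≠ 0) : LinearIndependent k ![t • v, w] := by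
    refine LinearIndependent.pair_iff.mpr fun x y h ↦ ⟨?_, ?_⟩
    · simpa [v, w, hij, ht] using congrFun h i
    · simpa [v, w, hij.symm] using congrFun h j
  have hw : w ≠ 0 := Pi.single_ne_zero_iff.mpr one_ne_zero
  obtain ⟨p, hp⟩ := exists_polynomial_eval_eq_eval_add_smul f 0 v
  have hpw : p = Polynomial.C (eval w f) := by
    refine Polynomial.eq_of_infinite_eval_eq _ _ <|
      (Set.finite_singleton (0 : k)).infinite_compl.mono fun t ht ↦ ?_
    simpa [hp] using eval_eq_eval_of_linearIndependent hf (hvw ht)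
  have h₀ : eval 0 f = eval w f := by simpa [hpw] using (hp 0).symm
  exact h₀ ▸ hf w hw

end NonvanishingOffOrigin

section Rank

open scoped Matrix

variable {R m n m' n' : Type*}

theorem rank_submatrix_id_eq_of_forall_notMem_range [CommSemiring R] [Fintype n] [Fintype n']
    (A : Matrix m n R) {c : n' → n} (hA : ∀ i, ∀ j ∉ Set.range c, A i j = 0) :
    (A.submatrix id c).rank = A.rank := by
  have hspan : Submodule.span R (Set.range (A.submatrix id c).col) =
      Submodule.span R (Set.range A.col) := by
    refine le_antisymm (Submodule.span_mono ?_) (Submodule.span_le.mpr ?_)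
    · rintro _ ⟨j, rfl⟩
      exact ⟨c j, rfl⟩
    · rintro _ ⟨j, rfl⟩
      by_cases hj : j ∈ Set.range c
      · obtain ⟨j, rfl⟩ := hj
        exact Submodule.subset_span ⟨j, rfl⟩
      · have hcol : A.col j = 0 := funext fun i ↦ hA i j hj
        exact hcol ▸ Submodule.zero_mem _
  rw [Matrix.rank_eq_finrank_span_cols, Matrix.rank_eq_finrank_span_cols, hspan]

theorem rank_submatrix_eq_of_forall_mem_range [Field R] [Finite m] [Fintype n] [Finite m']
    [Fintype n'] (A : Matrix m n R) {r : m' → m} {c : n' → n}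
    (hA : ∀ i j, A i j ≠ 0 → i ∈ Set.range r ∧ j ∈ Set.range c) :
    (A.submatrix r c).rank = A.rank := by
  have := Fintype.ofFinite m
  have := Fintype.ofFinite m'
  calc (A.submatrix r c).rank
      = ((A.submatrix id c)ᵀ.submatrix id r).rank := (Matrix.rank_transpose _).symm
    _ = (A.submatrix id c)ᵀ.rank :=
      rank_submatrix_id_eq_of_forall_notMem_range _ fun j i hi ↦
        by_contra fun h ↦ hi (hA i (c j) h).1
    _ = (A.submatrix id c).rank := Matrix.rank_transpose _
    _ = A.rank :=
      rank_submatrix_id_eq_of_forall_notMem_range A fun i j hj ↦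
        by_contra fun h ↦ hj (hA i j h).2

theorem rank_eq_card_iff_det_ne_zero [Field R] [Fintype n] [DecidableEq n] (A : Matrix n n R) :
    A.rank = Fintype.card n ↔ A.det ≠ 0 := by
  rw [← isUnit_iff_ne_zero, ← Matrix.isUnit_iff_isUnit_det,
    ← Matrix.linearIndependent_cols_iff_isUnit, linearIndependent_iff_card_eq_finrank_span,
    Matrix.rank_eq_finrank_span_cols, Set.finrank, eq_comm]

end Rank

theorem statement_6_general {k σ m n : Type*} [Field k] [IsAlgClosed k] [Finite m] [Fintype n]
    (D : Matrix m n (MvPolynomial σ k)) {s : Finset m} {t : Finset n} (hst : s.card = t.card)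
    (hsupp : ∀ i j, D i j ≠ 0 → i ∈ s ∧ j ∈ t)
    (hrank : ∀ a ≠ 0, (D.map (eval a)).rank = s.card)
    (hrank₀ : (D.map (eval 0)).rank ≠ s.card) :
    Subsingleton σ := by
  classical
  let e : s ≃ t := Finset.equivOfCardEq hst
  let B : Matrix s s (MvPolynomial σ k) := D.submatrix (↑) fun i ↦ (e i : n)
  have hdet (a : σ → k) : eval a B.det ≠ 0 ↔ (D.map (eval a)).rank = s.card := by
    have hB : (B.map (eval a)).rank = (D.map (eval a)).rank := by
      refine rank_submatrix_eq_of_forall_mem_range (D.map (eval a)) fun i j hij ↦ ?_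
      obtain ⟨hi, hj⟩ := hsupp i j fun h ↦ hij (by simp [h])
      exact ⟨⟨⟨i, hi⟩, rfl⟩, ⟨e.symm ⟨j, hj⟩, by simp⟩⟩
    rw [RingHom.map_det, RingHom.mapMatrix_apply, ← rank_eq_card_iff_det_ne_zero, hB,
      Fintype.card_coe]
  by_contra hσ
  have : Nontrivial σ := not_subsingleton_iff_nontrivial.mp hσ
  exact hrank₀ ((hdet 0).mp (eval_zero_ne_zero_of_forall_ne_zero fun a ha ↦
    (hdet a).mpr (hrank a ha)))

theorem statement_6 {k : Type*} [Field k] [IsAlgClosed k] {r : ℕ}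
    (D : Matrix (Fin 8) (Fin 8) (MvPolynomial (Fin r) k))
    (hstd : StandardConditions D)
    (hzero : ∀ i j : Fin 8,
        ¬((1 ≤ (i : ℕ) + 1 ∧ (i : ℕ) + 1 ≤ 4 ∧ 5 ≤ (j : ℕ) + 1 ∧ (j : ℕ) + 1 ≤ 8)) →
        D i j = 0) :
    r < 2 := by
  obtain ⟨-, -, h₀, hrank, -⟩ := hstd
  have hD₀ : D.map (eval 0) = 0 := Matrix.ext h₀
  have hr : Subsingleton (Fin r) :=
    statement_6_general D (s := {i | (i : ℕ) < 4}) (t := {j | 4 ≤ (j : ℕ)}) rfl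
      (fun i j hij ↦ by grind [mt (hzero i j) hij]) hrank (by rw [hD₀, Matrix.rank_zero]; decide)
  exact Nat.lt_succ_of_le (Fin.subsingleton_iff_le_one.mp hr)
end

section
/- Let k be an algebraically closed field and S = k[x_1,...,x_r]. Suppose D = (p_{ij}) is an 8×8 matrix with entries in S satisfying the standard conditions, and suppose moreover that p_{ij} = 0 unless (i = 1 and 2 ≤ j ≤ 8) or (2 ≤ i ≤ 3 and 4 ≤ j ≤ 8) or (4 ≤ i ≤ 5 and 6 ≤ j ≤ 8) or (6 ≤ i ≤ 7 and j = 8). Then r < 4, i.e., r ≤ 3. -/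
open MvPolynomial

/-!
Suppose `D` has the block shape `1 + 2 + 2 + 2 + 1` in at least four variables. The hypothesis says
that `D` is exact at every point other than the origin.

If the first block `(D 0 1, D 0 2)` vanishes, then so does the third one, rows `3, 4` and columns
`5, 6`: a syzygy with nonzero coefficients between columns `3` and `4` would make both vanish at
a common nonzero point, where the rank would be at most `3`. The submatrix `A` with rows `0, 1, 2`
and columns `3, 4, 5, 6` is then surjective away from the origin, with kernel the line bundle
trivialised by its maximal minors. As `H¹` of the structure sheaf of punctured affine space
vanishes in dimension at least three, `A` is surjective at the origin too, where its entries are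
zero. The case of a vanishing last block is dual, by transposition along the antidiagonal.

Otherwise write the first and last blocks as `g • (a, b)` and `q • (c, d)` with `a, b` and `c, d`
coprime. Coprimality turns the relations `D * D = 0` into factorisations of the inner blocks, and
Krull's height theorem provides a nonzero point at which few enough of the factors vanish
simultaneously to make the rank smaller than `4`. When `a` and `b` vanish at the origin, that point
is a common zero of `a`, `b` and a minor of rows `1, 2`; dually for `c` and `d`. When neither pair
does, it is a common zero of `g` and of the three further factors at which `a` or `b` is nonzero.
-/

section CommonZeros

variable {σ k ι : Type*} [Fintype σ] [Field k] [IsAlgClosed k] [Fintype ι]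

lemma height_vanishingIdeal_singleton (x : σ → k) :
    (vanishingIdeal k {x}).height = Fintype.card σ := by
  have hdim : ringKrullDim (MvPolynomial σ k) = Fintype.card σ := by
    rw [MvPolynomial.ringKrullDim_of_isNoetherianRing, ringKrullDim_eq_zero_of_field, zero_add,
      Nat.card_eq_fintype_card]
  have : FiniteRingKrullDim (MvPolynomial σ k) := by
    rw [finiteRingKrullDim_iff_ne_bot_and_top, hdim]
    exact ⟨WithBot.coe_ne_bot, WithBot.coe_injective.ne (ENat.natCast_ne_top _)⟩
  obtain ⟨m, hm, hheight⟩ := Ideal.exists_isMaximal_height (R := MvPolynomial σ k)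
  obtain ⟨y, rfl⟩ := isMaximal_iff_eq_vanishingIdeal_singleton.1 hm
  let translate (v : σ → k) : MvPolynomial σ k →ₐ[k] MvPolynomial σ k :=
    aeval fun i => X i + C (v i)
  have translate_comp (v : σ → k) : (translate v).comp (translate (-v)) = AlgHom.id k _ :=
    algHom_ext fun i => by simp [translate, algebraMap_eq]
  let e : MvPolynomial σ k ≃ₐ[k] MvPolynomial σ k :=
    AlgEquiv.ofAlgHom (translate (y - x)) (translate (x - y))
      (by simpa using translate_comp (y - x)) (by simpa using translate_comp (x - y))
  have eval_translate (p : MvPolynomial σ k) : aeval x (e p) = aeval y p := by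
    have : (aeval x).comp (translate (y - x)) = aeval y :=
      algHom_ext fun i => by simp [translate]
    exact DFunLike.congr_fun this p
  have hcomap : (vanishingIdeal k {x}).comap e.toRingEquiv = vanishingIdeal k {y} := by
    ext p
    simpa using congrArg (· = 0) (eval_translate p)
  rw [← RingEquiv.height_comap e.toRingEquiv, hcomap]
  exact_mod_cast hheight.trans hdim

lemma exists_ne_forall_eval_eq_zero {x : σ → k} {f : ι → MvPolynomial σ k} {q : MvPolynomial σ k}
    (hcard : Fintype.card ι < Fintype.card σ) (hf : ∀ i, eval x (f i) = 0) (hq : eval x q ≠ 0) :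
    ∃ z ≠ x, (∀ i, eval z (f i) = 0) ∧ eval z q ≠ 0 := by
  have hle : Ideal.span (Set.range f) ≤ vanishingIdeal k {x} := by
    rw [Ideal.span_le]
    rintro _ ⟨i, rfl⟩
    simpa using hf i
  obtain ⟨P, hP, hPx⟩ := Ideal.exists_minimalPrimes_le hle
  have hprime : P.IsPrime := hP.isPrime
  have hncard : (Set.range f).ncard ≤ Fintype.card ι := by
    rw [← Set.image_univ, ← Nat.card_eq_fintype_card, ← Set.ncard_univ]
    exact Set.ncard_image_le
  have hlt : P.height < (vanishingIdeal k {x}).height := by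
    rw [height_vanishingIdeal_singleton]
    refine (Ideal.height_le_card_of_mem_minimalPrimes_span (Set.finite_range f) hP).trans_lt ?_
    exact_mod_cast hncard.trans_lt hcard
  obtain ⟨p, hpx, hpP⟩ := SetLike.exists_of_lt (hPx.lt_of_ne fun h => hlt.ne (h ▸ rfl))
  have hqP : q ∉ P := fun h => hq (by simpa using hPx h)
  obtain ⟨z, hzP, hz⟩ : ∃ z ∈ zeroLocus k P, eval z (p * q) ≠ 0 := by
    by_contra! hvanish
    refine hprime.mul_notMem hpP hqP ?_
    rw [← IsPrime.vanishingIdeal_zeroLocus (K := k) P, mem_vanishingIdeal_iff]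
    simpa using hvanish
  rw [map_mul, mul_ne_zero_iff] at hz
  refine ⟨z, ?_, fun i => ?_, hz.2⟩
  · rintro rfl
    exact hz.1 (by simpa using hpx)
  · simpa using (mem_zeroLocus_iff.1 hzP) _ (hP.1.2 (Ideal.subset_span ⟨i, rfl⟩))

-- Where `s = t = 0` the product `g * l` vanishes, so `g = l = 0` is the one equation `g + l = 0`.
lemma exists_ne_eval_eq_zero_of_mul_add_mul_add_mul_eq_zero {x : σ → k}
    {g l p s q t f : MvPolynomial σ k} (hσ : 3 < Fintype.card σ)
    (h : g * l + p * s + q * t = 0) (hg : eval x g = 0) (hl : eval x l = 0) (hs : eval x s = 0)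
    (ht : eval x t = 0) (hf : eval x f ≠ 0) :
    ∃ z ≠ x, eval z g = 0 ∧ eval z l = 0 ∧ eval z s = 0 ∧ eval z t = 0 ∧ eval z f ≠ 0 := by
  obtain ⟨z, hz, hzero, hzf⟩ := exists_ne_forall_eval_eq_zero (f := ![s, t, g + l])
    (by rwa [Fintype.card_fin]) (by simp [Fin.forall_fin_succ, hg, hl, hs, ht]) hf
  obtain ⟨zs, zt, zgl⟩ : eval z s = 0 ∧ eval z t = 0 ∧ eval z g + eval z l = 0 := by
    simpa [Fin.forall_fin_succ] using hzero
  have hmul : eval z g * eval z l = 0 := by simpa [zs, zt] using congrArg (eval z) h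
  rcases mul_eq_zero.1 hmul with zg | zl
  · exact ⟨z, hz, zg, by simpa [zg] using zgl, zs, zt, hzf⟩
  · exact ⟨z, hz, by simpa [zl] using zgl, zl, zs, zt, hzf⟩

end CommonZeros

section RelPrime

variable {R : Type*} [CommRing R]

lemma exists_eq_mul_isRelPrime [UniqueFactorizationMonoid R] {s t : R} (h : s ≠ 0 ∨ t ≠ 0) :
    ∃ g a b, g ≠ 0 ∧ s = g * a ∧ t = g * b ∧ IsRelPrime a b := by
  obtain ⟨a, b, g, hab, rfl, rfl⟩ : ∃ a b g, IsRelPrime a b ∧ g * a = s ∧ g * b = t := by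
    rcases h with hs | ht
    · exact UniqueFactorizationMonoid.exists_reduced_factors s hs t
    · exact UniqueFactorizationMonoid.exists_reduced_factors' s t ht
  exact ⟨g, a, b, by rintro rfl; simp at h, rfl, rfl, hab⟩

lemma exists_eq_mul_of_mul_add_mul_eq_zero [IsDomain R] [DecompositionMonoid R] {a b p q : R}
    (hab : IsRelPrime a b) (h : a * p + b * q = 0) : ∃ u, p = b * u ∧ q = -(a * u) := by
  rcases eq_or_ne b 0 with rfl | hb
  · obtain ⟨c, hc⟩ := (isRelPrime_zero_right.1 hab).exists_right_inv
    exact ⟨-(c * q), by linear_combination c * h - p * hc, by linear_combination -q * hc⟩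
  · obtain ⟨u, rfl⟩ : b ∣ p := hab.symm.dvd_of_dvd_mul_left ⟨-q, by linear_combination h⟩
    exact ⟨u, rfl, mul_left_cancel₀ hb (by linear_combination h)⟩

lemma map_eq_zero_of_map_mul_eq_zero {S : Type*} [CommRing S] [NoZeroDivisors S] {f : R →+* S}
    {x y p : R} (hxy : f x ≠ 0 ∨ f y ≠ 0) (hx : f (x * p) = 0) (hy : f (y * p) = 0) : f p = 0 := by
  rw [map_mul, mul_eq_zero] at hx hy
  exact hxy.elim hx.resolve_left hy.resolve_left

end RelPrime

section Syzygy

variable {σ k ι : Type*} [Fintype σ] [Field k] [IsAlgClosed k] [Fintype ι]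

lemma exists_ne_zero_eval_eq_zero_of_syzygy {p q : ι → MvPolynomial σ k} {s t : MvPolynomial σ k}
    (hι : Fintype.card ι < Fintype.card σ) (hσ : 2 < Fintype.card σ)
    (hp : ∀ i, eval 0 (p i) = 0) (hq : ∀ i, eval 0 (q i) = 0) (hst : s ≠ 0 ∨ t ≠ 0)
    (h : ∀ i, p i * s + q i * t = 0) :
    ∃ z ≠ 0, ∀ i, eval z (p i) = 0 ∧ eval z (q i) = 0 := by
  obtain ⟨g, a, b, hg, rfl, rfl, hab⟩ := exists_eq_mul_isRelPrime hst
  have hsyz (i : ι) : ∃ u, p i = b * u ∧ q i = -(a * u) :=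
    exists_eq_mul_of_mul_add_mul_eq_zero hab
      (mul_left_cancel₀ hg (by linear_combination h i))
  choose u hpu hqu using hsyz
  by_cases h0 : eval 0 a = 0 ∧ eval 0 b = 0
  · obtain ⟨z, hz, hab, -⟩ := exists_ne_forall_eval_eq_zero (x := 0) (f := ![a, b]) (q := 1)
      (by simpa using hσ) (by simpa [Fin.forall_fin_two] using h0) (by simp)
    simp only [Fin.forall_fin_two, Matrix.cons_val_zero, Matrix.cons_val_one] at hab
    exact ⟨z, hz, fun i => by simp [hpu, hqu, hab]⟩
  · have hu0 (i : ι) : eval 0 (u i) = 0 := by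
      have hpi := hp i
      have hqi := hq i
      simp only [hpu, hqu, map_neg, map_mul, neg_eq_zero, mul_eq_zero] at hpi hqi
      tauto
    obtain ⟨z, hz, hu, -⟩ := exists_ne_forall_eval_eq_zero (q := 1) hι hu0 (by simp)
    exact ⟨z, hz, fun i => by simp [hpu, hqu, hu]⟩

end Syzygy

section MaximalMinors

open Matrix

variable {R : Type*} [CommRing R] {n : ℕ}

/-- The signed maximal minors of an `n × (n + 1)` matrix, that is, its generalised cross product. -/
def maximalMinors (A : Matrix (Fin n) (Fin (n + 1)) R) (j : Fin (n + 1)) : R :=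
  (-1) ^ (j : ℕ) * (A.submatrix id j.succAbove).det

lemma maximalMinors_map {S : Type*} [CommRing S] (f : R →+* S)
    (A : Matrix (Fin n) (Fin (n + 1)) R) (j : Fin (n + 1)) :
    maximalMinors (A.map f) j = f (maximalMinors A j) := by
  simp [maximalMinors, RingHom.map_det, submatrix_map]

lemma adjugate_of_cons_apply_zero (t : Fin (n + 1) → R) (A : Matrix (Fin n) (Fin (n + 1)) R)
    (j : Fin (n + 1)) : (of (Fin.cons t A.row)).adjugate j 0 = maximalMinors A j := by
  rw [adjugate_fin_succ_eq_det_submatrix, maximalMinors, Fin.val_zero, zero_add,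
    Fin.succAbove_zero]
  rfl

lemma det_of_cons (t : Fin (n + 1) → R) (A : Matrix (Fin n) (Fin (n + 1)) R) :
    (of (Fin.cons t A.row)).det = t ⬝ᵥ maximalMinors A := by
  have h := congrFun₂ (mul_adjugate (of (Fin.cons t A.row))) 0 0
  simpa [mul_apply, dotProduct, adjugate_of_cons_apply_zero] using h.symm

lemma mulVec_maximalMinors (A : Matrix (Fin n) (Fin (n + 1)) R) : A *ᵥ maximalMinors A = 0 := by
  ext i
  have h := congrFun₂ (mul_adjugate (of (Fin.cons 0 A.row))) i.succ 0
  simpa [mul_apply, mulVec, dotProduct, adjugate_of_cons_apply_zero] using h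

lemma dotProduct_smul_maximalMinors {A : Matrix (Fin n) (Fin (n + 1)) R} {v : Fin (n + 1) → R}
    (hv : A *ᵥ v = 0) (t : Fin (n + 1) → R) :
    (t ⬝ᵥ v) • maximalMinors A = (t ⬝ᵥ maximalMinors A) • v := by
  have hcons : of (Fin.cons t A.row) *ᵥ v = Pi.single 0 (t ⬝ᵥ v) := by
    ext i
    refine i.cases ?_ (fun i => ?_)
    · simp [mulVec]
    · simpa [mulVec] using congrFun hv i
  have h := congrArg ((of (Fin.cons t A.row)).adjugate *ᵥ ·) hcons
  ext j
  simpa [adjugate_mul, det_of_cons, adjugate_of_cons_apply_zero, smul_mulVec,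
    mul_comm (t ⬝ᵥ v)] using
    (congrFun h j).symm

lemma exists_mulVec_eq_single_of_mem_span {A : Matrix (Fin n) (Fin (n + 1)) R} {f : R}
    (hf : f ∈ Ideal.span (Set.range (maximalMinors A))) (i : Fin n) :
    ∃ u, A *ᵥ u = Pi.single i f := by
  obtain ⟨t, rfl⟩ := Ideal.mem_span_range_iff_exists_fun.1 hf
  refine ⟨(of (Fin.cons t A.row)).adjugate.col i.succ, ?_⟩
  ext l
  have h := congrFun₂ (mul_adjugate (of (Fin.cons t A.row))) l.succ i.succ
  simpa [mul_apply, mulVec, dotProduct, det_of_cons, Pi.single_apply, one_apply] using h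

lemma maximalMinors_ne_zero {k : Type*} [Field k] {A : Matrix (Fin n) (Fin (n + 1)) k}
    (hA : LinearIndependent k A.row) : maximalMinors A ≠ 0 := by
  obtain ⟨t, ht⟩ := exists_linearIndependent_cons_of_lt_finrank hA (by simp)
  have hcons : LinearIndependent k (of (Fin.cons t A.row)).row := ht
  have hdet := (isUnit_iff_isUnit_det _).1 (linearIndependent_rows_iff_isUnit.1 hcons)
  intro h
  rw [det_of_cons, h, dotProduct_zero] at hdet
  exact not_isUnit_zero hdet

variable [IsDomain R] [DecompositionMonoid R]

lemma exists_eq_smul_maximalMinors {A : Matrix (Fin n) (Fin (n + 1)) R} {v : Fin (n + 1) → R}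
    {f₀ f₁ : R} (hf₀ : f₀ ∈ Ideal.span (Set.range (maximalMinors A)))
    (hf₁ : f₁ ∈ Ideal.span (Set.range (maximalMinors A))) (h₀ : f₀ ≠ 0) (h₀₁ : IsRelPrime f₀ f₁)
    (hv : A *ᵥ v = 0) : ∃ g : R, v = g • maximalMinors A := by
  obtain ⟨t₀, ht₀⟩ := Ideal.mem_span_range_iff_exists_fun.1 hf₀
  obtain ⟨t₁, ht₁⟩ := Ideal.mem_span_range_iff_exists_fun.1 hf₁
  have hA : maximalMinors A ≠ 0 := fun h => h₀ (by simp [← ht₀, h])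
  have hv₀ : (t₀ ⬝ᵥ v) • maximalMinors A = f₀ • v := ht₀ ▸ dotProduct_smul_maximalMinors hv t₀
  have hv₁ : (t₁ ⬝ᵥ v) • maximalMinors A = f₁ • v := ht₁ ▸ dotProduct_smul_maximalMinors hv t₁
  have hcomm : f₁ * (t₀ ⬝ᵥ v) = f₀ * (t₁ ⬝ᵥ v) := by
    refine smul_left_injective R hA ?_
    simp only [mul_smul, hv₀, hv₁]
    exact smul_comm f₁ f₀ v
  obtain ⟨g, hg⟩ : f₀ ∣ t₀ ⬝ᵥ v := h₀₁.dvd_of_dvd_mul_left ⟨_, hcomm⟩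
  refine ⟨g, smul_right_injective _ h₀ ?_⟩
  simp only [← hv₀, hg, mul_smul]

/- The solutions of `A *ᵥ u = Pi.single i (f m)` are local sections of a torsor under the line
bundle `ker A`, which `maximalMinors A` trivialises. The hypotheses on `f` say that the relevant
Čech cohomology group `H¹` vanishes, so the sections can be corrected to agree. -/
lemma exists_mulVec_eq_single_one {A : Matrix (Fin n) (Fin (n + 1)) R} {f₀ f₁ f₂ : R}
    (hf₀ : f₀ ∈ Ideal.span (Set.range (maximalMinors A)))
    (hf₁ : f₁ ∈ Ideal.span (Set.range (maximalMinors A)))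
    (hf₂ : f₂ ∈ Ideal.span (Set.range (maximalMinors A))) (h₀ : f₀ ≠ 0) (h₀₁ : IsRelPrime f₀ f₁)
    (h₂ : ∀ g, f₂ * g ∈ Ideal.span {f₀, f₁} → g ∈ Ideal.span {f₀, f₁}) (i : Fin n) :
    ∃ u, A *ᵥ u = Pi.single i 1 := by
  have hA : maximalMinors A ≠ 0 := fun h => h₀ (by simpa [h] using hf₀)
  obtain ⟨u₀, hu₀⟩ := exists_mulVec_eq_single_of_mem_span hf₀ i
  obtain ⟨u₁, hu₁⟩ := exists_mulVec_eq_single_of_mem_span hf₁ i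
  obtain ⟨u₂, hu₂⟩ := exists_mulVec_eq_single_of_mem_span hf₂ i
  have hdiff {a b : R} {u v : Fin (n + 1) → R} (hu : A *ᵥ u = Pi.single i a)
      (hv : A *ᵥ v = Pi.single i b) : ∃ g : R, b • u - a • v = g • maximalMinors A := by
    refine exists_eq_smul_maximalMinors hf₀ hf₁ h₀ h₀₁ ?_
    rw [mulVec_sub, mulVec_smul, mulVec_smul, hu, hv, ← Pi.single_smul, ← Pi.single_smul,
      smul_eq_mul, smul_eq_mul, mul_comm, sub_self]
  obtain ⟨g₀₁, hg₀₁⟩ := hdiff hu₀ hu₁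
  obtain ⟨g₀₂, hg₀₂⟩ := hdiff hu₀ hu₂
  obtain ⟨g₁₂, hg₁₂⟩ := hdiff hu₁ hu₂
  have hcocycle : -g₁₂ * f₀ + g₀₂ * f₁ = f₂ * g₀₁ := by
    refine smul_left_injective R hA ?_
    simp only [add_smul, neg_smul, mul_comm _ f₀, mul_comm _ f₁, mul_smul, ← hg₀₁,
      ← hg₀₂, ← hg₁₂]
    module
  obtain ⟨p, q, hpq⟩ :=
    Ideal.mem_span_pair.1 (h₂ g₀₁ (Ideal.mem_span_pair.2 ⟨_, _, hcocycle⟩))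
  have hdvd (j : Fin (n + 1)) : f₀ ∣ (u₀ - q • maximalMinors A) j := by
    refine h₀₁.dvd_of_dvd_mul_left ⟨(u₁ + p • maximalMinors A) j, ?_⟩
    have := congrFun hg₀₁ j
    simp only [Pi.sub_apply, Pi.add_apply, Pi.smul_apply, smul_eq_mul] at this ⊢
    linear_combination this - maximalMinors A j * hpq
  choose w hw using hdvd
  have hw' : f₀ • w = u₀ - q • maximalMinors A := funext fun j => (hw j).symm
  refine ⟨w, smul_right_injective _ h₀ ?_⟩
  simp only
  rw [← mulVec_smul, hw', mulVec_sub, mulVec_smul, mulVec_maximalMinors, smul_zero, sub_zero, hu₀,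
    ← Pi.single_smul, smul_eq_mul, mul_one]

end MaximalMinors

section Polynomial

open Matrix

variable {σ k : Type*}

lemma isRelPrime_X_pow [Field k] {i j : σ} (hij : i ≠ j) (m n : ℕ) :
    IsRelPrime (X i ^ m : MvPolynomial σ k) (X j ^ n) := by
  refine IsRelPrime.pow (X_prime.irreducible.isRelPrime_iff_not_dvd.2 ?_)
  rwa [X_dvd_X]

lemma mem_span_monomial_of_X_pow_mul_mem [CommSemiring k] {s : Set (σ →₀ ℕ)} {l : σ}
    (hs : ∀ m ∈ s, m l = 0) {c : ℕ} {g : MvPolynomial σ k}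
    (h : X l ^ c * g ∈ Ideal.span ((fun m => monomial m (1 : k)) '' s)) :
    g ∈ Ideal.span ((fun m => monomial m (1 : k)) '' s) := by
  rw [mem_ideal_span_monomial_image] at h ⊢
  intro d hd
  obtain ⟨m, hm, hle⟩ := h (Finsupp.single l c + d) (by
    rw [X_pow_eq_monomial, mem_support_iff, coeff_monomial_mul, one_mul]
    exact mem_support_iff.1 hd)
  refine ⟨m, hm, fun i => ?_⟩
  rcases eq_or_ne i l with rfl | hi
  · simp [hs m hm]
  · simpa [Finsupp.single_eq_of_ne hi] using hle i

lemma exists_ne_zero_maximalMinors_eq_zero [Fintype σ] [Field k] [IsAlgClosed k] {n : ℕ}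
    {A : Matrix (Fin n) (Fin (n + 1)) (MvPolynomial σ k)} (hσ : 2 < Fintype.card σ) {i : Fin n}
    (hA : ∀ j, eval 0 (A i j) = 0) : ∃ z ≠ 0, maximalMinors (A.map (eval z)) = 0 := by
  by_contra! h
  have hX (l : σ) : X l ∈ (Ideal.span (Set.range (maximalMinors A))).radical := by
    rw [← vanishingIdeal_zeroLocus_eq_radical (K := k), mem_vanishingIdeal_iff]
    intro z hz
    have hz0 : z = 0 := by
      by_contra hz0
      refine h z hz0 (funext fun j => ?_)
      rw [maximalMinors_map]
      simpa using mem_zeroLocus_iff.1 hz _ (Ideal.subset_span ⟨j, rfl⟩)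
    simp [hz0]
  choose c hc using hX
  obtain ⟨e⟩ : Nonempty (Fin 3 ↪ σ) :=
    Function.Embedding.nonempty_of_card_le (by rwa [Fintype.card_fin])
  have he {a b : Fin 3} (hab : a ≠ b) : e a ≠ e b := e.injective.ne hab
  have hregular (g : MvPolynomial σ k) :
      X (e 2) ^ c (e 2) * g ∈ Ideal.span {X (e 0) ^ c (e 0), X (e 1) ^ c (e 1)} →
        g ∈ Ideal.span {X (e 0) ^ c (e 0), X (e 1) ^ c (e 1)} := by
    simp only [X_pow_eq_monomial (R := k) (n := e 0), X_pow_eq_monomial (R := k) (n := e 1),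
      ← Set.image_pair (fun m => monomial m (1 : k))]
    exact mem_span_monomial_of_X_pow_mul_mem (by simp [he])
  obtain ⟨u, hu⟩ := exists_mulVec_eq_single_one (hc (e 0)) (hc (e 1)) (hc (e 2))
    (pow_ne_zero _ (X_ne_zero _)) (isRelPrime_X_pow (he (by decide)) _ _) hregular i
  have hone : eval 0 ((A *ᵥ u) i) = 1 := by rw [hu, Pi.single_eq_same, map_one]
  simp only [mulVec, dotProduct, map_sum, map_mul, hA, zero_mul, Finset.sum_const_zero] at hone
  exact zero_ne_one hone

end Polynomial

section Rank

open Matrix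

variable {m n ι κ k : Type*}

lemma linearIndependent_row_submatrix [Field k] [Finite m] [Fintype n] [Fintype ι] [Finite κ]
    {M : Matrix m n k} {r : ι → m} {c : κ → n} (hc : c.Injective) (j₀ : n)
    (hM : ∀ i j, j ≠ j₀ → M i j ≠ 0 → i ∈ Set.range r ∧ j ∈ Set.range c)
    (hrank : Fintype.card ι < M.rank) : LinearIndependent k (M.submatrix r c).row := by
  classical
  rw [linearIndependent_iff_card_le_finrank_span]
  let N := Submodule.span k (Set.range (M.submatrix r c).row)
  let extend := Function.ExtendByZero.linearMap k c
  have hmem (i : m) : ∃ x ∈ N, ∀ j ≠ j₀, extend x j = M i j := by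
    by_cases hi : i ∈ Set.range r
    · obtain ⟨a, rfl⟩ := hi
      refine ⟨_, Submodule.subset_span ⟨a, rfl⟩, fun j hj => ?_⟩
      by_cases hjc : j ∈ Set.range c
      · obtain ⟨b, rfl⟩ := hjc
        exact hc.extend_apply _ _ b
      · rw [Function.ExtendByZero.linearMap_apply, Function.extend_apply' _ _ _ hjc]
        by_contra hne
        exact hjc (hM _ j hj (Ne.symm hne)).2
    · refine ⟨0, N.zero_mem, fun j hj => ?_⟩
      by_contra hne
      exact hi (hM i j hj (by simpa [eq_comm] using hne)).1
  have hrows : Submodule.span k (Set.range M.row) ≤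
      N.map extend ⊔ Submodule.span k {Pi.single j₀ 1} := by
    rw [Submodule.span_le]
    rintro _ ⟨i, rfl⟩
    obtain ⟨x, hx, hxM⟩ := hmem i
    refine Submodule.mem_sup.2 ⟨_, Submodule.mem_map_of_mem hx, _,
      Submodule.mem_span_singleton.2 ⟨M i j₀ - extend x j₀, rfl⟩, funext fun j => ?_⟩
    rcases eq_or_ne j j₀ with rfl | hj
    · simp
    · simp [hj, hxM j hj]
  have hle : M.rank ≤ Module.finrank k N + 1 :=
    calc M.rank = Module.finrank k (Submodule.span k (Set.range M.row)) :=
          M.rank_eq_finrank_span_row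
      _ ≤ _ := Submodule.finrank_mono hrows
      _ ≤ _ := Submodule.finrank_add_le_finrank_add_finrank _ _
      _ ≤ _ := Nat.add_le_add (Submodule.finrank_map_le _ _)
        (finrank_span_singleton (by simp)).le
  exact Nat.lt_succ_iff.1 (hrank.trans_le hle)

lemma exists_mulVec_eq_of_mulVec_eq_zero [Field k] [Fintype n] {M : Matrix n n k} (hM : M * M = 0)
    (hrank : Fintype.card n ≤ 2 * M.rank) {v : n → k} (hv : M *ᵥ v = 0) : ∃ w, M *ᵥ w = v := by
  have hle : M.mulVecLin.range ≤ M.mulVecLin.ker := by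
    rw [LinearMap.range_le_ker_iff, ← mulVecLin_mul, hM, mulVecLin_zero]
  have heq : M.mulVecLin.range = M.mulVecLin.ker := by
    refine Submodule.eq_of_le_of_finrank_le hle ?_
    have hsum := M.mulVecLin.finrank_range_add_finrank_ker
    rw [Module.finrank_fintype_fun_eq_card] at hsum
    rw [Matrix.rank] at hrank
    lia
  exact heq.ge hv

lemma det_submatrix_mul_det [CommRing k] [Fintype n] [Fintype ι] [DecidableEq ι]
    {M : Matrix m n k} {r : ι → m} {c : ι → n} (hc : c.Injective)
    (hM : ∀ a, ∀ j ∉ Set.range c, M (r a) j = 0) {v : ι → n → k} {d : ι → k}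
    (hv : ∀ i, (M *ᵥ v i) ∘ r = Pi.single i (d i)) :
    (M.submatrix r c).det * (of fun i => v i ∘ c).det = ∏ i, d i := by
  have hmul : M.submatrix r c * (of fun i => v i ∘ c)ᵀ = diagonal d := by
    ext a i
    calc (M.submatrix r c * (of fun i => v i ∘ c)ᵀ) a i = (M *ᵥ v i) (r a) :=
          Fintype.sum_of_injective c hc _ _ (fun j hj => by simp [hM a j hj]) fun _ => rfl
      _ = (Pi.single i (d i) : ι → k) a := congrFun (hv i) a
      _ = (diagonal d).col i a := by rw [col_diagonal]
  rw [← det_transpose (of _), ← det_mul, hmul, det_diagonal]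

end Rank

section BlockDifferential

open Matrix

/-- The position, in the block decomposition `1 + 2 + 2 + 2 + 1` of the eight basis vectors, of the
block containing a given one. -/
def level : Fin 8 → ℕ := ![0, 1, 1, 2, 2, 3, 3, 4]

/-- The square-zero `8 × 8` matrices that are strictly upper triangular with respect to the block
decomposition `1 + 2 + 2 + 2 + 1`. -/
structure IsBlockDifferential {R : Type*} [CommRing R] (M : Matrix (Fin 8) (Fin 8) R) : Prop where
  apply_eq_zero : ∀ i j, level j ≤ level i → M i j = 0
  mul_self : M * M = 0

namespace IsBlockDifferential

variable {R : Type*} [CommRing R] {M : Matrix (Fin 8) (Fin 8) R}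

lemma sum_eq_zero (h : IsBlockDifferential M) (i j : Fin 8) :
    ∑ l with level i < level l ∧ level l < level j, M i l * M l j = 0 := by
  rw [Finset.sum_filter_of_ne, ← mul_apply, h.mul_self, Matrix.zero_apply]
  intro l _ hl
  by_contra hlevel
  refine hl ?_
  rcases not_and_or.1 hlevel with hil | hlj
  · rw [h.apply_eq_zero i l (not_lt.1 hil), zero_mul]
  · rw [h.apply_eq_zero l j (not_lt.1 hlj), mul_zero]

lemma map {S : Type*} [CommRing S] (h : IsBlockDifferential M) (f : R →+* S) :
    IsBlockDifferential (M.map f) where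
  apply_eq_zero i j hij := by rw [map_apply, h.apply_eq_zero i j hij, map_zero]
  mul_self := by rw [← Matrix.map_mul, h.mul_self, Matrix.map_zero _ (map_zero f)]

lemma row_zero_mul_col_of_level_eq_two (h : IsBlockDifferential M) {j : Fin 8}
    (hj : level j = 2) : M 0 1 * M 1 j + M 0 2 * M 2 j = 0 := by
  simpa +decide [Finset.sum_filter, Fin.sum_univ_eight, hj] using h.sum_eq_zero 0 j

lemma row_zero_mul_col_of_level_eq_three (h : IsBlockDifferential M) {j : Fin 8}
    (hj : level j = 3) :
    M 0 1 * M 1 j + M 0 2 * M 2 j + M 0 3 * M 3 j + M 0 4 * M 4 j = 0 := by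
  simpa +decide [Finset.sum_filter, Fin.sum_univ_eight, hj] using h.sum_eq_zero 0 j

lemma row_mul_col_of_level_eq_one_of_level_eq_three (h : IsBlockDifferential M) {i j : Fin 8}
    (hi : level i = 1) (hj : level j = 3) : M i 3 * M 3 j + M i 4 * M 4 j = 0 := by
  simpa +decide [Finset.sum_filter, Fin.sum_univ_eight, hi, hj] using h.sum_eq_zero i j

lemma row_mul_col_seven_of_level_eq_one (h : IsBlockDifferential M) {i : Fin 8}
    (hi : level i = 1) :
    M i 3 * M 3 7 + M i 4 * M 4 7 + M i 5 * M 5 7 + M i 6 * M 6 7 = 0 := by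
  simpa +decide [Finset.sum_filter, Fin.sum_univ_eight, hi] using h.sum_eq_zero i 7

lemma row_mul_col_seven_of_level_eq_two (h : IsBlockDifferential M) {i : Fin 8}
    (hi : level i = 2) : M i 5 * M 5 7 + M i 6 * M 6 7 = 0 := by
  simpa +decide [Finset.sum_filter, Fin.sum_univ_eight, hi] using h.sum_eq_zero i 7

section Factorization

variable [IsDomain R] {g a b q c d : R}

lemma mul_row_one_add_mul_row_two_of_level_eq_two (h : IsBlockDifferential M) (hg : g ≠ 0)
    (h₁ : M 0 1 = g * a) (h₂ : M 0 2 = g * b) {j : Fin 8} (hj : level j = 2) :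
    a * M 1 j + b * M 2 j = 0 := by
  refine mul_left_cancel₀ hg ?_
  linear_combination h.row_zero_mul_col_of_level_eq_two hj - M 1 j * h₁ - M 2 j * h₂

lemma mul_row_one_add_mul_row_two_mul_col_seven (h : IsBlockDifferential M) (hg : g ≠ 0)
    (h₁ : M 0 1 = g * a) (h₂ : M 0 2 = g * b) (hq : q ≠ 0) (h₅ : M 5 7 = q * c)
    (h₆ : M 6 7 = q * d) :
    (a * M 1 5 + b * M 2 5) * c + (a * M 1 6 + b * M 2 6) * d = 0 := by
  have hrow {j : Fin 8} (hj : level j = 2) : a * M 1 j + b * M 2 j = 0 :=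
    h.mul_row_one_add_mul_row_two_of_level_eq_two hg h₁ h₂ hj
  have hcol₁ := h.row_mul_col_seven_of_level_eq_one (i := 1) rfl
  have hcol₂ := h.row_mul_col_seven_of_level_eq_one (i := 2) rfl
  rw [h₅, h₆] at hcol₁ hcol₂
  refine mul_left_cancel₀ hq ?_
  linear_combination a * hcol₁ + b * hcol₂ - M 3 7 * hrow (j := 3) rfl -
    M 4 7 * hrow (j := 4) rfl

lemma mul_add_mul_add_mul_eq_zero (h : IsBlockDifferential M) (h₁ : M 0 1 = g * a)
    (h₂ : M 0 2 = g * b) (hcd : c ≠ 0 ∨ d ≠ 0) {s t l : R} (hs₅ : M 3 5 = d * s)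
    (hs₆ : M 3 6 = -(c * s)) (ht₅ : M 4 5 = d * t) (ht₆ : M 4 6 = -(c * t))
    (hl₅ : a * M 1 5 + b * M 2 5 = d * l) (hl₆ : a * M 1 6 + b * M 2 6 = -(c * l)) :
    g * l + M 0 3 * s + M 0 4 * t = 0 := by
  have hrow₅ := h.row_zero_mul_col_of_level_eq_three (j := 5) rfl
  have hrow₆ := h.row_zero_mul_col_of_level_eq_three (j := 6) rfl
  rw [h₁, h₂, hs₅, ht₅] at hrow₅
  rw [h₁, h₂, hs₆, ht₆] at hrow₆
  rcases hcd with hc | hd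
  · exact mul_left_cancel₀ hc (by linear_combination -hrow₆ + g * hl₆)
  · exact mul_left_cancel₀ hd (by linear_combination hrow₅ - g * hl₅)

variable [DecompositionMonoid R]

lemma exists_row_eq_mul (h : IsBlockDifferential M) (hg : g ≠ 0) (h₁ : M 0 1 = g * a)
    (h₂ : M 0 2 = g * b) (hab : IsRelPrime a b) {j : Fin 8} (hj : level j = 2) :
    ∃ u, M 1 j = b * u ∧ M 2 j = -(a * u) :=
  exists_eq_mul_of_mul_add_mul_eq_zero hab
    (h.mul_row_one_add_mul_row_two_of_level_eq_two hg h₁ h₂ hj)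

lemma exists_col_eq_mul (h : IsBlockDifferential M) (hq : q ≠ 0) (h₅ : M 5 7 = q * c)
    (h₆ : M 6 7 = q * d) (hcd : IsRelPrime c d) {i : Fin 8} (hi : level i = 2) :
    ∃ s, M i 5 = d * s ∧ M i 6 = -(c * s) := by
  refine exists_eq_mul_of_mul_add_mul_eq_zero hcd (mul_left_cancel₀ hq ?_)
  linear_combination h.row_mul_col_seven_of_level_eq_two hi - M i 5 * h₅ - M i 6 * h₆

end Factorization

end IsBlockDifferential

/-- The transpose of a square matrix along its antidiagonal. -/
def antitranspose {R : Type*} {n : ℕ} (M : Matrix (Fin n) (Fin n) R) : Matrix (Fin n) (Fin n) R :=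
  Mᵀ.submatrix Fin.revPerm Fin.revPerm

lemma IsBlockDifferential.antitranspose {R : Type*} [CommRing R] {M : Matrix (Fin 8) (Fin 8) R}
    (h : IsBlockDifferential M) : IsBlockDifferential (antitranspose M) where
  apply_eq_zero i j hij := h.apply_eq_zero _ _ (by revert i j; decide)
  mul_self := by
    rw [_root_.antitranspose, submatrix_mul_equiv, ← transpose_mul, h.mul_self, transpose_zero,
      submatrix_zero, Pi.zero_apply, Pi.zero_apply]

section Field

variable {k : Type*} [Field k] {M : Matrix (Fin 8) (Fin 8) k}

lemma rank_le_three_of_columns_eq_zero (hM : ∀ i, ∀ j < 5, M i j = 0) : M.rank ≤ 3 := by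
  rw [← rank_transpose]
  refine (Mᵀ.rank_le_card_of_support_subset {5, 6, 7} fun j hj => ?_).trans_eq (by simp)
  by_contra hj'
  have hj5 : j < 5 := by clear hj; revert j; decide
  exact hj (funext fun i => hM i j hj5)

namespace IsBlockDifferential

lemma linearIndependent_middle (h : IsBlockDifferential M) (hrank : M.rank = 4)
    (h₁ : M 0 1 = 0) (h₂ : M 0 2 = 0) (h₃₅ : M 3 5 = 0) (h₃₆ : M 3 6 = 0) (h₄₅ : M 4 5 = 0)
    (h₄₆ : M 4 6 = 0) : LinearIndependent k (M.submatrix ![0, 1, 2] ![3, 4, 5, 6]).row := by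
  have hcorner (i j : Fin 8) : (i, j) ∈ [(0, 1), (0, 2), (3, 5), (3, 6), (4, 5), (4, 6)] ∨
      level j ≤ level i ∨ j = 7 ∨
        i ∈ Set.range ![0, 1, 2] ∧ j ∈ Set.range ![3, 4, 5, 6] := by
    revert i j
    decide
  refine linearIndependent_row_submatrix (by decide) 7 (fun i j hj hij => ?_) (by simp [hrank])
  refine (((hcorner i j).resolve_left ?_).resolve_left ?_).resolve_left hj
  · contrapose! hij
    simp only [List.mem_cons, Prod.mk.injEq, List.not_mem_nil, or_false] at hij
    rcases hij with ⟨rfl, rfl⟩ | ⟨rfl, rfl⟩ | ⟨rfl, rfl⟩ | ⟨rfl, rfl⟩ | ⟨rfl, rfl⟩ | ⟨rfl, rfl⟩ <;>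
      assumption
  · exact fun hlevel => hij (h.apply_eq_zero i j hlevel)

lemma eq_zero_of_mul_row_one_add_mul_row_two_eq_zero (h : IsBlockDifferential M)
    (hrank : M.rank = 4) (h₁ : M 0 1 = 0) (h₂ : M 0 2 = 0) (h₃₅ : M 3 5 = 0) (h₃₆ : M 3 6 = 0)
    (h₄₅ : M 4 5 = 0) (h₄₆ : M 4 6 = 0) {x y : k}
    (hxy : ∀ j, level j = 2 ∨ level j = 3 → x * M 1 j + y * M 2 j = 0) : x = 0 ∧ y = 0 := by
  have hli := h.linearIndependent_middle hrank h₁ h₂ h₃₅ h₃₆ h₄₅ h₄₆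
  have hpair : LinearIndependent k
      ![(M.submatrix ![0, 1, 2] ![3, 4, 5, 6]).row 1,
        (M.submatrix ![0, 1, 2] ![3, 4, 5, 6]).row 2] :=
    LinearIndependent.pair_iff.2 fun s t hst => by
      have hcomb := Fintype.linearIndependent_iff.1 hli ![0, s, t] (by
        rw [Fin.sum_univ_three]
        simpa only [cons_val, zero_smul, zero_add] using hst)
      exact ⟨hcomb 1, hcomb 2⟩
  refine LinearIndependent.pair_iff.1 hpair x y (funext fun l => ?_)
  have hlevel : level (![3, 4, 5, 6] l) = 2 ∨ level (![3, 4, 5, 6] l) = 3 := by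
    revert l
    decide
  exact hxy _ hlevel

lemma det_mul_det_eq_mulVec (h : IsBlockDifferential M) (h₁₃ : M 1 3 = 0) (h₁₄ : M 1 4 = 0)
    (h₂₃ : M 2 3 = 0) (h₂₄ : M 2 4 = 0) {u v t : Fin 8 → k} (hu : M *ᵥ u = Pi.single 1 1)
    (hv : M *ᵥ v = Pi.single 2 1) (ht₁ : (M *ᵥ t) 1 = 0) (ht₂ : (M *ᵥ t) 2 = 0) {i : Fin 8}
    (hi : i = 3 ∨ i = 4) :
    (M.submatrix ![1, 2, i] ![5, 6, 7]).det * (of fun a => ![u, v, t] a ∘ ![5, 6, 7]).det =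
      (M *ᵥ t) i := by
  rw [det_submatrix_mul_det (d := ![1, 1, (M *ᵥ t) i]) (by decide), Fin.prod_univ_three]
  · simp
  · intro a j hj
    rcases hi with rfl | rfl <;> fin_cases a <;> fin_cases j <;>
      simp_all +decide [h.apply_eq_zero]
  · intro a
    ext b
    rcases hi with rfl | rfl <;> fin_cases a <;> fin_cases b <;> simp [hu, hv, ht₁, ht₂]

lemma exists_det_ne_zero (h : IsBlockDifferential M) (hrank : M.rank = 4)
    (h₁ : M 0 1 = 0) (h₂ : M 0 2 = 0) (h₁₃ : M 1 3 = 0) (h₁₄ : M 1 4 = 0) (h₂₃ : M 2 3 = 0)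
    (h₂₄ : M 2 4 = 0) :
    (M.submatrix ![1, 2, 3] ![5, 6, 7]).det ≠ 0 ∨ (M.submatrix ![1, 2, 4] ![5, 6, 7]).det ≠ 0 := by
  have hpreimage {v : Fin 8 → k} (hv : M *ᵥ v = 0) : ∃ w, M *ᵥ w = v :=
    exists_mulVec_eq_of_mulVec_eq_zero h.mul_self (by simp [hrank]) hv
  obtain ⟨u, hu⟩ := hpreimage (v := Pi.single 1 1) (by
    ext i
    fin_cases i <;> simp +decide [h.apply_eq_zero, h₁])
  obtain ⟨v, hv⟩ := hpreimage (v := Pi.single 2 1) (by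
    ext i
    fin_cases i <;> simp +decide [h.apply_eq_zero, h₂])
  obtain ⟨x, y, hxy, hxy0⟩ : ∃ x y, (x ≠ 0 ∨ y ≠ 0) ∧ x * M 0 3 + y * M 0 4 = 0 := by
    by_cases h₀₃ : M 0 3 = 0
    · exact ⟨1, 0, by simp [h₀₃]⟩
    · exact ⟨-M 0 4, M 0 3, Or.inr h₀₃, by ring⟩
  obtain ⟨t, ht⟩ := hpreimage (v := Pi.single 3 x + Pi.single 4 y) (by
    ext i
    fin_cases i <;> simp +decide [mulVec_add, h.apply_eq_zero, h₁₃, h₁₄, h₂₃, h₂₄, hxy0])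
  have hdet {i : Fin 8} (hi : i = 3 ∨ i = 4) :=
    h.det_mul_det_eq_mulVec h₁₃ h₁₄ h₂₃ h₂₄ hu hv (t := t) (by simp [ht]) (by simp [ht]) hi
  by_contra! hzero
  have hx := hdet (Or.inl rfl)
  have hy := hdet (Or.inr rfl)
  rw [hzero.1, zero_mul, ht] at hx
  rw [hzero.2, zero_mul, ht] at hy
  exact hxy.elim (· (by simpa using hx.symm)) (· (by simpa using hy.symm))

end IsBlockDifferential

end Field

end BlockDifferential

section PuncturedExact

open Matrix

variable {σ k : Type*} [Field k]

/-- The square-zero block differentials over a polynomial ring that vanish at the origin and are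
exact at every other point; for a square-zero `8 × 8` matrix over a field, exactness means that the
rank is `4`. -/
structure IsPuncturedExact (D : Matrix (Fin 8) (Fin 8) (MvPolynomial σ k)) : Prop
    extends IsBlockDifferential D where
  eval_zero : ∀ i j, eval 0 (D i j) = 0
  rank_eval : ∀ a ≠ 0, (D.map (eval a)).rank = 4

namespace IsPuncturedExact

variable {D : Matrix (Fin 8) (Fin 8) (MvPolynomial σ k)}

lemma antitranspose (h : IsPuncturedExact D) : IsPuncturedExact (antitranspose D) where
  toIsBlockDifferential := h.toIsBlockDifferential.antitranspose
  eval_zero _ _ := h.eval_zero _ _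
  rank_eval a ha := by
    rw [_root_.antitranspose, ← submatrix_map, rank_submatrix, transpose_map, rank_transpose,
      h.rank_eval a ha]

variable [Fintype σ] [IsAlgClosed k]

lemma eq_zero_of_syzygy (h : IsPuncturedExact D) (hσ : 3 < Fintype.card σ) (h₁ : D 0 1 = 0)
    (h₂ : D 0 2 = 0) {s t : MvPolynomial σ k}
    (hst : ∀ i, level i ≤ 1 → D i 3 * s + D i 4 * t = 0) : s = 0 ∧ t = 0 := by
  by_contra hne
  have hcard : Fintype.card {i // level i ≤ 1} = 3 := rfl
  obtain ⟨z, hz, hcol⟩ := exists_ne_zero_eval_eq_zero_of_syzygy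
    (p := fun i : {i // level i ≤ 1} => D i 3) (q := fun i => D i 4) (by rwa [hcard]) (by lia)
    (fun _ => h.eval_zero _ _) (fun _ => h.eval_zero _ _) (not_and_or.1 hne)
    fun i => hst i i.2
  have hrank : (D.map (eval z)).rank ≤ 3 := rank_le_three_of_columns_eq_zero fun i j hj => by
    have hij : level j ≤ level i ∨ i = 0 ∧ (j = 1 ∨ j = 2) ∨ level i ≤ 1 ∧ (j = 3 ∨ j = 4) := by
      revert i j
      decide
    rw [map_apply]
    rcases hij with hij | ⟨rfl, rfl | rfl⟩ | ⟨hi, rfl | rfl⟩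
    · rw [h.apply_eq_zero i j hij, map_zero]
    · rw [h₁, map_zero]
    · rw [h₂, map_zero]
    · exact (hcol ⟨i, hi⟩).1
    · exact (hcol ⟨i, hi⟩).2
  simp [h.rank_eval z hz] at hrank

lemma card_lt_four_of_first_block_eq_zero (h : IsPuncturedExact D) (h₁ : D 0 1 = 0)
    (h₂ : D 0 2 = 0) : Fintype.card σ < 4 := by
  by_contra! hσ
  have hcol {j : Fin 8} (hj : level j = 3) : D 3 j = 0 ∧ D 4 j = 0 := by
    refine h.eq_zero_of_syzygy hσ h₁ h₂ fun i hi => ?_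
    rcases Nat.le_one_iff_eq_zero_or_eq_one.1 hi with hi | hi
    · obtain rfl : i = 0 := by revert i; decide
      simpa [h₁, h₂] using h.row_zero_mul_col_of_level_eq_three hj
    · exact h.row_mul_col_of_level_eq_one_of_level_eq_three hi hj
  obtain ⟨h₃₅, h₄₅⟩ := hcol (j := 5) rfl
  obtain ⟨h₃₆, h₄₆⟩ := hcol (j := 6) rfl
  obtain ⟨z, hz, hminors⟩ := exists_ne_zero_maximalMinors_eq_zero (i := 0)
    (A := D.submatrix ![0, 1, 2] ![3, 4, 5, 6]) (by lia) (fun _ => h.eval_zero _ _)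
  rw [← submatrix_map] at hminors
  refine maximalMinors_ne_zero ?_ hminors
  refine (h.map (eval z)).linearIndependent_middle (h.rank_eval z hz) ?_ ?_ ?_ ?_ ?_ ?_ <;>
    simp [*]

variable {g a b q c d : MvPolynomial σ k}

lemma card_lt_four_of_eval_eq_zero (h : IsPuncturedExact D)
    (hg : g ≠ 0) (h₁ : D 0 1 = g * a) (h₂ : D 0 2 = g * b) (hab : IsRelPrime a b)
    (ha : eval 0 a = 0) (hb : eval 0 b = 0) (hq : q ≠ 0) (h₅ : D 5 7 = q * c)
    (h₆ : D 6 7 = q * d) (hcd : IsRelPrime c d) : Fintype.card σ < 4 := by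
  by_contra! hσ
  obtain ⟨u, hu₁, hu₂⟩ := h.exists_row_eq_mul hg h₁ h₂ hab (j := 3) rfl
  obtain ⟨v, hv₁, hv₂⟩ := h.exists_row_eq_mul hg h₁ h₂ hab (j := 4) rfl
  obtain ⟨w, hw₁, hw₂⟩ : ∃ w, D 1 5 * c + D 1 6 * d = b * w ∧
      D 2 5 * c + D 2 6 * d = -(a * w) :=
    exists_eq_mul_of_mul_add_mul_eq_zero hab (by
      linear_combination h.mul_row_one_add_mul_row_two_mul_col_seven hg h₁ h₂ hq h₅ h₆)
  obtain ⟨z, hz, hzero, -⟩ := exists_ne_forall_eval_eq_zero (x := 0) (q := 1)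
    (f := ![a, b, D 1 5 * D 2 6 - D 1 6 * D 2 5]) (by rwa [Fintype.card_fin])
    (by simp [Fin.forall_fin_succ, ha, hb, h.eval_zero, -MvPolynomial.eval_zero]) (by simp)
  obtain ⟨za, zb, zdet⟩ : eval z a = 0 ∧ eval z b = 0 ∧
      eval z (D 1 5) * eval z (D 2 6) - eval z (D 1 6) * eval z (D 2 5) = 0 := by
    simpa [Fin.forall_fin_succ] using hzero
  have zw₁ := congrArg (eval z) hw₁
  have zw₂ := congrArg (eval z) hw₂
  simp only [map_add, map_mul, map_neg, za, zb, zero_mul, neg_zero] at zw₁ zw₂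
  have hdet {i : Fin 8} (hi : level i = 2) :
      ((D.map (eval z)).submatrix ![1, 2, i] ![5, 6, 7]).det = 0 := by
    obtain ⟨s, hs₅, hs₆⟩ := h.exists_col_eq_mul hq h₅ h₆ hcd hi
    rw [det_fin_three]
    simp only [submatrix_apply, map_apply, cons_val, hs₅, hs₆, map_mul, map_neg]
    linear_combination eval z s * eval z (D 2 7) * zw₁ - eval z s * eval z (D 1 7) * zw₂ +
      eval z (D i 7) * zdet
  refine ((h.map (eval z)).exists_det_ne_zero (h.rank_eval z hz) ?_ ?_ ?_ ?_ ?_ ?_).elim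
    (· (hdet rfl)) (· (hdet rfl)) <;>
  simp [*]

lemma card_lt_four_of_eval_ne_zero (h : IsPuncturedExact D) (hg : g ≠ 0) (h₁ : D 0 1 = g * a)
    (h₂ : D 0 2 = g * b) (hab₀ : eval 0 a ≠ 0 ∨ eval 0 b ≠ 0)
    (hq : q ≠ 0) (h₅ : D 5 7 = q * c) (h₆ : D 6 7 = q * d) (hcd : IsRelPrime c d)
    (hcd₀ : eval 0 c ≠ 0 ∨ eval 0 d ≠ 0) : Fintype.card σ < 4 := by
  by_contra! hσ
  obtain ⟨s, hs₅, hs₆⟩ := h.exists_col_eq_mul hq h₅ h₆ hcd (i := 3) rfl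
  obtain ⟨t, ht₅, ht₆⟩ := h.exists_col_eq_mul hq h₅ h₆ hcd (i := 4) rfl
  obtain ⟨l, hl₅, hl₆⟩ : ∃ l, a * D 1 5 + b * D 2 5 = d * l ∧ a * D 1 6 + b * D 2 6 = -(c * l) :=
    exists_eq_mul_of_mul_add_mul_eq_zero hcd (by
      linear_combination h.mul_row_one_add_mul_row_two_mul_col_seven hg h₁ h₂ hq h₅ h₆)
  have hmul := h.mul_add_mul_add_mul_eq_zero h₁ h₂
    (hcd₀.imp (by rintro hc rfl; simp at hc) (by rintro hd rfl; simp at hd))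
    hs₅ hs₆ ht₅ ht₆ hl₅ hl₆
  have hg₀ : eval 0 g = 0 := map_eq_zero_of_map_mul_eq_zero hab₀
    (by rw [mul_comm, ← h₁, h.eval_zero]) (by rw [mul_comm, ← h₂, h.eval_zero])
  have eval_zero_eq_zero {x y p : MvPolynomial σ k} (hx : x = d * p) (hy : y = -(c * p))
      (hx₀ : eval 0 x = 0) (hy₀ : eval 0 y = 0) : eval 0 p = 0 :=
    map_eq_zero_of_map_mul_eq_zero hcd₀ (by rw [← neg_eq_iff_eq_neg.2 hy, map_neg, hy₀, neg_zero])
      (by rw [← hx, hx₀])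
  have hl₀ : eval 0 l = 0 := eval_zero_eq_zero hl₅ hl₆
    (by simp only [map_add, map_mul, h.eval_zero, mul_zero, add_zero])
    (by simp only [map_add, map_mul, h.eval_zero, mul_zero, add_zero])
  have hs₀ : eval 0 s = 0 := eval_zero_eq_zero hs₅ hs₆ (h.eval_zero _ _) (h.eval_zero _ _)
  have ht₀ : eval 0 t = 0 := eval_zero_eq_zero ht₅ ht₆ (h.eval_zero _ _) (h.eval_zero _ _)
  obtain ⟨f, hf, hf₀⟩ : ∃ f, (f = a ∨ f = b) ∧ eval 0 f ≠ 0 := by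
    simpa using hab₀
  obtain ⟨z, hz, zg, zl, zs, zt, zf⟩ :=
    exists_ne_eval_eq_zero_of_mul_add_mul_add_mul_eq_zero hσ hmul hg₀ hl₀ hs₀ ht₀ hf₀
  have hrow (j : Fin 8) (hj : level j = 2 ∨ level j = 3) :
      eval z a * eval z (D 1 j) + eval z b * eval z (D 2 j) = 0 := by
    rw [← map_mul, ← map_mul, ← map_add]
    rcases hj with hj | hj
    · rw [h.mul_row_one_add_mul_row_two_of_level_eq_two hg h₁ h₂ hj, map_zero]
    · obtain rfl | rfl : j = 5 ∨ j = 6 := by revert j; decide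
      · rw [hl₅, map_mul, zl, mul_zero]
      · rw [hl₆, map_neg, map_mul, zl, mul_zero, neg_zero]
  obtain ⟨za, zb⟩ : eval z a = 0 ∧ eval z b = 0 := by
    refine (h.map (eval z)).eq_zero_of_mul_row_one_add_mul_row_two_eq_zero (h.rank_eval z hz)
      ?_ ?_ ?_ ?_ ?_ ?_ hrow <;> simp [*]
  rcases hf with rfl | rfl
  · exact zf za
  · exact zf zb

end IsPuncturedExact

end PuncturedExact

theorem statement_7_general {σ k : Type*} [Fintype σ] [Field k] [IsAlgClosed k]
    {D : Matrix (Fin 8) (Fin 8) (MvPolynomial σ k)} (h : IsPuncturedExact D) :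
    Fintype.card σ < 4 := by
  by_cases hfirst : D 0 1 = 0 ∧ D 0 2 = 0
  · exact h.card_lt_four_of_first_block_eq_zero hfirst.1 hfirst.2
  by_cases hlast : D 5 7 = 0 ∧ D 6 7 = 0
  · exact h.antitranspose.card_lt_four_of_first_block_eq_zero hlast.2 hlast.1
  obtain ⟨g, a, b, hg, h₁, h₂, hab⟩ := exists_eq_mul_isRelPrime (not_and_or.1 hfirst)
  obtain ⟨q, c, d, hq, h₅, h₆, hcd⟩ := exists_eq_mul_isRelPrime (not_and_or.1 hlast)
  by_cases hab₀ : eval 0 a = 0 ∧ eval 0 b = 0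
  · exact h.card_lt_four_of_eval_eq_zero hg h₁ h₂ hab hab₀.1 hab₀.2 hq h₅ h₆ hcd
  by_cases hcd₀ : eval 0 c = 0 ∧ eval 0 d = 0
  · exact h.antitranspose.card_lt_four_of_eval_eq_zero hq h₆ h₅ hcd.symm hcd₀.2 hcd₀.1 hg h₂ h₁
      hab.symm
  exact h.card_lt_four_of_eval_ne_zero hg h₁ h₂ (not_and_or.1 hab₀) hq h₅ h₆ hcd
    (not_and_or.1 hcd₀)

theorem statement_7 {k : Type*} [Field k] [IsAlgClosed k] {r : ℕ}
    (D : Matrix (Fin 8) (Fin 8) (MvPolynomial (Fin r) k))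
    (hstd : StandardConditions D)
    (hzero : ∀ i j : Fin 8,
        ¬((1 ≤ (i : ℕ) + 1 ∧ (i : ℕ) + 1 ≤ 1 ∧ 2 ≤ (j : ℕ) + 1 ∧ (j : ℕ) + 1 ≤ 8) ∨
          (2 ≤ (i : ℕ) + 1 ∧ (i : ℕ) + 1 ≤ 3 ∧ 4 ≤ (j : ℕ) + 1 ∧ (j : ℕ) + 1 ≤ 8) ∨
          (4 ≤ (i : ℕ) + 1 ∧ (i : ℕ) + 1 ≤ 5 ∧ 6 ≤ (j : ℕ) + 1 ∧ (j : ℕ) + 1 ≤ 8) ∨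
          (6 ≤ (i : ℕ) + 1 ∧ (i : ℕ) + 1 ≤ 7 ∧ 8 ≤ (j : ℕ) + 1 ∧ (j : ℕ) + 1 ≤ 8)) →
        D i j = 0) :
    r < 4 := by
  simpa using statement_7_general ⟨⟨fun i j hij => hzero i j (by revert i j; decide), hstd.2.1⟩,
    hstd.2.2.1, hstd.2.2.2.1⟩
end

section
/- Let k be an algebraically closed field and S = k[x_1,...,x_r]. Suppose D = (p_{ij}) is an 8×8 matrix with entries in S satisfying the standard conditions, and suppose moreover that p_{ij} = 0 unless (1 ≤ i ≤ 2 and 3 ≤ j ≤ 8) or (3 ≤ i ≤ 4 and 5 ≤ j ≤ 8) or (5 ≤ i ≤ 6 and 7 ≤ j ≤ 8). Then r < 3, i.e., r ≤ 2. -/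
open MvPolynomial

/-!
Write the differential in `2 × 2` blocks, with `A`, `B`, `C` on the superdiagonal, and suppose there
are at least three variables. If `A` or `C` vanished, the determinant of the block left over would
be nonzero away from the origin, hence a unit, although all entries vanish at the origin; if `B`
vanished, the complex `S² → S⁴ → S²` formed by the remaining blocks would be exact by a depth
argument, with the same contradiction. As `S` is factorial, `D² = 0` then makes `A`, `B`, `C`
multiples `c α (u^⊥)ᵀ`, `g u vᵀ`, `e v^⊥ γᵀ` of dyads of primitive vectors. Exactness at a point
where `α`, `v`, `γ` do not vanish forces a certain polynomial, the discriminant, to be nonzero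
there; primitive vectors vanish only in codimension two, so the discriminant is a unit. On the other
hand `u₀`, `u₁` and a third polynomial `b` multiply the entries of `γ` into the ideal `(u₀, u₁)` and
have no common zero but the origin. Since the depth is at least three and the Koszul complex on
`u₀`, `u₁` is exact, `γ` itself lies in that ideal, so that `γ^⊥ = W u` for a matrix `W`. This
exhibits the coefficient `t` in `F γ^⊥ = t u` as an eigenvalue of `F W`; hence `t`, and with it the
discriminant, vanishes at the origin, which is absurd for a unit.
-/

open RingTheory.Sequence

section RegularSequences

variable {R M : Type*} [CommRing R] [AddCommGroup M] [Module R M]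

theorem isWeaklyRegular_of_flat [Module.Flat R M] {rs : List R} (h : IsWeaklyRegular R rs) :
    IsWeaklyRegular M rs :=
  ((TensorProduct.rid R M).isWeaklyRegular_congr rs).1 (h.isWeaklyRegular_lTensor)

theorem exists_eq_smul_of_isWeaklyRegular_pair {x y : R} (h : IsWeaklyRegular M [x, y])
    {a b : M} (hab : y • a = x • b) : ∃ c, a = x • c ∧ b = y • c := by
  rw [isWeaklyRegular_cons_iff, isWeaklyRegular_singleton_iff,
    isSMulRegular_quotient_iff_mem_of_smul_mem] at h
  obtain ⟨hx, hy⟩ := h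
  obtain ⟨c, -, rfl⟩ := (Submodule.mem_smul_pointwise_iff_exists _ _ _).1 <|
    hy a (hab ▸ Submodule.smul_mem_pointwise_smul b x ⊤ trivial)
  exact ⟨c, rfl, hx (by simp only [← hab, smul_comm x y])⟩

theorem exists_eq_smul_sub_smul_of_isWeaklyRegular_triple {x y z : R}
    (h : IsWeaklyRegular M [x, y, z]) {a b c : M} (habc : z • a + x • b + y • c = 0) :
    ∃ d₁ d₂ d₃, a = y • d₁ - x • d₂ ∧ b = z • d₂ - y • d₃ ∧ c = x • d₃ - z • d₁ := by
  obtain ⟨hxy, hz⟩ := (isWeaklyRegular_append_iff M [x, y] [z]).1 h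
  rw [isWeaklyRegular_singleton_iff, isSMulRegular_quotient_iff_mem_of_smul_mem] at hz
  have hmem : ∀ m : M, m ∈ Ideal.ofList [x, y] • (⊤ : Submodule R M) ↔
      ∃ p q, m = x • p + y • q := by
    intro m
    rw [Ideal.ofList_cons, Ideal.ofList_singleton]
    simp [Submodule.sup_smul, Submodule.mem_sup, Submodule.ideal_span_singleton_smul,
      Submodule.mem_smul_pointwise_iff_exists, eq_comm]
  obtain ⟨p, q, rfl⟩ := (hmem a).1 <| hz a <| (hmem _).2
    ⟨-b, -c, by linear_combination (norm := module) habc⟩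
  obtain ⟨d, hb, hc⟩ := exists_eq_smul_of_isWeaklyRegular_pair hxy
    (a := c + z • q) (b := -(b + z • p)) (by linear_combination (norm := module) habc)
  refine ⟨q, -p, d, by module, ?_, ?_⟩
  · linear_combination (norm := module) -hc
  · linear_combination (norm := module) hb

theorem mem_range_of_smul_mem_range {L N : Type*} [AddCommGroup L] [Module R L] [Module.Flat R L]
    [AddCommGroup N] [Module R N] [Module.Flat R N] [Module.Flat R M]
    {f : L →ₗ[R] N} {g : N →ₗ[R] M} (hf : Function.Injective f) (hfg : Function.Exact f g)
    {x y z : R} (h : IsWeaklyRegular R [x, y, z]) {m : M}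
    (hx : x • m ∈ LinearMap.range g) (hy : y • m ∈ LinearMap.range g)
    (hz : z • m ∈ LinearMap.range g) : m ∈ LinearMap.range g := by
  obtain ⟨a, ha⟩ := hx
  obtain ⟨b, hb⟩ := hy
  obtain ⟨c, hc⟩ := hz
  have lift : ∀ {r s : R} {p q : N}, g p = r • m → g q = s • m → ∃ l, f l = s • p - r • q := by
    intro r s p q hp hq
    exact (hfg _).1 (by rw [map_sub, map_smul, map_smul, hp, hq, smul_comm, sub_self])
  obtain ⟨l₁, hl₁⟩ := lift ha hb
  obtain ⟨l₂, hl₂⟩ := lift hb hc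
  obtain ⟨l₃, hl₃⟩ := lift hc ha
  obtain ⟨d₁, d₂, -, rfl, -, -⟩ :=
    exists_eq_smul_sub_smul_of_isWeaklyRegular_triple (isWeaklyRegular_of_flat (M := L) h)
      (a := l₁) (b := l₂) (c := l₃) (hf (by
        simp only [map_add, map_smul, hl₁, hl₂, hl₃, map_zero]
        module))
  have hxy : IsWeaklyRegular R [x, y] := ((isWeaklyRegular_append_iff R [x, y] [z]).1 h).1
  obtain ⟨n, hn, -⟩ := exists_eq_smul_of_isWeaklyRegular_pair (isWeaklyRegular_of_flat (M := N) hxy)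
    (a := a - f d₁) (b := b - f d₂) (by
      rw [map_sub, map_smul, map_smul] at hl₁
      linear_combination (norm := module) -hl₁)
  have hxM : IsSMulRegular M x :=
    ((isWeaklyRegular_cons_iff M x [y]).1 (isWeaklyRegular_of_flat (M := M) hxy)).1
  refine ⟨n, hxM ?_⟩
  change x • g n = x • m
  rw [← map_smul, ← hn, map_sub, ha, hfg.apply_apply_eq_zero, sub_zero]

theorem isWeaklyRegular_map_X_pow {σ : Type*} {l : List σ} (hl : l.Nodup) (N : ℕ) :
    IsWeaklyRegular (MvPolynomial σ R) (l.map fun i ↦ (X i : MvPolynomial σ R) ^ N) := by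
  refine ⟨fun i hi ↦ ?_⟩
  have hspan : Ideal.ofList ((l.map fun i ↦ (X i : MvPolynomial σ R) ^ N).take i) =
      Ideal.span ((fun d ↦ monomial d 1) '' ((Finsupp.single · N) '' {j | j ∈ l.take i})) := by
    simp only [Ideal.ofList, X_pow_eq_monomial]
    congr 1
    ext
    simp [← List.map_take]
  have hi' : i < l.length := by simpa using hi
  rw [isSMulRegular_quotient_iff_mem_of_smul_mem, smul_eq_mul, Ideal.mul_top, hspan,
    List.getElem_map]
  intro p hp
  rw [mem_ideal_span_monomial_image] at hp ⊢
  intro d hd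
  obtain ⟨_, ⟨j, hj, rfl⟩, hle⟩ := hp (d + Finsupp.single l[i] N) (by
    rw [mem_support_iff, smul_eq_mul, X_pow_eq_monomial, mul_comm, coeff_mul_monomial]
    simpa using hd)
  have hne : l[i] ≠ j := by
    rintro rfl
    obtain ⟨n, hn, hij⟩ := List.mem_take_iff_getElem.1 hj
    have := (hl.getElem_inj_iff).1 hij
    omega
  refine ⟨_, ⟨j, hj, rfl⟩, ?_⟩
  simpa [Finsupp.single_apply, hne] using hle

theorem mem_range_of_X_pow_smul_mem_range {σ L N M : Type*}
    [AddCommGroup L] [Module (MvPolynomial σ R) L] [Module.Flat (MvPolynomial σ R) L]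
    [AddCommGroup N] [Module (MvPolynomial σ R) N] [Module.Flat (MvPolynomial σ R) N]
    [AddCommGroup M] [Module (MvPolynomial σ R) M] [Module.Flat (MvPolynomial σ R) M]
    {f : L →ₗ[MvPolynomial σ R] N} {g : N →ₗ[MvPolynomial σ R] M}
    (hf : Function.Injective f) (hfg : Function.Exact f g) {x y z : σ} (hxyz : [x, y, z].Nodup)
    {m : M} (hm : ∃ n : ℕ, ∀ i, (X i ^ n : MvPolynomial σ R) • m ∈ LinearMap.range g) :
    m ∈ LinearMap.range g := by
  obtain ⟨n, hn⟩ := hm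
  exact mem_range_of_smul_mem_range hf hfg (isWeaklyRegular_map_X_pow hxyz n) (hn x) (hn y) (hn z)

end RegularSequences

section Nullstellensatz

theorem map_eq_zero_of_dvd {R S : Type*} [CommSemiring R] [CommSemiring S] (f : R →+* S) {p q : R}
    (hpq : p ∣ q) (hp : f p = 0) : f q = 0 :=
  eq_zero_of_zero_dvd (hp ▸ map_dvd f hpq)

variable {k σ : Type*} [Field k] [IsAlgClosed k] [Finite σ]

theorem exists_X_pow_mem_of_forall_exists_eval_ne_zero {I : Ideal (MvPolynomial σ k)}
    (h : ∀ a : σ → k, a ≠ 0 → ∃ f ∈ I, eval a f ≠ 0) :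
    ∃ n : ℕ, ∀ i, (X i ^ n : MvPolynomial σ k) ∈ I := by
  cases nonempty_fintype σ
  have hX : ∀ i, (X i : MvPolynomial σ k) ∈ I.radical := by
    intro i
    rw [← vanishingIdeal_zeroLocus_eq_radical (K := k), mem_vanishingIdeal_iff]
    intro a ha
    rcases eq_or_ne a 0 with rfl | ha₀
    · simp
    · obtain ⟨f, hf, hfa⟩ := h a ha₀
      exact absurd (ha f hf) hfa
  choose n hn using hX
  exact ⟨∑ i, n i, fun i ↦ Ideal.pow_mem_of_pow_mem _ (hn i)
    (Finset.single_le_sum (fun _ _ ↦ Nat.zero_le _) (Finset.mem_univ i))⟩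

theorem exists_eval_eq_zero_and_eval_ne_zero [Nontrivial σ] {p w : MvPolynomial σ k}
    (hp : Prime p) (hw : ¬ p ∣ w) : ∃ a : σ → k, a ≠ 0 ∧ eval a p = 0 ∧ eval a w ≠ 0 := by
  by_contra! h
  have hX : ∀ i, p ∣ X i := by
    intro i
    have hmem : X i * w ∈ (Ideal.span {p}).radical := by
      rw [← vanishingIdeal_zeroLocus_eq_radical (K := k), mem_vanishingIdeal_iff]
      intro a ha
      rcases eq_or_ne a 0 with rfl | ha₀
      · simp
      · simp [h a ha₀ (ha p (Ideal.mem_span_singleton_self p))]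
    obtain ⟨n, hn⟩ := hmem
    exact (hp.dvd_or_dvd (hp.dvd_of_dvd_pow (Ideal.mem_span_singleton.1 hn))).resolve_right hw
  obtain ⟨i, j, hij⟩ := exists_pair_ne σ
  have hdvd : (X i : MvPolynomial σ k) ∣ X j :=
    (hp.associated_of_dvd X_prime (hX i)).symm.dvd.trans (hX j)
  exact hij (by simpa [X_dvd_X] using hdvd)

theorem isUnit_or_exists_prime_dvd {R : Type*} [CommMonoidWithZero R]
    [UniqueFactorizationMonoid R] {q : R} (hq : Prime q) (a : R) :
    IsUnit a ∨ ∃ p, Prime p ∧ p ∣ a := by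
  rcases eq_or_ne a 0 with rfl | ha
  · exact .inr ⟨q, hq, dvd_zero q⟩
  · by_cases hu : IsUnit a
    · exact .inl hu
    · obtain ⟨p, hp, hpa⟩ := WfDvdMonoid.exists_irreducible_factor hu ha
      exact .inr ⟨p, hp.prime, hpa⟩

theorem isUnit_of_forall_eval_ne_zero [Nontrivial σ] {f : MvPolynomial σ k}
    (h : ∀ a : σ → k, a ≠ 0 → eval a f ≠ 0) : IsUnit f := by
  obtain ⟨i, -⟩ := exists_pair_ne σ
  refine (isUnit_or_exists_prime_dvd (X_prime (i := i)) f).resolve_right ?_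
  rintro ⟨p, hp, hpf⟩
  obtain ⟨a, ha, hpa, -⟩ := exists_eval_eq_zero_and_eval_ne_zero (w := 1) hp hp.not_dvd_one
  exact h a ha (map_eq_zero_of_dvd (eval a) hpf hpa)

end Nullstellensatz

section PointwiseExact

open Matrix

theorem exists_mul_mul_eq_self {k m n : Type*} [Field k] [Fintype m] [Fintype n]
    (P : Matrix m n k) : ∃ T : Matrix n m k, P * T * P = P := by
  classical
  obtain ⟨s, hs⟩ := P.mulVecLin.rangeRestrict.exists_rightInverse_of_surjective
    (LinearMap.range_rangeRestrict _)
  obtain ⟨t, ht⟩ := s.exists_extend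
  refine ⟨LinearMap.toMatrix' t, toLin'.injective <| LinearMap.ext fun x ↦ ?_⟩
  have hx := LinearMap.congr_fun hs (P.mulVecLin.rangeRestrict x)
  have htx : t (P *ᵥ x) = s (P.mulVecLin.rangeRestrict x) := by
    rw [← ht]; rfl
  simpa [toLin'_mul, htx] using congrArg Subtype.val hx

theorem exists_mul_add_mul_eq_one {k l m n : Type*} [Field k] [Fintype l] [Fintype m] [Fintype n]
    [DecidableEq n] {P : Matrix m n k} {Q : Matrix n l k}
    (h : ∀ x, P *ᵥ x = 0 → ∃ y, Q *ᵥ y = x) :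
    ∃ (S : Matrix l n k) (T : Matrix n m k), Q * S + T * P = 1 := by
  obtain ⟨T, hT⟩ := exists_mul_mul_eq_self P
  have hker : ∀ j, ∃ y, Q *ᵥ y = (1 - T * P).col j := fun j ↦ h _ <| by
    rw [← mulVec_single_one, mulVec_mulVec, Matrix.mul_sub, ← Matrix.mul_assoc, hT, Matrix.mul_one,
      sub_self, zero_mulVec]
  choose y hy using hker
  refine ⟨.of fun i j ↦ y j i, T, ?_⟩
  rw [← eq_sub_iff_add_eq]
  ext i j
  exact congrFun (hy j) i

theorem det_smul_mem_of_mulVec_mem {R n : Type*} [CommRing R] [Fintype n] [DecidableEq n]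
    {U : Matrix n n R} {W : Submodule R (n → R)} (hW : ∀ w ∈ W, U *ᵥ w ∈ W)
    {w : n → R} (hw : U *ᵥ w ∈ W) : U.det • w ∈ W := by
  have hpoly : ∀ (q : Polynomial R), ∀ v ∈ W, Polynomial.aeval U q *ᵥ v ∈ W := by
    intro q v hv
    induction q using Polynomial.induction_on generalizing v with
    | C a => simpa [Algebra.algebraMap_eq_smul_one, smul_mulVec] using W.smul_mem a hv
    | add p q hp hq => simpa [add_mulVec] using W.add_mem (hp v hv) (hq v hv)
    | monomial n a ih =>
      simpa [pow_succ, ← mul_assoc, ← mulVec_mulVec] using ih _ (hW v hv)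
  have hcoeff : U.charpoly.coeff 0 • w = -(Polynomial.aeval U U.charpoly.divX *ᵥ (U *ᵥ w)) := by
    have hCH := congrArg (· *ᵥ w) U.aeval_self_charpoly
    rw [← U.charpoly.divX_mul_X_add] at hCH
    simp only [map_add, map_mul, Polynomial.aeval_X, Polynomial.aeval_C, add_mulVec, zero_mulVec,
      Algebra.algebraMap_eq_smul_one, smul_mulVec, one_mulVec, ← mulVec_mulVec] at hCH
    simpa using eq_neg_of_add_eq_zero_right hCH
  rw [det_eq_sign_charpoly_coeff, mul_smul, hcoeff]
  exact W.smul_mem _ (W.neg_mem (hpoly _ _ hw))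

theorem exists_X_pow_smul_mem_range_of_exact_eval {k σ l m n : Type*} [Field k] [IsAlgClosed k]
    [Finite σ] [Fintype l] [Finite m] [Fintype n]
    {P : Matrix m n (MvPolynomial σ k)} {Q : Matrix n l (MvPolynomial σ k)} (hPQ : P * Q = 0)
    (hexact : ∀ a : σ → k, a ≠ 0 → ∀ x, P.map (eval a) *ᵥ x = 0 → ∃ y, Q.map (eval a) *ᵥ y = x)
    {w : n → MvPolynomial σ k} (hw : P *ᵥ w = 0) :
    ∃ N : ℕ, ∀ i, (X i ^ N : MvPolynomial σ k) • w ∈ LinearMap.range Q.mulVecLin := by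
  classical
  cases nonempty_fintype m
  refine exists_X_pow_mem_of_forall_exists_eval_ne_zero (k := k) (σ := σ)
    (I := (LinearMap.range Q.mulVecLin).comap (LinearMap.toSpanSingleton _ _ w)) fun a ha ↦ ?_
  obtain ⟨S, T, hST⟩ := exists_mul_add_mul_eq_one (hexact a ha)
  obtain ⟨S', T', hST'⟩ : ∃ (S' : Matrix l n (MvPolynomial σ k))
      (T' : Matrix n m (MvPolynomial σ k)), (Q * S' + T' * P).map (eval a) = 1 := by
    refine ⟨S.map C, T.map C, ?_⟩
    have hC : eval a ∘ C = (id : k → k) := funext fun c ↦ eval_C c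
    rw [Matrix.map_add _ (map_add _), Matrix.map_mul, Matrix.map_mul, Matrix.map_map,
      Matrix.map_map, hC, Matrix.map_id, Matrix.map_id, hST]
  have hQ : (Q * S' + T' * P) * Q = Q * (S' * Q) := by
    rw [Matrix.add_mul, Matrix.mul_assoc, Matrix.mul_assoc, hPQ, Matrix.mul_zero, add_zero]
  have hw' : (Q * S' + T' * P) *ᵥ w = Q *ᵥ (S' *ᵥ w) := by
    rw [add_mulVec, ← mulVec_mulVec, ← mulVec_mulVec, hw, mulVec_zero, add_zero]
  refine ⟨(Q * S' + T' * P).det, det_smul_mem_of_mulVec_mem (W := LinearMap.range Q.mulVecLin)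
    ?_ ⟨_, hw'.symm⟩, ?_⟩
  · rintro _ ⟨y, rfl⟩
    exact ⟨(S' * Q) *ᵥ y, by simp only [mulVecLin_apply, mulVec_mulVec, hQ]⟩
  · rw [RingHom.map_det, RingHom.mapMatrix_apply, hST', det_one]
    exact one_ne_zero

theorem mulVec_injective_and_surjective_of_ker_le_range {k l m n : Type*} [Field k] [Fintype l]
    [Fintype m] [Fintype n] {P : Matrix m n k} {Q : Matrix n l k}
    (hcard : Fintype.card n = Fintype.card l + Fintype.card m)
    (h : ∀ x, P *ᵥ x = 0 → ∃ y, Q *ᵥ y = x) :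
    Function.Injective Q.mulVec ∧ Function.Surjective P.mulVec := by
  have hle : P.mulVecLin.ker ≤ Q.mulVecLin.range := h
  have hP := P.mulVecLin.finrank_range_add_finrank_ker
  have hQ := Q.mulVecLin.finrank_range_add_finrank_ker
  have hker := Submodule.finrank_mono hle
  have hrange := P.mulVecLin.range.finrank_le
  rw [Module.finrank_fintype_fun_eq_card] at hP hQ hrange
  constructor
  · rw [← coe_mulVecLin, ← LinearMap.ker_eq_bot, ← Submodule.finrank_eq_zero]
    lia
  · rw [← coe_mulVecLin, ← LinearMap.range_eq_top]
    apply Submodule.eq_top_of_finrank_eq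
    rw [Module.finrank_fintype_fun_eq_card]
    lia

theorem mulVec_surjective_of_exact_eval {k σ l m n : Type*} [Field k] [IsAlgClosed k]
    [Finite σ] [Fintype l] [Fintype m] [Fintype n] {x y z : σ} (hxyz : [x, y, z].Nodup)
    {P : Matrix m n (MvPolynomial σ k)} {Q : Matrix n l (MvPolynomial σ k)} (hPQ : P * Q = 0)
    (hcard : Fintype.card n = Fintype.card l + Fintype.card m)
    (hexact : ∀ a : σ → k, a ≠ 0 → ∀ x, P.map (eval a) *ᵥ x = 0 → ∃ y, Q.map (eval a) *ᵥ y = x) :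
    Function.Surjective P.mulVec := by
  have hpoint a ha := mulVec_injective_and_surjective_of_ker_le_range hcard (hexact a ha)
  have hQ : Function.Injective Q.mulVecLin := by
    rw [injective_iff_map_eq_zero]
    intro w hw
    obtain ⟨N, hN⟩ := exists_X_pow_smul_mem_range_of_exact_eval (Q := (0 : Matrix l l _))
      (Matrix.mul_zero Q)
      (fun a ha v hv ↦ ⟨0, ((hpoint a ha).1 (hv.trans (mulVec_zero _).symm)).symm ▸ mulVec_zero _⟩)
      hw
    obtain ⟨v, hv⟩ := hN x
    rw [mulVecLin_apply, zero_mulVec] at hv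
    exact (smul_eq_zero.1 hv.symm).resolve_left (pow_ne_zero N (X_ne_zero x))
  have hQP : Function.Exact Q.mulVecLin P.mulVecLin := by
    refine fun w ↦ ⟨fun hw ↦ ?_, ?_⟩
    · have hzero : Function.Exact (0 : PUnit →ₗ[MvPolynomial σ k] _) Q.mulVecLin :=
        (LinearMap.exact_zero_iff_injective _ _).2 hQ
      exact mem_range_of_X_pow_smul_mem_range (fun _ _ _ ↦ rfl) hzero hxyz
        (exists_X_pow_smul_mem_range_of_exact_eval hPQ hexact hw)
    · rintro ⟨v, rfl⟩
      simp only [mulVecLin_apply, mulVec_mulVec, hPQ, zero_mulVec]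
  intro w
  exact mem_range_of_X_pow_smul_mem_range hQ hQP hxyz <|
    exists_X_pow_smul_mem_range_of_exact_eval (P := (0 : Matrix m m _)) (Matrix.zero_mul P)
      (fun a ha v _ ↦ (hpoint a ha).2 v) (zero_mulVec w)

end PointwiseExact

section PlaneVectors

open Matrix

variable {R S : Type*} [CommRing R] [CommRing S]

/-- The vector `v` turned through a right angle. The pairing `v ⬝ᵥ perp w` is the determinant
of the pair `(w, v)`, so its vanishing expresses that the two vectors are parallel. -/
def perp (v : Fin 2 → R) : Fin 2 → R := ![-v 1, v 0]

@[simp]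
theorem perp_zero : perp (0 : Fin 2 → R) = 0 := by
  simp [perp]

@[simp]
theorem perp_perp (v : Fin 2 → R) : perp (perp v) = -v := by
  ext i; fin_cases i <;> simp [perp]

@[simp]
theorem perp_smul (c : R) (v : Fin 2 → R) : perp (c • v) = c • perp v := by
  ext i; fin_cases i <;> simp [perp]

theorem perp_eq_zero_iff {v : Fin 2 → R} : perp v = 0 ↔ v = 0 :=
  ⟨fun h ↦ by simpa [h] using (perp_perp v).symm, fun h ↦ by rw [h, perp_zero]⟩

@[simp]
theorem map_comp_perp (f : R →+* S) (v : Fin 2 → R) : f ∘ perp v = perp (f ∘ v) := by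
  ext i; fin_cases i <;> simp [perp]

@[simp]
theorem dotProduct_perp_self (v : Fin 2 → R) : v ⬝ᵥ perp v = 0 := by
  simp [perp, dotProduct, Fin.sum_univ_two]; ring

theorem perp_dotProduct_comm (v w : Fin 2 → R) : perp v ⬝ᵥ w = -(perp w ⬝ᵥ v) := by
  simp [perp, dotProduct, Fin.sum_univ_two]; ring

@[simp]
theorem perp_dotProduct_self (v : Fin 2 → R) : perp v ⬝ᵥ v = 0 := by
  rw [dotProduct_comm, dotProduct_perp_self]

theorem perp_mulVec_vecMul (M : Matrix (Fin 2) (Fin 2) R) (x : Fin 2 → R) :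
    perp (M *ᵥ x) ᵥ* M = M.det • perp x := by
  ext i
  fin_cases i <;> simp [perp, mulVec, vecMul, dotProduct, Fin.sum_univ_two, det_fin_two] <;> ring

/-- A vector of length two is primitive if its entries have no common factor. -/
def IsPrimitiveVec (v : Fin 2 → R) : Prop := IsRelPrime (v 0) (v 1)

theorem isPrimitiveVec_perp {v : Fin 2 → R} (hv : IsPrimitiveVec v) :
    IsPrimitiveVec (perp v) :=
  hv.symm.neg_left

theorem IsPrimitiveVec.ne_zero [Nontrivial R] {v : Fin 2 → R} (hv : IsPrimitiveVec v) :
    v ≠ 0 := by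
  rintro rfl
  exact not_isRelPrime_zero_zero hv

theorem IsPrimitiveVec.exists_not_dvd {p : R} {v : Fin 2 → R}
    (hv : IsPrimitiveVec v) (hp : Prime p) : ∃ i, ¬ p ∣ v i := by
  by_contra! h
  exact hp.not_isUnit (hv (h 0) (h 1))

theorem IsPrimitiveVec.of_ne_zero {k : Type*} [Field k] {v : Fin 2 → k} (hv : v ≠ 0) :
    IsPrimitiveVec v := by
  obtain ⟨i, hi⟩ := Function.ne_iff.1 hv
  fin_cases i
  · exact (isUnit_iff_ne_zero.2 hi).isRelPrime_left
  · exact (isUnit_iff_ne_zero.2 hi).isRelPrime_right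

theorem exists_eq_smul_isPrimitiveVec [UniqueFactorizationMonoid R] {w : Fin 2 → R} (hw : w ≠ 0) :
    ∃ (d : R) (v : Fin 2 → R), d ≠ 0 ∧ IsPrimitiveVec v ∧ w = d • v := by
  obtain ⟨a, b, d, hab, ha, hb⟩ : ∃ a b d, IsRelPrime a b ∧ d * a = w 0 ∧ d * b = w 1 := by
    obtain ⟨i, hi⟩ := Function.ne_iff.1 hw
    fin_cases i
    · exact UniqueFactorizationMonoid.exists_reduced_factors _ hi (w 1)
    · exact UniqueFactorizationMonoid.exists_reduced_factors' (w 0) _ hi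
  have hwd : w = d • ![a, b] := by
    ext i; fin_cases i <;> simp [ha, hb]
  exact ⟨d, ![a, b], fun hd ↦ hw (by rw [hwd, hd, zero_smul]), hab, hwd⟩

section Domain

variable [IsDomain R]

theorem IsPrimitiveVec.exists_eq_smul_perp [DecompositionMonoid R] {v w : Fin 2 → R}
    (hv : IsPrimitiveVec v) (h : w ⬝ᵥ v = 0) : ∃ s : R, w = s • perp v := by
  rw [dotProduct, Fin.sum_univ_two] at h
  obtain ⟨s, hs⟩ : v 0 ∣ w 1 :=
    hv.dvd_of_dvd_mul_right ⟨-w 0, by linear_combination h⟩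
  obtain ⟨s', hs'⟩ : v 1 ∣ w 0 :=
    hv.symm.dvd_of_dvd_mul_right ⟨-w 1, by linear_combination h⟩
  have hcancel : v 0 * (v 1 * (s + s')) = 0 := by
    linear_combination h - v 0 * hs' - v 1 * hs
  rcases mul_eq_zero.1 hcancel with h₀ | h₁
  · refine ⟨-s', ?_⟩
    ext i; fin_cases i
    · simp [perp, hs', mul_comm]
    · simp [perp, hs, h₀]
  · refine ⟨s, ?_⟩
    ext i; fin_cases i
    · simp [perp]; linear_combination hs' + h₁
    · simp [perp, hs, mul_comm]

theorem IsPrimitiveVec.exists_eq_smul [DecompositionMonoid R] {v w : Fin 2 → R}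
    (hv : IsPrimitiveVec v) (h : w ⬝ᵥ perp v = 0) : ∃ s : R, w = s • v := by
  obtain ⟨s, hs⟩ := (isPrimitiveVec_perp hv).exists_eq_smul_perp h
  exact ⟨-s, by simpa using hs⟩

theorem exact_toSpanSingleton_perp_linearCombination [DecompositionMonoid R] {u : Fin 2 → R}
    (hu : IsPrimitiveVec u) :
    Function.Exact (LinearMap.toSpanSingleton R _ (perp u)) (Fintype.linearCombination R u) := by
  intro w
  refine ⟨fun hw ↦ ?_, ?_⟩
  · obtain ⟨s, rfl⟩ := hu.exists_eq_smul_perp (w := w) hw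
    exact ⟨s, rfl⟩
  · rintro ⟨s, rfl⟩
    change (s • perp u) ⬝ᵥ u = 0
    rw [smul_dotProduct, perp_dotProduct_self, smul_zero]

variable [UniqueFactorizationMonoid R] {M : Matrix (Fin 2) (Fin 2) R}

theorem exists_eq_smul_vecMulVec {v : Fin 2 → R} (hM : M ≠ 0) (hv : IsPrimitiveVec v)
    (h : M *ᵥ perp v = 0) :
    ∃ (c : R) (α : Fin 2 → R), c ≠ 0 ∧ IsPrimitiveVec α ∧ M = c • vecMulVec α v := by
  choose a ha using fun i ↦ hv.exists_eq_smul (congrFun h i)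
  have hMa : M = vecMulVec a v := by
    ext i j
    simpa [vecMulVec_apply] using congrFun (ha i) j
  obtain ⟨c, α, hc, hα, rfl⟩ := exists_eq_smul_isPrimitiveVec (w := a) <| by
    rintro rfl
    simp [hMa] at hM
  exact ⟨c, α, hc, hα, by rw [hMa, smul_vecMulVec]⟩

theorem exists_eq_smul_vecMulVec_of_det_eq_zero (hM : M ≠ 0) (hdet : M.det = 0) :
    ∃ (c : R) (u v : Fin 2 → R), c ≠ 0 ∧ IsPrimitiveVec u ∧ IsPrimitiveVec v ∧
      M = c • vecMulVec u v := by
  obtain ⟨w, hw, hMw⟩ := exists_mulVec_eq_zero_iff.2 hdet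
  obtain ⟨d, v, hd, hv, rfl⟩ := exists_eq_smul_isPrimitiveVec hw
  rw [mulVec_smul, smul_eq_zero_iff_right hd] at hMw
  obtain ⟨c, u, hc, hu, h⟩ := exists_eq_smul_vecMulVec hM (isPrimitiveVec_perp hv)
    (by rw [perp_perp, mulVec_neg, hMw, neg_zero])
  exact ⟨c, u, perp v, hc, hu, isPrimitiveVec_perp hv, h⟩

theorem exists_smul_of_smul_vecMulVec_add_eq_zero {α γ w w' : Fin 2 → R} {c e : R}
    (hα : IsPrimitiveVec α) (hγ : IsPrimitiveVec γ) (hc : c ≠ 0) (he : e ≠ 0)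
    (h : c • vecMulVec α w + e • vecMulVec w' γ = 0) :
    ∃ b b' : R, w = b • γ ∧ w' = b' • α ∧ c * b + e * b' = 0 := by
  have hα₀ := hα.ne_zero
  have hγ₀ := hγ.ne_zero
  obtain ⟨b, rfl⟩ : ∃ b : R, w = b • γ := by
    refine hγ.exists_eq_smul ?_
    have := congrArg (· *ᵥ perp γ) h
    simp only [add_mulVec, smul_mulVec, vecMulVec_mulVec, dotProduct_perp_self, op_smul_eq_smul,
      zero_smul, smul_zero, add_zero, zero_mulVec] at this
    simpa only [smul_eq_zero, hc, hα₀, false_or, or_false] using this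
  obtain ⟨b', rfl⟩ : ∃ b' : R, w' = b' • α := by
    refine hα.exists_eq_smul ?_
    have := congrArg (perp α ᵥ* ·) h
    simp only [vecMul_add, vecMul_smul, vecMul_vecMulVec, perp_dotProduct_self, zero_smul,
      smul_zero, zero_add, vecMul_zero, smul_eq_zero, he, hγ₀, false_or, or_false] at this
    rwa [dotProduct_comm]
  refine ⟨b, b', rfl, rfl, ?_⟩
  have hsum : (c * b + e * b') • vecMulVec α γ = 0 := by
    rw [← h, smul_vecMulVec, vecMulVec_smul, smul_smul, smul_smul, add_smul]
  exact (smul_eq_zero.1 hsum).resolve_right (by simp [vecMulVec_eq_zero, hα₀, hγ₀])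

end Domain

theorem exists_dotProduct_eq_one {k n : Type*} [Field k] [Fintype n] {v : n → k} (hv : v ≠ 0) :
    ∃ w, v ⬝ᵥ w = 1 := by
  classical
  obtain ⟨i, hi⟩ := Function.ne_iff.1 hv
  exact ⟨Pi.single i (v i)⁻¹, by rw [dotProduct_single, mul_inv_cancel₀ hi]⟩

theorem det_eq_zero_of_mul_eq_zero {l n : Type*} [IsDomain R] [Fintype n] [DecidableEq n]
    {M : Matrix l n R} {N : Matrix n n R} (hM : M ≠ 0) (h : M * N = 0) : N.det = 0 := by
  obtain ⟨i, hi⟩ := Function.ne_iff.1 hM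
  exact exists_vecMul_eq_zero_iff.1 ⟨M i, hi, congrFun h i⟩

theorem map_eq_zero_of_mulVec_eq_smul {n : Type*} [Fintype n] [IsDomain R] [IsDomain S]
    {N : Matrix n n R} {u : n → R} {t : R} (hu : u ≠ 0) (h : N *ᵥ u = t • u) (φ : R →+* S)
    (hφ : N.map φ = 0) : φ t = 0 := by
  classical
  have hdet : (N - t • 1).det = 0 :=
    exists_mulVec_eq_zero_iff.1 ⟨u, hu, by simp [sub_mulVec, smul_mulVec, h]⟩
  have hN : φ.mapMatrix (N - t • 1) = -φ t • 1 := by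
    ext i j
    have hij : φ (N i j) = 0 := congrFun₂ hφ i j
    rw [RingHom.mapMatrix_apply, Matrix.map_apply, Matrix.sub_apply, map_sub, hij]
    by_cases h : i = j <;> simp [h]
  have := congrArg φ hdet
  rw [RingHom.map_det, hN, det_smul, det_one, map_zero, mul_one] at this
  exact neg_eq_zero.1 (eq_zero_of_pow_eq_zero this)

end PlaneVectors

open Matrix

theorem sumElim_eq_zero_iff {m n R : Type*} [Zero R] {x : m → R} {y : n → R} :
    Sum.elim x y = 0 ↔ x = 0 ∧ y = 0 := by
  rw [← Sum.elim_zero_zero, Sum.elim_eq_iff]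

/-- The differential `!![0, A, E, G; 0, 0, B, F; 0, 0, 0, C; 0, 0, 0, 0]`, in blocks of size two. -/
structure BlockDifferential (R : Type*) where
  (A B C E F G : Matrix (Fin 2) (Fin 2) R)

namespace BlockDifferential

section Ring

variable {R S : Type*} [CommRing R] [CommRing S]

/-- The differential obtained by applying a ring homomorphism to every entry; at an evaluation
homomorphism it is the value at a point. -/
def map (f : R →+* S) (D : BlockDifferential R) : BlockDifferential S :=
  ⟨D.A.map f, D.B.map f, D.C.map f, D.E.map f, D.F.map f, D.G.map f⟩

/-- Every cycle `(x₁, x₂, x₃, x₄)` of the differential is a boundary. -/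
def Exact (D : BlockDifferential R) : Prop :=
  ∀ x₁ x₂ x₃ x₄ : Fin 2 → R,
    D.A *ᵥ x₂ + D.E *ᵥ x₃ + D.G *ᵥ x₄ = 0 → D.B *ᵥ x₃ + D.F *ᵥ x₄ = 0 → D.C *ᵥ x₄ = 0 →
    ∃ y₂ y₃ y₄, D.A *ᵥ y₂ + D.E *ᵥ y₃ + D.G *ᵥ y₄ = x₁ ∧ D.B *ᵥ y₃ + D.F *ᵥ y₄ = x₂ ∧
      D.C *ᵥ y₄ = x₃ ∧ x₄ = 0

/-- The block of the differential that remains once the outer blocks `A` and `C` are dropped. -/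
def middle (D : BlockDifferential R) : Matrix (Fin 2 ⊕ Fin 2) (Fin 2 ⊕ Fin 2) R :=
  fromBlocks D.E D.G D.B D.F

theorem map_middle (f : R →+* S) (D : BlockDifferential R) :
    (D.map f).middle = D.middle.map f :=
  (fromBlocks_map ..).symm

end Ring

section Field

variable {k : Type*} [Field k] {D : BlockDifferential k}

theorem Exact.det_middle_ne_zero_of_A_eq_zero (h : D.Exact) (hA : D.A = 0) :
    D.middle.det ≠ 0 := by
  have hsurj : Function.Surjective D.middle.mulVec := by
    intro w
    obtain ⟨y₂, y₃, y₄, h₁, h₂, -, -⟩ := h (w ∘ Sum.inl) (w ∘ Sum.inr) 0 0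
      (by simp [hA]) (by simp) (by simp)
    refine ⟨Sum.elim y₃ y₄, ?_⟩
    rw [hA, zero_mulVec, zero_add] at h₁
    rw [middle, fromBlocks_mulVec, Sum.elim_comp_inl, Sum.elim_comp_inr, h₁, h₂,
      Sum.elim_comp_inl_inr]
  rw [mulVec_surjective_iff_isUnit, isUnit_iff_isUnit_det] at hsurj
  exact hsurj.ne_zero

theorem Exact.det_middle_ne_zero_of_C_eq_zero (h : D.Exact) (hC : D.C = 0) :
    D.middle.det ≠ 0 := by
  rw [← isUnit_iff_ne_zero, ← isUnit_iff_isUnit_det, ← mulVec_injective_iff_isUnit,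
    ← coe_mulVecLin, injective_iff_map_eq_zero]
  intro w hw
  rw [mulVecLin_apply, middle, fromBlocks_mulVec, sumElim_eq_zero_iff] at hw
  obtain ⟨y₂, y₃, y₄, -, -, h₃, h₄⟩ := h 0 0 (w ∘ Sum.inl) (w ∘ Sum.inr)
    (by simpa using hw.1) hw.2 (by simp [hC])
  rw [hC, zero_mulVec] at h₃
  rw [← Sum.elim_comp_inl_inr w, ← h₃, h₄, Sum.elim_zero_zero]

theorem Exact.det_E_ne_zero (h : D.Exact) (hA : D.A = 0) (hB : D.B = 0) : D.E.det ≠ 0 := by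
  have hdet := h.det_middle_ne_zero_of_A_eq_zero hA
  rw [middle, hB, det_fromBlocks_zero₂₁] at hdet
  exact left_ne_zero_of_mul hdet

end Field

end BlockDifferential

/-- Expressions of the blocks `A`, `B`, `C` of `D` as multiples of dyads, together with the
relations between `E`, `F` and the vectors involved that `D² = 0` then forces. -/
structure BlockFactors {R : Type*} [CommRing R] (D : BlockDifferential R) where
  (α u v γ : Fin 2 → R)
  (c g e b b' s t : R)
  A_eq : D.A = c • vecMulVec α (perp u)
  B_eq : D.B = g • vecMulVec u v
  C_eq : D.C = e • vecMulVec (perp v) γ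
  E_mulVec : D.E *ᵥ perp v = b' • α
  vecMul_E : perp α ᵥ* D.E = s • v
  F_mulVec : D.F *ᵥ perp γ = t • u
  vecMul_F : perp u ᵥ* D.F = b • γ
  c_mul_b_add_e_mul_b' : c * b + e * b' = 0

namespace BlockFactors

section Ring

variable {R S : Type*} [CommRing R] [CommRing S] {D : BlockDifferential R} (φ : BlockFactors D)

/-- The image of a factorization under a ring homomorphism. -/
def map (f : R →+* S) : BlockFactors (D.map f) where
  α := f ∘ φ.α
  u := f ∘ φ.u
  v := f ∘ φ.v
  γ := f ∘ φ.γ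
  c := f φ.c
  g := f φ.g
  e := f φ.e
  b := f φ.b
  b' := f φ.b'
  s := f φ.s
  t := f φ.t
  A_eq := by
    rw [BlockDifferential.map, φ.A_eq, ← map_comp_perp]
    ext; simp only [vecMulVec_apply, Matrix.map_apply, Matrix.smul_apply, smul_eq_mul, map_mul,
      Function.comp_apply]
  B_eq := by
    rw [BlockDifferential.map, φ.B_eq]
    ext; simp [vecMulVec_apply]
  C_eq := by
    rw [BlockDifferential.map, φ.C_eq, ← map_comp_perp]
    ext; simp only [vecMulVec_apply, Matrix.map_apply, Matrix.smul_apply, smul_eq_mul, map_mul,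
      Function.comp_apply]
  E_mulVec := by
    ext i
    simpa [BlockDifferential.map] using
      (f.map_mulVec D.E (perp φ.v) i).symm.trans (congrArg f (congrFun φ.E_mulVec i))
  vecMul_E := by
    ext i
    simpa [BlockDifferential.map] using
      (f.map_vecMul D.E (perp φ.α) i).symm.trans (congrArg f (congrFun φ.vecMul_E i))
  F_mulVec := by
    ext i
    simpa [BlockDifferential.map] using
      (f.map_mulVec D.F (perp φ.γ) i).symm.trans (congrArg f (congrFun φ.F_mulVec i))
  vecMul_F := by
    ext i
    simpa [BlockDifferential.map] using
      (f.map_vecMul D.F (perp φ.u) i).symm.trans (congrArg f (congrFun φ.vecMul_F i))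
  c_mul_b_add_e_mul_b' := by
    rw [← map_mul, ← map_mul, ← map_add, φ.c_mul_b_add_e_mul_b', map_zero]

/-- The discriminant of a factorization: at a point where it vanishes while `α`, `v` and `γ` do not,
the differential is not exact. -/
def disc : R := φ.g * (perp φ.α ⬝ᵥ D.G *ᵥ perp φ.γ) - φ.s * φ.t

theorem map_disc (f : R →+* S) : (φ.map f).disc = f φ.disc := by
  have hG : f ∘ (D.G *ᵥ perp φ.γ) = D.G.map f *ᵥ perp (f ∘ φ.γ) := by
    ext i
    rw [← map_comp_perp]
    exact f.map_mulVec D.G (perp φ.γ) i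
  rw [disc, disc, map_sub, map_mul, map_mul, f.map_dotProduct, hG, map_comp_perp]
  rfl

theorem det_E [IsDomain R] (hv : φ.v ≠ 0) : D.E.det = -(φ.s * φ.b') := by
  have h := perp_mulVec_vecMul D.E (perp φ.v)
  rw [φ.E_mulVec, perp_smul, smul_vecMul, φ.vecMul_E, perp_perp, smul_neg, smul_smul] at h
  have h' : (D.E.det + φ.s * φ.b') • φ.v = 0 := by
    linear_combination (norm := module) h
  exact eq_neg_of_add_eq_zero_left ((smul_eq_zero.1 h').resolve_right hv)

end Ring

section Field

variable {k : Type*} [Field k] {D : BlockDifferential k} (φ : BlockFactors D)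

theorem u_eq_zero (h : D.Exact) (he : φ.e = 0) (hb : φ.b = 0) : φ.u = 0 := by
  have hdet := h.det_middle_ne_zero_of_C_eq_zero (by rw [φ.C_eq, he, zero_smul])
  have hker : Sum.elim 0 (perp φ.u) ᵥ* D.middle = 0 := by
    rw [BlockDifferential.middle, vecMul_fromBlocks, Sum.elim_comp_inl, Sum.elim_comp_inr,
      φ.vecMul_F, φ.B_eq, hb]
    simp only [vecMul_smul, vecMul_vecMulVec, perp_dotProduct_self, zero_vecMul, zero_smul,
      smul_zero, add_zero, Sum.elim_zero_zero]
  have hzero := eq_zero_of_vecMul_eq_zero hdet hker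
  rw [sumElim_eq_zero_iff, perp_eq_zero_iff] at hzero
  exact hzero.2

theorem exists_mulVec_add_smul_eq_α (h : D.Exact) (hv : φ.v ≠ 0) :
    ∃ (x : Fin 2 → k) (o : k), D.A *ᵥ x + o • D.E *ᵥ perp φ.v = φ.α := by
  rw [φ.E_mulVec]
  by_cases hb' : φ.b' = 0
  · have hA : D.A ≠ 0 := by
      intro hA
      have hker : D.middle *ᵥ Sum.elim (perp φ.v) 0 = 0 := by
        rw [BlockDifferential.middle, fromBlocks_mulVec, Sum.elim_comp_inl, Sum.elim_comp_inr,
          φ.E_mulVec, φ.B_eq, hb']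
        simp only [smul_mulVec, vecMulVec_mulVec, dotProduct_perp_self, op_smul_eq_smul, zero_smul,
          smul_zero, mulVec_zero, add_zero, Sum.elim_zero_zero]
      have hzero := eq_zero_of_mulVec_eq_zero (h.det_middle_ne_zero_of_A_eq_zero hA) hker
      rw [sumElim_eq_zero_iff, perp_eq_zero_iff] at hzero
      exact hv hzero.1
    have hw : φ.c • perp φ.u ≠ 0 := by
      intro hw
      exact hA (by rw [φ.A_eq, ← vecMulVec_smul, hw, vecMulVec_zero])
    obtain ⟨x, hx⟩ := exists_dotProduct_eq_one hw
    refine ⟨x, 0, ?_⟩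
    rw [φ.A_eq, ← vecMulVec_smul, vecMulVec_mulVec, hx]
    simp
  · exact ⟨0, φ.b'⁻¹, by simp [smul_smul, hb']⟩

theorem disc_ne_zero (h : D.Exact) (hα : φ.α ≠ 0) (hv : φ.v ≠ 0) (hγ : φ.γ ≠ 0) :
    φ.disc ≠ 0 := by
  intro hdisc
  let q := perp φ.α ⬝ᵥ D.G *ᵥ perp φ.γ
  obtain ⟨z, hz, hlm⟩ : ∃ z ≠ 0, !![φ.s, q; φ.g, φ.t] *ᵥ z = 0 :=
    exists_mulVec_eq_zero_iff.2 <| by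
      rw [det_fin_two_of, ← neg_eq_zero, ← hdisc, disc]
      ring
  obtain ⟨l, m, rfl⟩ : ∃ l m, z = ![l, m] := ⟨z 0, z 1, by ext i; fin_cases i <;> rfl⟩
  have hlmE : l * φ.s + m * q = 0 := by simpa using congrFun hlm 0
  have hlmB : l * φ.g + m * φ.t = 0 := by simpa using congrFun hlm 1
  obtain ⟨v', hv'⟩ := exists_dotProduct_eq_one hv
  obtain ⟨x, o, hx⟩ := φ.exists_mulVec_add_smul_eq_α h hv
  obtain ⟨n, hn⟩ : ∃ n : k, l • D.E *ᵥ v' + m • D.G *ᵥ perp φ.γ = n • φ.α := by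
    refine (IsPrimitiveVec.of_ne_zero hα).exists_eq_smul ?_
    rw [dotProduct_comm, dotProduct_add, dotProduct_smul, dotProduct_smul, dotProduct_mulVec,
      φ.vecMul_E, smul_dotProduct, hv', smul_eq_mul, smul_eq_mul, smul_eq_mul]
    linear_combination hlmE
  obtain ⟨y₂, y₃, y₄, -, -, h₃, h₄⟩ := h 0 (-n • x) (l • v' - (n * o) • perp φ.v) (m • perp φ.γ)
    (by
      simp only [mulVec_sub, mulVec_smul]
      linear_combination (norm := module) hn - n • hx)
    (by
      simp only [mulVec_sub, mulVec_smul, φ.B_eq, φ.F_mulVec, smul_mulVec, vecMulVec_mulVec, hv',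
        dotProduct_perp_self, op_smul_eq_smul]
      linear_combination (norm := module) hlmB • φ.u)
    (by simp only [mulVec_smul, φ.C_eq, smul_mulVec, vecMulVec_mulVec, dotProduct_perp_self,
          op_smul_eq_smul, zero_smul, smul_zero])
  have hm : m = 0 := (smul_eq_zero.1 h₄).resolve_right (perp_eq_zero_iff.not.2 hγ)
  have hl : l = 0 := by
    have := congrArg (φ.v ⬝ᵥ ·) h₃
    simp only [φ.C_eq, smul_mulVec, vecMulVec_mulVec, op_smul_eq_smul, dotProduct_smul,
      dotProduct_sub, dotProduct_perp_self, hv', smul_eq_mul, mul_zero, mul_one, sub_zero] at this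
    exact this.symm
  exact hz (by simp [hl, hm])

end Field

end BlockFactors

namespace BlockDifferential

/-- The differential has square zero. -/
structure SqZero {R : Type*} [CommRing R] (D : BlockDifferential R) : Prop where
  A_mul_B : D.A * D.B = 0
  A_mul_F_add_E_mul_C : D.A * D.F + D.E * D.C = 0
  B_mul_C : D.B * D.C = 0

instance {R : Type*} [Zero R] : Zero (BlockDifferential R) := ⟨⟨0, 0, 0, 0, 0, 0⟩⟩

/-- The differential has square zero, vanishes at the origin and is exact at all other points. -/
structure IsExactOffOrigin {k σ : Type*} [Field k]
    (D : BlockDifferential (MvPolynomial σ k)) : Prop where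
  sqZero : D.SqZero
  map_eval_zero : D.map (eval 0) = 0
  exact : ∀ a : σ → k, a ≠ 0 → (D.map (eval a)).Exact

end BlockDifferential

namespace BlockFactors

open BlockDifferential

section Existence

variable {R : Type*} [CommRing R] {D : BlockDifferential R}

/-- The four vectors of the factorization are primitive; over a polynomial ring this makes each
of them nonzero outside a set of codimension two. -/
structure IsPrimitive (φ : BlockFactors D) : Prop where
  (α : IsPrimitiveVec φ.α) (u : IsPrimitiveVec φ.u) (v : IsPrimitiveVec φ.v)
  (γ : IsPrimitiveVec φ.γ)

theorem exists_isPrimitive [IsDomain R] [UniqueFactorizationMonoid R] (h : D.SqZero) (hA : D.A ≠ 0)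
    (hB : D.B ≠ 0) (hC : D.C ≠ 0) : ∃ φ : BlockFactors D, φ.IsPrimitive := by
  obtain ⟨g, u, v, hg, hu, hv, hBuv⟩ :=
    exists_eq_smul_vecMulVec_of_det_eq_zero hB (det_eq_zero_of_mul_eq_zero hA h.A_mul_B)
  have hAu : D.A *ᵥ u = 0 := by
    have hmul := h.A_mul_B
    rw [hBuv, Matrix.mul_smul, mul_vecMulVec, smul_eq_zero_iff_right hg, vecMulVec_eq_zero] at hmul
    exact hmul.resolve_right hv.ne_zero
  have hCv : v ᵥ* D.C = 0 := by
    have hmul := h.B_mul_C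
    rw [hBuv, Matrix.smul_mul, vecMulVec_mul, smul_eq_zero_iff_right hg, vecMulVec_eq_zero] at hmul
    exact hmul.resolve_left hu.ne_zero
  obtain ⟨c, α, hc, hα, hAα⟩ := exists_eq_smul_vecMulVec hA (isPrimitiveVec_perp hu)
    (by rw [perp_perp, mulVec_neg, hAu, neg_zero])
  obtain ⟨e, γ, he, hγ, hCγ⟩ := exists_eq_smul_vecMulVec (transpose_eq_zero.not.2 hC)
    (isPrimitiveVec_perp hv) (by rw [perp_perp, mulVec_neg, mulVec_transpose, hCv, neg_zero])
  replace hCγ : D.C = e • vecMulVec (perp v) γ := by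
    rw [← transpose_inj, hCγ, transpose_smul, transpose_vecMulVec]
  obtain ⟨b, b', hF, hE, hbb'⟩ : ∃ b b' : R,
      perp u ᵥ* D.F = b • γ ∧ D.E *ᵥ perp v = b' • α ∧ c * b + e * b' = 0 := by
    refine exists_smul_of_smul_vecMulVec_add_eq_zero hα hγ hc he ?_
    rw [← h.A_mul_F_add_E_mul_C, hAα, hCγ, Matrix.smul_mul, vecMulVec_mul, Matrix.mul_smul,
      mul_vecMulVec]
  obtain ⟨s, hs⟩ := hv.exists_eq_smul (w := perp α ᵥ* D.E) <| by
    rw [← dotProduct_mulVec, hE, dotProduct_smul, perp_dotProduct_self, smul_zero]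
  obtain ⟨t, ht⟩ := hu.exists_eq_smul (w := D.F *ᵥ perp γ) <| by
    rw [dotProduct_comm, dotProduct_mulVec, hF, smul_dotProduct, dotProduct_perp_self, smul_zero]
  exact ⟨⟨α, u, v, γ, c, g, e, b, b', s, t, hAα, hBuv, hCγ, hE, hs, ht, hF, hbb'⟩, hα, hu, hv, hγ⟩

end Existence

end BlockFactors

section PolynomialRing

variable {k σ : Type*} [Field k] [IsAlgClosed k] [Finite σ]
  {D : BlockDifferential (MvPolynomial σ k)}

theorem nontrivial_of_nodup_cons_cons {τ : Type*} {x y : τ} {l : List τ}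
    (h : (x :: y :: l).Nodup) : Nontrivial τ :=
  ⟨x, y, fun hxy ↦ h.notMem (hxy ▸ List.mem_cons_self)⟩

namespace BlockDifferential

namespace IsExactOffOrigin

theorem exists_det_middle_eq_zero [Nontrivial σ] (h : D.IsExactOffOrigin) :
    ∃ a : σ → k, a ≠ 0 ∧ (D.map (eval a)).middle.det = 0 := by
  by_contra! hne
  have hunit : IsUnit D.middle.det := isUnit_of_forall_eval_ne_zero fun a ha ↦ by
    simpa only [map_middle, RingHom.map_det, RingHom.mapMatrix_apply] using hne a ha
  apply (hunit.map (eval 0)).ne_zero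
  rw [RingHom.map_det, RingHom.mapMatrix_apply, ← map_middle, h.map_eval_zero]
  exact (congrArg det fromBlocks_zero).trans det_zero

theorem A_ne_zero [Nontrivial σ] (h : D.IsExactOffOrigin) : D.A ≠ 0 := by
  intro hA
  obtain ⟨a, ha, hdet⟩ := h.exists_det_middle_eq_zero
  exact (h.exact a ha).det_middle_ne_zero_of_A_eq_zero (by simp [map, hA]) hdet

theorem C_ne_zero [Nontrivial σ] (h : D.IsExactOffOrigin) : D.C ≠ 0 := by
  intro hC
  obtain ⟨a, ha, hdet⟩ := h.exists_det_middle_eq_zero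
  exact (h.exact a ha).det_middle_ne_zero_of_C_eq_zero (by simp [map, hC]) hdet

theorem B_ne_zero {x y z : σ} (hxyz : [x, y, z].Nodup) (h : D.IsExactOffOrigin) : D.B ≠ 0 := by
  intro hB
  have hsurj : Function.Surjective (fromCols D.A D.E).mulVec := by
    refine mulVec_surjective_of_exact_eval hxyz (Q := fromRows D.F D.C)
      (by rw [fromCols_mul_fromRows, h.sqZero.A_mul_F_add_E_mul_C]) (by simp) fun a ha w hw ↦ ?_
    rw [fromCols_map, fromCols_mulVec] at hw
    obtain ⟨_, _, y₄, -, h₂, h₃, -⟩ := h.exact a ha 0 (w ∘ Sum.inl) (w ∘ Sum.inr) 0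
      (by simpa [map] using hw) (by simp [map, hB]) (by simp)
    refine ⟨y₄, ?_⟩
    have hBa : (D.map (eval a)).B = 0 := by simp [map, hB]
    rw [hBa, zero_mulVec, zero_add] at h₂
    rw [fromRows_map, fromRows_mulVec, ← Sum.elim_comp_inl_inr w, ← h₂, ← h₃]
    rfl
  obtain ⟨w, hw⟩ := hsurj (Pi.single 0 1)
  have hzero : (fromCols D.A D.E).map (eval (0 : σ → k)) = 0 := by
    have hA : D.A.map (eval (0 : σ → k)) = 0 := congrArg BlockDifferential.A h.map_eval_zero
    have hE : D.E.map (eval (0 : σ → k)) = 0 := congrArg BlockDifferential.E h.map_eval_zero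
    rw [fromCols_map, hA, hE, fromCols_zero]
  have h₁ := (eval (0 : σ → k)).map_mulVec (fromCols D.A D.E) w 0
  rw [hw, hzero, zero_mulVec] at h₁
  simp at h₁

end IsExactOffOrigin

end BlockDifferential

namespace BlockFactors

open BlockDifferential

variable {φ : BlockFactors D}

theorem IsPrimitive.isRelPrime_e_b [Nontrivial σ] (hφ : φ.IsPrimitive) (h : D.IsExactOffOrigin) :
    IsRelPrime φ.e φ.b := by
  obtain ⟨i, -⟩ := exists_pair_ne σ
  intro p hpe hpb
  refine (isUnit_or_exists_prime_dvd (X_prime (i := i)) p).resolve_right ?_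
  rintro ⟨q, hq, hqp⟩
  obtain ⟨j, hj⟩ := hφ.u.exists_not_dvd hq
  obtain ⟨a, ha, hqa, hua⟩ := exists_eval_eq_zero_and_eval_ne_zero hq hj
  have he := map_eq_zero_of_dvd (eval a) (hqp.trans hpe) hqa
  have hb := map_eq_zero_of_dvd (eval a) (hqp.trans hpb) hqa
  exact hua (congrFun ((φ.map (eval a)).u_eq_zero (h.exact a ha) he hb) j)

theorem IsPrimitive.isUnit_disc [Nontrivial σ] (hφ : φ.IsPrimitive) (h : D.IsExactOffOrigin) :
    IsUnit φ.disc := by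
  obtain ⟨i, -⟩ := exists_pair_ne σ
  refine (isUnit_or_exists_prime_dvd (X_prime (i := i)) φ.disc).resolve_right ?_
  rintro ⟨p, hp, hpd⟩
  obtain ⟨i, hi⟩ := hφ.α.exists_not_dvd hp
  obtain ⟨j, hj⟩ := hφ.v.exists_not_dvd hp
  obtain ⟨m, hm⟩ := hφ.γ.exists_not_dvd hp
  have hprod : ¬ p ∣ φ.α i * φ.v j * φ.γ m := by
    simp only [hp.dvd_mul, hi, hj, hm, or_self, not_false_eq_true]
  obtain ⟨a, ha, hpa, hne⟩ := exists_eval_eq_zero_and_eval_ne_zero hp hprod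
  rw [map_mul, map_mul] at hne
  have hα := left_ne_zero_of_mul (left_ne_zero_of_mul hne)
  have hv := right_ne_zero_of_mul (left_ne_zero_of_mul hne)
  have hγ := right_ne_zero_of_mul hne
  refine (φ.map (eval a)).disc_ne_zero (h.exact a ha) (Function.ne_iff.2 ⟨i, hα⟩)
    (Function.ne_iff.2 ⟨j, hv⟩) (Function.ne_iff.2 ⟨m, hγ⟩) ?_
  rw [map_disc]
  exact map_eq_zero_of_dvd (eval a) hpd hpa

theorem IsPrimitive.b_dvd_b' [Nontrivial σ] (hφ : φ.IsPrimitive) (h : D.IsExactOffOrigin) :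
    φ.b ∣ φ.b' :=
  (hφ.isRelPrime_e_b h).symm.dvd_of_dvd_mul_left
    ⟨-φ.c, by linear_combination φ.c_mul_b_add_e_mul_b'⟩

theorem IsPrimitive.exists_u_or_b_eval_ne_zero [Nontrivial σ] (hφ : φ.IsPrimitive)
    (h : D.IsExactOffOrigin) {a : σ → k} (ha : a ≠ 0) :
    (∃ i, eval a (φ.u i) ≠ 0) ∨ eval a φ.b ≠ 0 := by
  by_contra! hzero
  obtain ⟨hu, hb⟩ := hzero
  have hmap : (φ.map (eval a)).u = 0 := funext hu
  refine (h.exact a ha).det_E_ne_zero ?_ ?_ ?_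
  · rw [(φ.map (eval a)).A_eq, hmap, perp_zero, vecMulVec_zero, smul_zero]
  · rw [(φ.map (eval a)).B_eq, hmap, zero_vecMulVec, smul_zero]
  · change ((eval a).mapMatrix D.E).det = 0
    rw [← RingHom.map_det, φ.det_E hφ.v.ne_zero, map_neg, map_mul,
      map_eq_zero_of_dvd (eval a) (hφ.b_dvd_b' h) hb, mul_zero, neg_zero]

theorem IsPrimitive.mem_range_linearCombination_u {x y z : σ} (hxyz : [x, y, z].Nodup)
    (hφ : φ.IsPrimitive) (h : D.IsExactOffOrigin) (j : Fin 2) :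
    φ.γ j ∈ LinearMap.range (Fintype.linearCombination (MvPolynomial σ k) φ.u) := by
  have := nontrivial_of_nodup_cons_cons hxyz
  have hu : perp φ.u ≠ 0 := perp_eq_zero_iff.not.2 hφ.u.ne_zero
  refine mem_range_of_X_pow_smul_mem_range (smul_left_injective _ hu)
    (exact_toSpanSingleton_perp_linearCombination hφ.u) hxyz ?_
  refine exists_X_pow_mem_of_forall_exists_eval_ne_zero (k := k) (σ := σ)
    (I := (LinearMap.range (Fintype.linearCombination _ φ.u)).comap
      (LinearMap.toSpanSingleton _ _ (φ.γ j))) fun a ha ↦ ?_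
  rcases hφ.exists_u_or_b_eval_ne_zero h ha with ⟨i, hi⟩ | hb
  · refine ⟨φ.u i, ⟨Pi.single i (φ.γ j), ?_⟩, hi⟩
    simp [mul_comm]
  · refine ⟨φ.b, ⟨-perp (D.F.col j), ?_⟩, hb⟩
    calc -perp (D.F.col j) ⬝ᵥ φ.u = (perp φ.u ᵥ* D.F) j := by
          rw [neg_dotProduct, ← perp_dotProduct_comm]; rfl
      _ = φ.b • φ.γ j := by rw [φ.vecMul_F, Pi.smul_apply]

theorem IsPrimitive.eval_zero_t {x y z : σ} (hxyz : [x, y, z].Nodup)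
    (hφ : φ.IsPrimitive) (h : D.IsExactOffOrigin) : eval 0 φ.t = 0 := by
  choose w hw using hφ.mem_range_linearCombination_u hxyz h
  have hW : of ![-w 1, w 0] *ᵥ φ.u = perp φ.γ := by
    funext i
    fin_cases i
    · exact (neg_dotProduct (w 1) φ.u).trans (congrArg Neg.neg (hw 1))
    · exact hw 0
  refine map_eq_zero_of_mulVec_eq_smul (N := D.F * of ![-w 1, w 0]) hφ.u.ne_zero
    (by rw [← mulVec_mulVec, hW, φ.F_mulVec]) (eval 0) ?_
  have hF : D.F.map (eval (0 : σ → k)) = 0 := congrArg BlockDifferential.F h.map_eval_zero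
  rw [Matrix.map_mul, hF, Matrix.zero_mul]

end BlockFactors

theorem BlockDifferential.not_isExactOffOrigin {x y z : σ} (hxyz : [x, y, z].Nodup)
    (D : BlockDifferential (MvPolynomial σ k)) : ¬ D.IsExactOffOrigin := by
  intro h
  have := nontrivial_of_nodup_cons_cons hxyz
  obtain ⟨φ, hφ⟩ := BlockFactors.exists_isPrimitive h.sqZero h.A_ne_zero (h.B_ne_zero hxyz)
    h.C_ne_zero
  apply ((hφ.isUnit_disc h).map (eval 0)).ne_zero
  have hG : (D.map (eval 0)).G = 0 := congrArg BlockDifferential.G h.map_eval_zero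
  have ht : (φ.map (eval 0)).t = 0 := hφ.eval_zero_t hxyz h
  rw [← φ.map_disc, BlockFactors.disc, hG, ht, zero_mulVec, dotProduct_zero, mul_zero, mul_zero,
    sub_zero]

end PolynomialRing

section Matrices

open Matrix

theorem exists_mulVec_eq_of_mul_self_eq_zero {k n : Type*} [Field k] [Fintype n]
    {M : Matrix n n k} (hM : M * M = 0) (hrank : 2 * M.rank = Fintype.card n) {x : n → k}
    (hx : M *ᵥ x = 0) : ∃ y, M *ᵥ y = x := by
  have hle : M.mulVecLin.range ≤ M.mulVecLin.ker := by
    rintro _ ⟨y, rfl⟩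
    rw [LinearMap.mem_ker, mulVecLin_apply, mulVecLin_apply, mulVec_mulVec, hM, zero_mulVec]
  have hdim := M.mulVecLin.finrank_range_add_finrank_ker
  rw [Module.finrank_fintype_fun_eq_card, ← hrank, Matrix.rank] at hdim
  have heq := Submodule.eq_of_le_of_finrank_eq hle (by lia)
  exact heq.ge hx

theorem comp_mulVec_uncurry {R I J K L : Type*} [NonUnitalNonAssocSemiring R] [Fintype J]
    [Fintype L] (M : Matrix I J (Matrix K L R)) (x : J → L → R) :
    comp I J K L R M *ᵥ Function.uncurry x = Function.uncurry fun i ↦ ∑ j, M i j *ᵥ x j := by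
  ext ⟨i, k⟩
  simp only [mulVec, dotProduct, comp_apply, Fintype.sum_prod_type, Function.uncurry_apply_pair,
    Finset.sum_apply]

namespace BlockDifferential

variable {R S : Type*} [CommRing R] [CommRing S]

/-- The differential as a matrix, with rows and columns indexed by a block and a position in it. -/
def toMatrix (D : BlockDifferential R) : Matrix (Fin 4 × Fin 2) (Fin 4 × Fin 2) R :=
  comp _ _ _ _ _ !![0, D.A, D.E, D.G; 0, 0, D.B, D.F; 0, 0, 0, D.C; 0, 0, 0, 0]

theorem exists_toMatrix_eq {M : Matrix (Fin 4 × Fin 2) (Fin 4 × Fin 2) R}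
    (hM : ∀ i j : Fin 4 × Fin 2, j.1 ≤ i.1 → M i j = 0) :
    ∃ D : BlockDifferential R, D.toMatrix = M := by
  let N := (comp (Fin 4) (Fin 4) (Fin 2) (Fin 2) R).symm M
  refine ⟨⟨N 0 1, N 1 2, N 2 3, N 0 2, N 1 3, N 0 3⟩, (Equiv.eq_symm_apply _).1 ?_⟩
  have hN : ∀ i j, j ≤ i → N i j = 0 := fun i j hij ↦ by
    ext p q
    exact hM (i, p) (j, q) hij
  ext1 i j
  fin_cases i <;> fin_cases j <;> first | rfl | exact (hN _ _ (by decide)).symm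

theorem toMatrix_injective : Function.Injective (toMatrix (R := R)) := by
  rintro ⟨A, B, C, E, F, G⟩ ⟨A', B', C', E', F', G'⟩ h
  have h' := congrFun₂ ((comp ..).injective h)
  rw [mk.injEq]
  exact ⟨h' 0 1, h' 1 2, h' 2 3, h' 0 2, h' 1 3, h' 0 3⟩

theorem toMatrix_zero : (0 : BlockDifferential R).toMatrix = 0 := by
  ext ⟨i, p⟩ ⟨j, q⟩
  fin_cases i <;> fin_cases j <;> rfl

theorem toMatrix_map (f : R →+* S) (D : BlockDifferential R) :
    (D.map f).toMatrix = D.toMatrix.map f := by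
  ext ⟨i, p⟩ ⟨j, q⟩
  fin_cases i <;> fin_cases j <;> first | rfl | exact (map_zero f).symm

theorem sqZero_of_toMatrix_mul_self {D : BlockDifferential R} (h : D.toMatrix * D.toMatrix = 0) :
    D.SqZero := by
  rw [toMatrix, ← compRingEquiv_apply, ← map_mul, map_eq_zero_iff _ (RingEquiv.injective _)] at h
  have h' := congrFun₂ h
  constructor
  · simpa [Matrix.mul_apply, Fin.sum_univ_four] using h' 0 2
  · simpa [Matrix.mul_apply, Fin.sum_univ_four] using h' 0 3
  · simpa [Matrix.mul_apply, Fin.sum_univ_four] using h' 1 3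

theorem toMatrix_mulVec_uncurry (D : BlockDifferential R) (x₁ x₂ x₃ x₄ : Fin 2 → R) :
    D.toMatrix *ᵥ Function.uncurry ![x₁, x₂, x₃, x₄] = Function.uncurry
      ![D.A *ᵥ x₂ + D.E *ᵥ x₃ + D.G *ᵥ x₄, D.B *ᵥ x₃ + D.F *ᵥ x₄, D.C *ᵥ x₄, 0] := by
  rw [toMatrix, comp_mulVec_uncurry]
  congr 1
  funext i
  rw [Fin.sum_univ_four]
  revert i
  simp [Fin.forall_fin_succ]

theorem exact_of_toMatrix {D : BlockDifferential R}
    (h : ∀ x, D.toMatrix *ᵥ x = 0 → ∃ y, D.toMatrix *ᵥ y = x) : D.Exact := by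
  intro x₁ x₂ x₃ x₄ h₁ h₂ h₃
  obtain ⟨y, hy⟩ := h (Function.uncurry ![x₁, x₂, x₃, x₄]) <| by
    rw [toMatrix_mulVec_uncurry, h₁, h₂, h₃]
    ext ⟨i, p⟩
    fin_cases i <;> rfl
  obtain ⟨y₁, y₂, y₃, y₄, rfl⟩ : ∃ y₁ y₂ y₃ y₄, y = Function.uncurry ![y₁, y₂, y₃, y₄] := by
    refine ⟨fun p ↦ y (0, p), fun p ↦ y (1, p), fun p ↦ y (2, p), fun p ↦ y (3, p), ?_⟩
    ext ⟨i, p⟩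
    fin_cases i <;> rfl
  rw [toMatrix_mulVec_uncurry] at hy
  have hy' (i) : _ := funext fun p ↦ congrFun hy (i, p)
  exact ⟨y₂, y₃, y₄, hy' 0, hy' 1, hy' 2, (hy' 3).symm⟩

end BlockDifferential

theorem statement_8_general {k σ : Type*} [Field k] [IsAlgClosed k] [Fintype σ]
    {D : Matrix (Fin 8) (Fin 8) (MvPolynomial σ k)} (hsq : D * D = 0)
    (hzero : ∀ i j, eval 0 (D i j) = 0) (hrank : ∀ a : σ → k, a ≠ 0 → (D.map (eval a)).rank = 4)
    (hblock : ∀ i j : Fin 8, (j : ℕ) / 2 ≤ (i : ℕ) / 2 → D i j = 0) :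
    Fintype.card σ < 3 := by
  let e : Fin 4 × Fin 2 ≃ Fin 8 := finProdFinEquiv
  have he : ∀ i, (e i : ℕ) = i.2 + 2 * i.1 := fun _ ↦ rfl
  obtain ⟨Δ, hΔ⟩ := BlockDifferential.exists_toMatrix_eq (M := D.submatrix e e) fun i j hij ↦
    hblock _ _ <| by rw [he, he]; lia
  by_contra! hcard
  obtain ⟨x, y, z, hxy, hxz, hyz⟩ := Fintype.two_lt_card_iff.1 hcard
  refine Δ.not_isExactOffOrigin (x := x) (y := y) (z := z) (by simp [*]) ⟨?_, ?_, fun a ha ↦ ?_⟩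
  · apply BlockDifferential.sqZero_of_toMatrix_mul_self
    rw [hΔ, submatrix_mul_equiv, hsq, submatrix_zero]; rfl
  · apply BlockDifferential.toMatrix_injective
    rw [BlockDifferential.toMatrix_map, hΔ, BlockDifferential.toMatrix_zero]
    ext i j
    exact hzero _ _
  · apply BlockDifferential.exact_of_toMatrix
    intro x
    have h2 : D.map (eval a) * D.map (eval a) = 0 := by
      rw [← Matrix.map_mul, hsq, Matrix.map_zero _ (map_zero _)]
    rw [BlockDifferential.toMatrix_map, hΔ, ← submatrix_map]
    apply exists_mulVec_eq_of_mul_self_eq_zero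
    · rw [submatrix_mul_equiv, h2, submatrix_zero]; rfl
    · rw [rank_submatrix, hrank a ha]; rfl

end Matrices

theorem statement_8 {k : Type*} [Field k] [IsAlgClosed k] {r : ℕ}
    (D : Matrix (Fin 8) (Fin 8) (MvPolynomial (Fin r) k))
    (hstd : StandardConditions D)
    (hzero : ∀ i j : Fin 8,
        ¬((1 ≤ (i : ℕ) + 1 ∧ (i : ℕ) + 1 ≤ 2 ∧ 3 ≤ (j : ℕ) + 1 ∧ (j : ℕ) + 1 ≤ 8) ∨
          (3 ≤ (i : ℕ) + 1 ∧ (i : ℕ) + 1 ≤ 4 ∧ 5 ≤ (j : ℕ) + 1 ∧ (j : ℕ) + 1 ≤ 8) ∨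
          (5 ≤ (i : ℕ) + 1 ∧ (i : ℕ) + 1 ≤ 6 ∧ 7 ≤ (j : ℕ) + 1 ∧ (j : ℕ) + 1 ≤ 8)) →
        D i j = 0) :
    r < 3 := by
  rw [← Fintype.card_fin r]
  exact statement_8_general hstd.2.1 hstd.2.2.1 hstd.2.2.2.1 fun i j hij ↦ hzero i j (by omega)
end
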